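/- There exists a constant C > 0, depending only on Ω, μ, δ₀, κ⁺ and κ⁻ (in particular independent of δ ∈ (0, δ₀) and of ε ∈ (0, δ/2)), such that sup_{x ∈ Ω^μ} |∇u_ε(x)| ≤ C ‖φ‖_{L∞(∂Ω)}. -/

import Mathlib

open Set MeasureTheory

/-- Partial derivative in direction `i` of a function on `ℝ²`. -/
noncomputable def pd (i : Fin 2) (f : EuclideanSpace ℝ (Fin 2) → ℝ)
    (x : EuclideanSpace ℝ (Fin 2)) : ℝ :=
  fderiv ℝ f x (EuclideanSpace.single i 1)

/-- The center `(0, -2-2δ)` of the lower disk `B⁻`. -/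
noncomputable def ctr (δ : ℝ) : EuclideanSpace ℝ (Fin 2) :=
  (WithLp.equiv 2 (Fin 2 → ℝ)).symm ![0, -2 - 2 * δ]

/-- The upper unit disk `B⁺`, centered at the origin. -/
noncomputable def Bp : Set (EuclideanSpace ℝ (Fin 2)) := Metric.ball 0 1

/-- The lower unit disk `B⁻`, centered at `(0, -2-2δ)`. -/
noncomputable def Bm (δ : ℝ) : Set (EuclideanSpace ℝ (Fin 2)) := Metric.ball (ctr δ) 1

open Classical in
/-- The conductivity: `κ⁺` on `B⁺`, `κ⁻` on `B⁻`, and `1` elsewhere. -/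
noncomputable def aFun (δ κp κm : ℝ) (x : EuclideanSpace ℝ (Fin 2)) : ℝ :=
  if x ∈ Bp then κp else if x ∈ Bm δ then κm else 1

/-- `Ω^σ = {x ∈ Ω : dist(x, ∂Ω) ≥ σ}`. -/
noncomputable def innerReg (Ω : Set (EuclideanSpace ℝ (Fin 2))) (σ : ℝ) :
    Set (EuclideanSpace ℝ (Fin 2)) :=
  {x ∈ Ω | σ ≤ Metric.infDist x (frontier Ω)}

/-- `Ω` has smooth boundary: it is the sublevel set of a smooth function with
nonvanishing gradient on the boundary. -/
def SmoothBoundary (Ω : Set (EuclideanSpace ℝ (Fin 2))) : Prop :=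
  ∃ f : EuclideanSpace ℝ (Fin 2) → ℝ, ContDiff ℝ (⊤ : ℕ∞) f ∧ Ω = {x | f x < 0} ∧
    ∀ x ∈ frontier Ω, fderiv ℝ f x ≠ 0

/-- `‖φ‖_{L^∞(∂Ω)}`. -/
noncomputable def bdryNorm (Ω : Set (EuclideanSpace ℝ (Fin 2))) (φ : EuclideanSpace ℝ (Fin 2) → ℝ) : ℝ :=
  sSup ((fun y => |φ y|) '' frontier Ω)

set_option linter.unusedSimpArgs false

lemma aux_poincare_k (h h' : ℝ → ℝ) (hd : ∀ x, HasDerivAt h (h' x) x) (hc : Continuous h') (z : ℝ)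
    (h0 : h z = 0) (h1 : h (z + Real.pi) = 0) (k : ℝ) (hk0 : 0 < k) (hk : k < 1) :
    k ^ 2 * ∫ x in z..(z + Real.pi), h x ^ 2 ≤ ∫ x in z..(z + Real.pi), h' x ^ 2 := by
  have hpi := Real.pi_pos
  have hcont : Continuous h := continuous_iff_continuousAt.2 fun x => (hd x).continuousAt
  have hcos : ∀ x ∈ Icc z (z + Real.pi), 0 < Real.cos (k * (x - z - Real.pi / 2)) := by
    intro x hx
    apply Real.cos_pos_of_mem_Ioo
    constructor <;> nlinarith [hx.1, hx.2]
  have key : ∫ x in z..(z + Real.pi), (h' x ^ 2 - k ^ 2 * h x ^ 2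
      - (h' x + k * (Real.sin (k * (x - z - Real.pi / 2)) / Real.cos (k * (x - z - Real.pi / 2))) * h x) ^ 2)
      = 0 := by
    have := intervalIntegral.integral_eq_sub_of_hasDerivAt (a := z) (b := z + Real.pi)
      (f := fun x => - (k * (Real.sin (k * (x - z - Real.pi / 2)) / Real.cos (k * (x - z - Real.pi / 2))) * h x ^ 2))
      (f' := fun x => (h' x ^ 2 - k ^ 2 * h x ^ 2
      - (h' x + k * (Real.sin (k * (x - z - Real.pi / 2)) / Real.cos (k * (x - z - Real.pi / 2))) * h x) ^ 2)) ?_ ?_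
    · rw [this]; simp [h0, h1]
    · intro x hx
      rw [uIcc_of_le (by linarith)] at hx
      have hcx := (hcos x hx).ne'
      have e1 : HasDerivAt (fun x => k * (x - z - Real.pi / 2)) k x := by
        simpa using (((hasDerivAt_id x).sub_const z).sub_const (Real.pi / 2)).const_mul k
      have e2 := (((((e1.sin).div (e1.cos) hcx).const_mul k).mul ((hd x).pow 2))).neg
      refine e2.congr_deriv ?_
      simp only [Pi.pow_apply, Pi.div_apply]
      generalize Real.sin (k * (x - z - Real.pi / 2)) = S at *
      generalize Real.cos (k * (x - z - Real.pi / 2)) = Cc at *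
      push_cast
      field_simp
      ring
    · apply ContinuousOn.intervalIntegrable
      rw [uIcc_of_le (by linarith)]
      have : ContinuousOn (fun x => Real.sin (k * (x - z - Real.pi / 2)) / Real.cos (k * (x - z - Real.pi / 2))) (Icc z (z + Real.pi)) := by
        apply ContinuousOn.div (by fun_prop) (by fun_prop)
        intro x hx; exact (hcos x hx).ne'
      fun_prop
  have i1 : IntervalIntegrable (fun x => h' x ^ 2) volume z (z + Real.pi) := (by fun_prop : Continuous _).intervalIntegrable _ _
  have i2 : IntervalIntegrable (fun x => k ^ 2 * h x ^ 2) volume z (z + Real.pi) := (by fun_prop : Continuous _).intervalIntegrable _ _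
  have i3 : IntervalIntegrable (fun x => (h' x + k * (Real.sin (k * (x - z - Real.pi / 2)) / Real.cos (k * (x - z - Real.pi / 2))) * h x) ^ 2) volume z (z + Real.pi) := by
      apply ContinuousOn.intervalIntegrable
      rw [uIcc_of_le (by linarith)]
      have : ContinuousOn (fun x => Real.sin (k * (x - z - Real.pi / 2)) / Real.cos (k * (x - z - Real.pi / 2))) (Icc z (z + Real.pi)) := by
        apply ContinuousOn.div (by fun_prop) (by fun_prop)
        intro x hx; exact (hcos x hx).ne'
      fun_prop
  rw [intervalIntegral.integral_sub (i1.sub i2) i3, intervalIntegral.integral_sub i1 i2,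
    intervalIntegral.integral_const_mul] at key
  have : 0 ≤ ∫ x in z..(z + Real.pi), (h' x + k * (Real.sin (k * (x - z - Real.pi / 2)) / Real.cos (k * (x - z - Real.pi / 2))) * h x) ^ 2 :=
    intervalIntegral.integral_nonneg (by linarith) (fun x _ => sq_nonneg _)
  linarith

lemma aux_poincare (h h' : ℝ → ℝ) (hd : ∀ x, HasDerivAt h (h' x) x) (hc : Continuous h') (z : ℝ)
    (h0 : h z = 0) (h1 : h (z + Real.pi) = 0) :
    ∫ x in z..(z + Real.pi), h x ^ 2 ≤ ∫ x in z..(z + Real.pi), h' x ^ 2 := by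
  have ht : Filter.Tendsto (fun k : ℝ => k ^ 2 * ∫ x in z..(z + Real.pi), h x ^ 2) (nhdsWithin 1 (Iio 1))
      (nhds ((1:ℝ) ^ 2 * ∫ x in z..(z + Real.pi), h x ^ 2)) := by
    apply Filter.Tendsto.mono_left _ nhdsWithin_le_nhds
    exact (by fun_prop : Continuous (fun k : ℝ => k ^ 2 * ∫ x in z..(z + Real.pi), h x ^ 2)).tendsto 1
  rw [one_pow, one_mul] at ht
  refine le_of_tendsto ht ?_
  have : Ioo (0:ℝ) 1 ∈ nhdsWithin (1:ℝ) (Iio 1) := Ioo_mem_nhdsLT (by norm_num)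
  filter_upwards [this] with k hk
  exact aux_poincare_k h h' hd hc z h0 h1 k hk.1 hk.2

/-- Wirtinger inequality on the circle. -/
lemma wirtinger (q q' : ℝ → ℝ) (hd : ∀ x, HasDerivAt q (q' x) x) (hc : Continuous q')
    (hp : Function.Periodic q (2 * Real.pi)) (hp' : Function.Periodic q' (2 * Real.pi)) :
    ∃ c, ∫ x in (-Real.pi)..Real.pi, (q x - c) ^ 2 ≤ ∫ x in (-Real.pi)..Real.pi, q' x ^ 2 := by
  have hcont : Continuous q := continuous_iff_continuousAt.2 fun x => (hd x).continuousAt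
  have hpi := Real.pi_pos
  -- a zero of the odd part
  obtain ⟨z, hz⟩ : ∃ z, q z - q (z + Real.pi) = 0 := by
    have hco : Continuous (fun z => q z - q (z + Real.pi)) := by fun_prop
    have h2 : q (Real.pi + Real.pi) = q 0 := by
      have := hp 0; rw [zero_add] at this; rw [← this]; congr 1; ring
    have : (0:ℝ) ∈ uIcc ((fun z => q z - q (z + Real.pi)) 0) ((fun z => q z - q (z + Real.pi)) Real.pi) := by
      simp only [zero_add, h2, mem_uIcc]
      rcases le_total (q 0) (q Real.pi) with h | h
      · left; constructor <;> linarith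
      · right; constructor <;> linarith
    obtain ⟨z, -, hz⟩ := intermediate_value_uIcc (hco.continuousOn) this
    exact ⟨z, hz⟩
  have hz2 : q (z + Real.pi + Real.pi) = q z := by
    rw [← hp z]; congr 1; ring
  have hdpi : ∀ x, HasDerivAt (fun x => q (x + Real.pi)) (q' (x + Real.pi)) x := by
    intro x; simpa using (hd (x + Real.pi)).comp_add_const x Real.pi
  set c := q z with hcdef
  have hqz : q (z + Real.pi) = c := by linarith
  have E := aux_poincare (fun x => (q x + q (x + Real.pi)) / 2 - c) (fun x => (q' x + q' (x + Real.pi)) / 2)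
    (fun x => (((hd x).add (hdpi x)).div_const 2).sub_const c) (by fun_prop) z (by simp [hqz, ← hcdef])
    (by simp [hqz, hz2, ← hcdef])
  have O := aux_poincare (fun x => (q x - q (x + Real.pi)) / 2) (fun x => (q' x - q' (x + Real.pi)) / 2)
    (fun x => (((hd x).sub (hdpi x)).div_const 2)) (by fun_prop) z (by simp [hqz, ← hcdef])
    (by simp [hqz, hz2, ← hcdef])
  refine ⟨c, ?_⟩
  have split : ∀ f : ℝ → ℝ, Continuous f → Function.Periodic f (2 * Real.pi) →
      ∫ x in (-Real.pi)..Real.pi, f x = ∫ x in z..(z + Real.pi), (f x + f (x + Real.pi)) := by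
    intro f hf hper
    have e1 := hper.intervalIntegral_add_eq (-Real.pi) z
    have e2 : -Real.pi + 2 * Real.pi = Real.pi := by ring
    rw [e2] at e1
    rw [e1, intervalIntegral.integral_add (hf.intervalIntegrable _ _) ((by fun_prop : Continuous fun x => f (x + Real.pi)).intervalIntegrable _ _),
      intervalIntegral.integral_comp_add_right f, ← intervalIntegral.integral_add_adjacent_intervals (hf.intervalIntegrable z (z + Real.pi)) (hf.intervalIntegrable (z + Real.pi) _)]
    congr 2; ring
  rw [split (fun x => (q x - c) ^ 2) (by fun_prop) (fun x => by simp [hp x]),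
    split (fun x => q' x ^ 2) (by fun_prop) (fun x => by simp [hp' x])]
  have a1 : ∫ x in z..(z + Real.pi), ((q x - c) ^ 2 + (q (x + Real.pi) - c) ^ 2) =
      2 * (∫ x in z..(z + Real.pi), ((q x + q (x + Real.pi)) / 2 - c) ^ 2) +
      2 * (∫ x in z..(z + Real.pi), ((q x - q (x + Real.pi)) / 2) ^ 2) := by
    rw [← intervalIntegral.integral_const_mul, ← intervalIntegral.integral_const_mul,
      ← intervalIntegral.integral_add ((by fun_prop : Continuous _).intervalIntegrable _ _) ((by fun_prop : Continuous _).intervalIntegrable _ _)]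
    congr 1; ext x; ring
  have a2 : ∫ x in z..(z + Real.pi), ((q' x) ^ 2 + (q' (x + Real.pi)) ^ 2) =
      2 * (∫ x in z..(z + Real.pi), ((q' x + q' (x + Real.pi)) / 2) ^ 2) +
      2 * (∫ x in z..(z + Real.pi), ((q' x - q' (x + Real.pi)) / 2) ^ 2) := by
    rw [← intervalIntegral.integral_const_mul, ← intervalIntegral.integral_const_mul,
      ← intervalIntegral.integral_add ((by fun_prop : Continuous _).intervalIntegrable _ _) ((by fun_prop : Continuous _).intervalIntegrable _ _)]
    congr 1; ext x; ring
  rw [a1, a2]; linarith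

/-- Cauchy-Schwarz on the circle. -/
lemma circ_cs (f : ℝ → ℝ) (hf : Continuous f) :
    (∫ x in (-Real.pi)..Real.pi, f x) ^ 2 ≤ 2 * Real.pi * ∫ x in (-Real.pi)..Real.pi, f x ^ 2 := by
  have hpi := Real.pi_pos
  set I := ∫ x in (-Real.pi)..Real.pi, f x with hI
  have : 0 ≤ ∫ x in (-Real.pi)..Real.pi, (2 * Real.pi * f x - I) ^ 2 :=
    intervalIntegral.integral_nonneg (by linarith) (fun x _ => sq_nonneg _)
  have e : ∫ x in (-Real.pi)..Real.pi, (2 * Real.pi * f x - I) ^ 2 =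
      (2 * Real.pi) ^ 2 * (∫ x in (-Real.pi)..Real.pi, f x ^ 2) - 4 * Real.pi * I * I + 2 * Real.pi * I ^ 2 := by
    have : ∀ x, (2 * Real.pi * f x - I) ^ 2 = (2 * Real.pi) ^ 2 * f x ^ 2 - 4 * Real.pi * I * f x + I ^ 2 := by
      intro x; ring
    simp_rw [this]
    rw [intervalIntegral.integral_add ((by fun_prop : Continuous _).intervalIntegrable _ _) ((by fun_prop : Continuous _).intervalIntegrable _ _),
      intervalIntegral.integral_sub ((by fun_prop : Continuous _).intervalIntegrable _ _) ((by fun_prop : Continuous _).intervalIntegrable _ _),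
      intervalIntegral.integral_const_mul, intervalIntegral.integral_const_mul, intervalIntegral.integral_const, ← hI]
    rw [smul_eq_mul]; ring
  rw [e] at this
  have h2 : 0 ≤ (2 * Real.pi) * (2 * Real.pi * (∫ x in (-Real.pi)..Real.pi, f x ^ 2) - I ^ 2) := by nlinarith
  have := (mul_nonneg_iff_of_pos_left (by positivity : 0 < 2 * Real.pi)).1 h2
  linarith



lemma ode_growth (D D' m m' : ℝ → ℝ) (R γ B X : ℝ) (hR : 0 < R) (hγ : 0 < γ) (hγ' : γ ≤ 1 / 3)
    (hB : 0 ≤ B)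
    (hD : ∀ ρ ∈ Ioc 0 R, HasDerivAt D (D' ρ) ρ) (hD0 : ∀ ρ ∈ Ioc 0 R, 0 ≤ D ρ)
    (hode : ∀ ρ ∈ Ioc 0 R, γ * D ρ ≤ ρ * D' ρ + B * ρ ^ (2 / 3 : ℝ))
    (hm : ∀ ρ ∈ Ioc 0 R, HasDerivAt m (m' ρ) ρ) (hm' : ∀ ρ ∈ Ioc 0 R, ρ * m' ρ ^ 2 ≤ D' ρ)
    (hX : 0 < X) (hXD : D R + 3 * B * R ^ (2 / 3 : ℝ) ≤ X) :
    ∀ r ∈ Ioc 0 R, |m R - m r| ≤ (1 + 1 / γ) * √X := by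
  have mono : ∀ (f f' : ℝ → ℝ), (∀ ρ ∈ Ioc 0 R, HasDerivAt f (f' ρ) ρ) → (∀ ρ ∈ Ioc 0 R, 0 ≤ f' ρ) →
      ∀ r ∈ Ioc 0 R, f r ≤ f R := by
    intro f f' hf hf' r hr
    have : MonotoneOn f (Ioc 0 R) := by
      apply monotoneOn_of_deriv_nonneg (convex_Ioc 0 R)
      · intro x hx; exact (hf x hx).continuousAt.continuousWithinAt
      · intro x hx; rw [interior_Ioc] at hx
        exact (hf x (Ioo_subset_Ioc_self hx)).differentiableAt.differentiableWithinAt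
      · intro x hx; rw [interior_Ioc] at hx
        rw [(hf x (Ioo_subset_Ioc_self hx)).deriv]; exact hf' x (Ioo_subset_Ioc_self hx)
    exact this hr ⟨hR, le_rfl⟩ hr.2
  have hpow : ∀ (p : ℝ), ∀ ρ ∈ Ioc 0 R, HasDerivAt (fun x : ℝ => x ^ p) (p * (ρ ^ p / ρ)) ρ := by
    intro p ρ hρ
    have := Real.hasDerivAt_rpow_const (x := ρ) (p := p) (Or.inl hρ.1.ne')
    rwa [Real.rpow_sub_one hρ.1.ne'] at this
  -- first growth estimate
  have hgrow : ∀ ρ ∈ Ioc 0 R, ρ ^ (-γ) * D ρ ≤ R ^ (-γ) * X := by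
    intro ρ hρ
    have := mono (fun x => x ^ (-γ) * D x + 3 * B * x ^ (2 / 3 - γ))
      (fun x => (-γ * (x ^ (-γ) / x)) * D x + x ^ (-γ) * D' x + 3 * B * ((2 / 3 - γ) * (x ^ (2 / 3 - γ) / x)))
      (fun x hx => ((hpow _ x hx).mul (hD x hx)).add ((hpow _ x hx).const_mul _)) ?_ ρ hρ
    · have h1 : 0 ≤ 3 * B * ρ ^ (2 / 3 - γ) := by have := hρ.1; positivity
      have h2 : R ^ (2 / 3 - γ) = R ^ (-γ) * R ^ (2 / 3 : ℝ) := by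
        rw [← Real.rpow_add hR]; congr 1; ring
      have h3 : 0 < R ^ (-γ) := by positivity
      simp only [h2] at this
      nlinarith [mul_le_mul_of_nonneg_left hXD h3.le]
    · intro x hx
      have hx0 := hx.1
      have h2 : x ^ (2 / 3 - γ) = x ^ (-γ) * x ^ (2 / 3 : ℝ) := by
        rw [← Real.rpow_add hx0]; congr 1; ring
      have h3 : 0 < x ^ (-γ) := by positivity
      have h4 : 0 < x ^ (2 / 3 : ℝ) := by positivity
      have e : (-γ * (x ^ (-γ) / x)) * D x + x ^ (-γ) * D' x + 3 * B * ((2 / 3 - γ) * (x ^ (2 / 3 - γ) / x))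
          = x ^ (-γ) / x * ((x * D' x + B * x ^ (2 / 3 : ℝ) - γ * D x) + (1 - 3 * γ) * (B * x ^ (2 / 3 : ℝ))) := by
        rw [h2]; field_simp; ring
      simp only [e]
      have := hode x hx
      have h5 : 0 ≤ (1 - 3 * γ) * (B * x ^ (2 / 3 : ℝ)) := by
        apply mul_nonneg (by linarith) (by positivity)
      have h6 : 0 ≤ x * D' x + B * x ^ (2 / 3 : ℝ) - γ * D x := by linarith
      positivity
  obtain ⟨σ, hσ⟩ : ∃ σ, σ = γ / 2 := ⟨_, rfl⟩
  have hσ0 : 0 < σ := by rw [hσ]; linarith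
  have hsX : 0 < √X := Real.sqrt_pos.2 hX
  have hXX : √X * √X = X := Real.mul_self_sqrt hX.le
  have hRσ : 0 < R ^ σ := by positivity
  obtain ⟨κ, hκ⟩ : ∃ κ, κ = R ^ σ / √X := ⟨_, rfl⟩
  have hκ0 : 0 < κ := by rw [hκ]; positivity
  obtain ⟨b, hb⟩ : ∃ b, b = X / (R ^ σ * R ^ σ) := ⟨_, rfl⟩
  have hnegp : ∀ x : ℝ, 0 < x → x ^ (-σ) = (x ^ σ)⁻¹ := fun x hx => Real.rpow_neg hx.le σ
  have hgrow' : ∀ ρ ∈ Ioc 0 R, D ρ ≤ b * (ρ ^ σ * ρ ^ σ) := by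
    intro ρ hρ
    have h1 := hgrow ρ hρ
    have e : ∀ x : ℝ, 0 < x → x ^ (-γ) = (x ^ σ * x ^ σ)⁻¹ := by
      intro x hx
      rw [Real.rpow_neg hx.le, ← Real.rpow_add hx]; congr 2; rw [hσ]; ring
    rw [e ρ hρ.1, e R hR] at h1
    have := hρ.1
    have h2 : 0 < ρ ^ σ := by positivity
    rw [hb]
    rw [inv_mul_eq_div, inv_mul_eq_div, div_le_iff₀ (by positivity)] at h1
    exact h1
  have hh : ∀ s : ℝ, s ^ 2 = 1 → ∀ r ∈ Ioc 0 R, s * (m R - m r) ≤ (1 + 1 / γ) * √X := by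
    intro s hs r hr
    have := mono (fun x => κ / 2 * (x ^ (-σ) * D x + b * x ^ σ) + 1 / (γ * κ) * x ^ σ - s * m x)
      (fun x => κ / 2 * (((-σ) * (x ^ (-σ) / x)) * D x + x ^ (-σ) * D' x + b * (σ * (x ^ σ / x)))
        + 1 / (γ * κ) * (σ * (x ^ σ / x)) - s * m' x)
      (fun x hx => (((((hpow _ x hx).mul (hD x hx)).add ((hpow _ x hx).const_mul _)).const_mul _).add
        ((hpow _ x hx).const_mul _)).sub ((hm x hx).const_mul s)) ?_ r hr
    · simp only [hnegp R hR, hnegp r hr.1] at this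
      have hr0 := hr.1
      have hrσ : 0 < r ^ σ := by positivity
      have h1 : 0 ≤ κ / 2 * ((r ^ σ)⁻¹ * D r + b * r ^ σ) + 1 / (γ * κ) * r ^ σ := by
        have := hD0 r hr
        have hb0 : 0 ≤ b := by rw [hb]; positivity
        positivity
      have hDR : D R ≤ X := by
        have : 0 ≤ 3 * B * R ^ (2 / 3 : ℝ) := by positivity
        linarith
      have h2 : κ / 2 * ((R ^ σ)⁻¹ * D R + b * R ^ σ) + 1 / (γ * κ) * R ^ σ ≤ (1 + 1 / γ) * √X := by
        calc κ / 2 * ((R ^ σ)⁻¹ * D R + b * R ^ σ) + 1 / (γ * κ) * R ^ σ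
            ≤ κ / 2 * ((R ^ σ)⁻¹ * X + b * R ^ σ) + 1 / (γ * κ) * R ^ σ := by gcongr
          _ = (1 + 1 / γ) * √X := by
            rw [hκ, hb]
            obtain ⟨w, hw⟩ : ∃ w, w = √X := ⟨_, rfl⟩
            rw [← hw] at hXX hsX ⊢
            rw [← hXX]
            field_simp; ring
      linarith
    · intro x hx
      have hx0 := hx.1
      have h3 : 0 < x ^ σ := by positivity
      have h1 := hgrow' x hx
      have h2 := hm' x hx
      simp only [hnegp x hx0]
      have e : κ / 2 * (((-σ) * ((x ^ σ)⁻¹ / x)) * D x + (x ^ σ)⁻¹ * D' x + b * (σ * (x ^ σ / x)))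
        + 1 / (γ * κ) * (σ * (x ^ σ / x)) - s * m' x =
         κ * σ / (2 * x * x ^ σ) * (b * (x ^ σ * x ^ σ) - D x) + κ / (2 * x ^ σ) * (D' x - x * m' x ^ 2)
         + 1 / (2 * κ * x ^ σ * x) * (s * κ * x * m' x - x ^ σ) ^ 2 := by
        have : γ = 2 * σ := by rw [hσ]; ring
        rw [this]
        field_simp
        ring_nf
        rw [hs]; ring
      rw [e]
      have h4 : 0 ≤ b * (x ^ σ * x ^ σ) - D x := by linarith
      have h5 : 0 ≤ D' x - x * m' x ^ 2 := by linarith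
      positivity
  intro r hr
  rw [abs_le]
  have := hh 1 (by norm_num) r hr
  have := hh (-1) (by norm_num) r hr
  constructor <;> linarith

lemma caccioppoli_ode (D D' J : ℝ → ℝ) (R k N₀ : ℝ) (hR : 0 < R) (hk : 0 < k) (hN : 0 ≤ N₀)
    (hD : ∀ ρ, HasDerivAt D (D' ρ) ρ) (hD'c : Continuous D') (hJc : Continuous J)
    (hDz : D 0 = 0) (hJ : ∀ ρ ∈ Icc 0 R, 0 ≤ J ρ) (hD' : ∀ ρ ∈ Icc 0 R, 0 ≤ D' ρ)
    (hode : ∀ ρ ∈ Icc 0 R, ∀ s > 0, D ρ ≤ k * (s * J ρ + ρ * D' ρ / s) + N₀)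
    : D (R / 2) * R ^ 2 ≤ 64 * k ^ 2 * (∫ ρ in (0:ℝ)..R, ρ * J ρ) + 8 * R ^ 2 * N₀ := by
  have hDc : Continuous D := continuous_iff_continuousAt.2 fun x => (hD x).continuousAt
  have hmono : MonotoneOn D (Icc 0 R) := by
    apply monotoneOn_of_deriv_nonneg (convex_Icc 0 R) hDc.continuousOn
    · intro x hx; exact (hD x).differentiableAt.differentiableWithinAt
    · intro x hx; rw [(hD x).deriv]; exact hD' x (interior_subset hx)
  have hpt : ∀ ρ ∈ Icc 0 R, (R - ρ) * D ρ ≤ 8 * k ^ 2 * (ρ * J ρ)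
      + (1 / 2 * (R - ρ) ^ 2 * D' ρ - (R - ρ) * D ρ) + 2 * (R - ρ) * N₀ := by
    intro ρ hρ
    rcases eq_or_lt_of_le hρ.1 with h0 | h0
    · rw [← h0, hDz]; have := hD' 0 ⟨le_rfl, hR.le⟩
      have : 0 ≤ 1 / 2 * R ^ 2 * D' 0 := by positivity
      have : 0 ≤ 2 * R * N₀ := by positivity
      simp; linarith
    rcases eq_or_lt_of_le hρ.2 with h1 | h1
    · rw [h1]
      have := hJ R ⟨hR.le, le_rfl⟩
      have : 0 ≤ 8 * k ^ 2 * (R * J R) := by positivity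
      simp; linarith
    · have hpos : 0 < R - ρ := by linarith
      have h2 := hode ρ hρ (4 * k * ρ / (R - ρ)) (by positivity)
      have e : 2 * (R - ρ) * (k * (4 * k * ρ / (R - ρ) * J ρ + ρ * D' ρ / (4 * k * ρ / (R - ρ))) + N₀)
          = 8 * k ^ 2 * (ρ * J ρ) + 1 / 2 * (R - ρ) ^ 2 * D' ρ + 2 * (R - ρ) * N₀ := by
        field_simp; ring
      have h3 := mul_le_mul_of_nonneg_left h2 (by positivity : 0 ≤ 2 * (R - ρ))
      rw [e] at h3; linarith
  have i0 : ∫ ρ in (0:ℝ)..R, (1 / 2 * (R - ρ) ^ 2 * D' ρ - (R - ρ) * D ρ) = 0 := by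
    rw [intervalIntegral.integral_eq_sub_of_hasDerivAt (f := fun ρ => 1 / 2 * (R - ρ) ^ 2 * D ρ)]
    · simp [hDz]
    · intro x _
      have h1 : HasDerivAt (fun ρ : ℝ => 1 / 2 * (R - ρ) ^ 2) (-(R - x)) x := by
        have := ((((hasDerivAt_id x).const_sub R).pow 2).const_mul (1 / 2))
        refine this.congr_deriv ?_
        simp
      refine (h1.mul (hD x)).congr_deriv ?_
      ring
    · exact (by fun_prop : Continuous _).intervalIntegrable _ _
  have i1 : ∫ ρ in (0:ℝ)..R, (R - ρ) * D ρ ≤ ∫ ρ in (0:ℝ)..R, (8 * k ^ 2 * (ρ * J ρ)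
      + (1 / 2 * (R - ρ) ^ 2 * D' ρ - (R - ρ) * D ρ) + 2 * (R - ρ) * N₀) := by
    apply intervalIntegral.integral_mono_on hR.le ((by fun_prop : Continuous _).intervalIntegrable _ _)
      ((by fun_prop : Continuous _).intervalIntegrable _ _) hpt
  have i3 : ∀ c d : ℝ, ∫ ρ in c..d, (R - ρ) = R * (d - c) - (d ^ 2 - c ^ 2) / 2 := by
    intro c d
    rw [intervalIntegral.integral_sub (by simp) (by simp), integral_id]; simp; ring
  rw [intervalIntegral.integral_add ((by fun_prop : Continuous _).intervalIntegrable _ _) ((by fun_prop : Continuous _).intervalIntegrable _ _),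
    intervalIntegral.integral_add ((by fun_prop : Continuous _).intervalIntegrable _ _) ((by fun_prop : Continuous _).intervalIntegrable _ _),
    i0, intervalIntegral.integral_const_mul, intervalIntegral.integral_mul_const, intervalIntegral.integral_const_mul, i3] at i1
  have i4 : D (R / 2) * R ^ 2 / 8 ≤ ∫ ρ in (0:ℝ)..R, (R - ρ) * D ρ := by
    rw [← intervalIntegral.integral_add_adjacent_intervals (b := R / 2) ((by fun_prop : Continuous _).intervalIntegrable _ _) ((by fun_prop : Continuous _).intervalIntegrable _ _)]
    have hDnn : ∀ x ∈ Icc 0 R, 0 ≤ D x := fun x hx => by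
      rw [← hDz]; exact hmono ⟨le_rfl, hR.le⟩ hx hx.1
    have j1 : 0 ≤ ∫ ρ in (0:ℝ)..(R/2), (R - ρ) * D ρ := by
      apply intervalIntegral.integral_nonneg (by linarith)
      intro x hx
      exact mul_nonneg (by linarith [hx.2]) (hDnn x ⟨hx.1, by linarith [hx.2]⟩)
    have j2 : ∫ ρ in (R/2)..R, (R - ρ) * D (R / 2) ≤ ∫ ρ in (R/2)..R, (R - ρ) * D ρ := by
      apply intervalIntegral.integral_mono_on (by linarith) ((by fun_prop : Continuous _).intervalIntegrable _ _) ((by fun_prop : Continuous _).intervalIntegrable _ _)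
      intro x hx
      apply mul_le_mul_of_nonneg_left _ (by linarith [hx.2])
      exact hmono ⟨by linarith, by linarith⟩ ⟨by linarith [hx.1], hx.2⟩ hx.1
    rw [intervalIntegral.integral_mul_const, i3] at j2
    nlinarith
  nlinarith



abbrev E2 := EuclideanSpace ℝ (Fin 2)

noncomputable def vec (a b : ℝ) : E2 := a • EuclideanSpace.single 0 1 + b • EuclideanSpace.single 1 1

lemma vec_zero (a b : ℝ) : vec a b 0 = a := by simp [vec]
lemma vec_one (a b : ℝ) : vec a b 1 = b := by simp [vec]

lemma vec_eta (x : E2) : vec (x 0) (x 1) = x := by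
  ext i; fin_cases i <;> simp [vec]

lemma norm_sq_E2 (x : E2) : ‖x‖ ^ 2 = x 0 ^ 2 + x 1 ^ 2 := by
  rw [EuclideanSpace.norm_sq_eq]; simp

lemma fderiv_vec (f : E2 → ℝ) (x : E2) (a b : ℝ) :
    fderiv ℝ f x (vec a b) = a * pd 0 f x + b * pd 1 f x := by
  simp [vec, pd]

noncomputable def pt (x0 : E2) (ρ θ : ℝ) : E2 := x0 + vec (ρ * Real.cos θ) (ρ * Real.sin θ)

lemma continuous_vec : Continuous (fun p : ℝ × ℝ => vec p.1 p.2) := by unfold vec; fun_prop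

lemma continuous_pt (x0 : E2) : Continuous (fun p : ℝ × ℝ => pt x0 p.1 p.2) := by
  unfold pt vec; fun_prop

@[fun_prop]
lemma continuous_pt_comp {X : Type*} [TopologicalSpace X] (x0 : E2) {f g : X → ℝ} (hf : Continuous f)
    (hg : Continuous g) : Continuous (fun x => pt x0 (f x) (g x)) :=
  (continuous_pt x0).comp (hf.prodMk hg)

lemma dist_pt (x0 : E2) (ρ θ : ℝ) : dist (pt x0 ρ θ) x0 = |ρ| := by
  have : dist (pt x0 ρ θ) x0 ^ 2 = |ρ| ^ 2 := by
    rw [dist_eq_norm, norm_sq_E2]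
    simp only [pt, add_sub_cancel_left, vec_zero, vec_one, sq_abs]
    nlinarith [Real.sin_sq_add_cos_sq θ]
  exact (pow_left_inj₀ dist_nonneg (abs_nonneg _) two_ne_zero).1 this

lemma pt_mem (x0 : E2) {ρ r : ℝ} (θ : ℝ) (h0 : 0 ≤ ρ) (h : ρ ≤ r) : pt x0 ρ θ ∈ Metric.closedBall x0 r := by
  rw [Metric.mem_closedBall, dist_pt, abs_of_nonneg h0]; exact h

lemma pt_zero (x0 : E2) (θ : ℝ) : pt x0 0 θ = x0 := by simp [pt, vec]

lemma pt_periodic (x0 : E2) (ρ : ℝ) : Function.Periodic (pt x0 ρ) (2 * Real.pi) := by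
  intro θ; simp [pt]

lemma hasDerivAt_pt_rho (x0 : E2) (ρ θ : ℝ) :
    HasDerivAt (fun r => pt x0 r θ) (vec (Real.cos θ) (Real.sin θ)) ρ := by
  unfold pt vec
  have h1 : HasDerivAt (fun r : ℝ => r * Real.cos θ) (Real.cos θ) ρ := by
    simpa using (hasDerivAt_id ρ).mul_const (Real.cos θ)
  have h2 : HasDerivAt (fun r : ℝ => r * Real.sin θ) (Real.sin θ) ρ := by
    simpa using (hasDerivAt_id ρ).mul_const (Real.sin θ)
  exact ((h1.smul_const _).add (h2.smul_const _)).const_add x0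

lemma hasDerivAt_pt_theta (x0 : E2) (ρ θ : ℝ) :
    HasDerivAt (fun t => pt x0 ρ t) (vec (ρ * -Real.sin θ) (ρ * Real.cos θ)) θ := by
  unfold pt vec
  have h1 := (Real.hasDerivAt_cos θ).const_mul ρ
  have h2 := (Real.hasDerivAt_sin θ).const_mul ρ
  exact ((h1.smul_const _).add (h2.smul_const _)).const_add x0

lemma hasDerivAt_polar_rho (f : E2 → ℝ) (hf : Differentiable ℝ f) (x0 : E2) (ρ θ : ℝ) :
    HasDerivAt (fun r => f (pt x0 r θ))
      (Real.cos θ * pd 0 f (pt x0 ρ θ) + Real.sin θ * pd 1 f (pt x0 ρ θ)) ρ := by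
  rw [← fderiv_vec]
  exact (hf (pt x0 ρ θ)).hasFDerivAt.comp_hasDerivAt ρ (hasDerivAt_pt_rho x0 ρ θ)

lemma hasDerivAt_polar_theta (f : E2 → ℝ) (hf : Differentiable ℝ f) (x0 : E2) (ρ θ : ℝ) :
    HasDerivAt (fun t => f (pt x0 ρ t))
      (ρ * (-Real.sin θ * pd 0 f (pt x0 ρ θ) + Real.cos θ * pd 1 f (pt x0 ρ θ))) θ := by
  have : ρ * (-Real.sin θ * pd 0 f (pt x0 ρ θ) + Real.cos θ * pd 1 f (pt x0 ρ θ)) =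
    fderiv ℝ f (pt x0 ρ θ) (vec (ρ * -Real.sin θ) (ρ * Real.cos θ)) := by rw [fderiv_vec]; ring
  rw [this]
  exact (hf (pt x0 ρ θ)).hasFDerivAt.comp_hasDerivAt θ (hasDerivAt_pt_theta x0 ρ θ)

lemma contDiff_pd {f : E2 → ℝ} (hf : ContDiff ℝ (⊤ : ℕ∞) f) (i : Fin 2) : ContDiff ℝ (⊤ : ℕ∞) (pd i f) := by
  unfold pd
  exact (hf.fderiv_right (m := (⊤ : ℕ∞)) (by simp)).clm_apply contDiff_const

/-- circle integral -/
noncomputable def cir (x0 : E2) (G : E2 → ℝ) (ρ : ℝ) : ℝ := ∫ θ in (-Real.pi)..Real.pi, G (pt x0 ρ θ)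
/-- disk integral -/
noncomputable def dsk (x0 : E2) (G : E2 → ℝ) (ρ : ℝ) : ℝ := ∫ t in (0:ℝ)..ρ, t * cir x0 G t

lemma cont_pt2 {G : E2 → ℝ} (hG : Continuous G) (x0 : E2) : Continuous (fun p : ℝ × ℝ => G (pt x0 p.1 p.2)) :=
  hG.comp (continuous_pt x0)

lemma cont_theta {G : E2 → ℝ} (hG : Continuous G) (x0 : E2) (ρ : ℝ) : Continuous (fun θ => G (pt x0 ρ θ)) :=
  (cont_pt2 hG x0).comp (by fun_prop : Continuous fun θ : ℝ => (ρ, θ))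

lemma cont_cir {G : E2 → ℝ} (hG : Continuous G) (x0 : E2) : Continuous (cir x0 G) := by
  unfold cir
  exact intervalIntegral.continuous_parametric_intervalIntegral_of_continuous' (cont_pt2 hG x0) _ _

lemma hasDerivAt_dsk {G : E2 → ℝ} (hG : Continuous G) (x0 : E2) (ρ : ℝ) :
    HasDerivAt (dsk x0 G) (ρ * cir x0 G ρ) ρ := by
  have hc : Continuous (fun t => t * cir x0 G t) := continuous_id.mul (cont_cir hG x0)
  exact intervalIntegral.integral_hasDerivAt_right (hc.intervalIntegrable _ _)
    (hc.stronglyMeasurableAtFilter _ _) hc.continuousAt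

lemma dsk_zero (x0 : E2) (G : E2 → ℝ) : dsk x0 G 0 = 0 := by simp [dsk]

lemma cir_mono {F G : E2 → ℝ} (hF : Continuous F) (hG : Continuous G) (x0 : E2) {ρ : ℝ} (h0 : 0 ≤ ρ)
    (h : ∀ x ∈ Metric.closedBall x0 ρ, F x ≤ G x) : cir x0 F ρ ≤ cir x0 G ρ := by
  apply intervalIntegral.integral_mono_on (by linarith [Real.pi_pos]) ((cont_theta hF x0 ρ).intervalIntegrable _ _)
    ((cont_theta hG x0 ρ).intervalIntegrable _ _)
  intro θ _; exact h _ (pt_mem x0 θ h0 le_rfl)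

lemma cir_nonneg {F : E2 → ℝ} (x0 : E2) {ρ : ℝ} (h0 : 0 ≤ ρ)
    (h : ∀ x ∈ Metric.closedBall x0 ρ, 0 ≤ F x) : 0 ≤ cir x0 F ρ := by
  apply intervalIntegral.integral_nonneg (by linarith [Real.pi_pos])
  intro θ _; exact h _ (pt_mem x0 θ h0 le_rfl)

lemma dsk_mono {F G : E2 → ℝ} (hF : Continuous F) (hG : Continuous G) (x0 : E2) {ρ : ℝ} (h0 : 0 ≤ ρ)
    (h : ∀ x ∈ Metric.closedBall x0 ρ, F x ≤ G x) : dsk x0 F ρ ≤ dsk x0 G ρ := by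
  apply intervalIntegral.integral_mono_on h0 ((continuous_id.mul (cont_cir hF x0)).intervalIntegrable _ _)
    ((continuous_id.mul (cont_cir hG x0)).intervalIntegrable _ _)
  intro t ht
  exact mul_le_mul_of_nonneg_left (cir_mono hF hG x0 ht.1
    (fun x hx => h x (Metric.closedBall_subset_closedBall ht.2 hx))) ht.1

lemma dsk_nonneg {F : E2 → ℝ} (x0 : E2) {ρ : ℝ} (h0 : 0 ≤ ρ)
    (h : ∀ x ∈ Metric.closedBall x0 ρ, 0 ≤ F x) : 0 ≤ dsk x0 F ρ := by
  apply intervalIntegral.integral_nonneg h0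
  intro t ht
  exact mul_nonneg ht.1 (cir_nonneg x0 ht.1 (fun x hx => h x (Metric.closedBall_subset_closedBall ht.2 hx)))

lemma dsk_mono_radius {F : E2 → ℝ} (hF : Continuous F) (x0 : E2) {r ρ : ℝ} (h0 : 0 ≤ r) (h1 : r ≤ ρ)
    (h : ∀ x ∈ Metric.closedBall x0 ρ, 0 ≤ F x) : dsk x0 F r ≤ dsk x0 F ρ := by
  have hc : Continuous (fun t => t * cir x0 F t) := continuous_id.mul (cont_cir hF x0)
  unfold dsk
  rw [← intervalIntegral.integral_add_adjacent_intervals (hc.intervalIntegrable 0 r) (hc.intervalIntegrable r ρ)]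
  have : 0 ≤ ∫ t in r..ρ, t * cir x0 F t := by
    apply intervalIntegral.integral_nonneg h1
    intro t ht
    have : 0 ≤ t := h0.trans ht.1
    exact mul_nonneg this (cir_nonneg x0 this (fun x hx => h x (Metric.closedBall_subset_closedBall ht.2 hx)))
  linarith

lemma cir_add {F G : E2 → ℝ} (hF : Continuous F) (hG : Continuous G) (x0 : E2) (ρ : ℝ) :
    cir x0 (fun x => F x + G x) ρ = cir x0 F ρ + cir x0 G ρ :=
  intervalIntegral.integral_add ((cont_theta hF x0 ρ).intervalIntegrable _ _) ((cont_theta hG x0 ρ).intervalIntegrable _ _)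

lemma cir_smul (F : E2 → ℝ) (c : ℝ) (x0 : E2) (ρ : ℝ) :
    cir x0 (fun x => c * F x) ρ = c * cir x0 F ρ :=
  intervalIntegral.integral_const_mul _ _

lemma dsk_add {F G : E2 → ℝ} (hF : Continuous F) (hG : Continuous G) (x0 : E2) (ρ : ℝ) :
    dsk x0 (fun x => F x + G x) ρ = dsk x0 F ρ + dsk x0 G ρ := by
  unfold dsk
  have h1 : Continuous (fun t => t * cir x0 F t) := continuous_id.mul (cont_cir hF x0)
  have h2 : Continuous (fun t => t * cir x0 G t) := continuous_id.mul (cont_cir hG x0)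
  rw [← intervalIntegral.integral_add (h1.intervalIntegrable _ _) (h2.intervalIntegrable _ _)]
  congr 1; ext t; rw [cir_add hF hG]; ring

lemma dsk_smul (F : E2 → ℝ) (c : ℝ) (x0 : E2) (ρ : ℝ) :
    dsk x0 (fun x => c * F x) ρ = c * dsk x0 F ρ := by
  unfold dsk
  rw [← intervalIntegral.integral_const_mul]
  congr 1; ext t; rw [cir_smul]; ring

lemma swap_aux {K : ℝ → ℝ → ℝ} (hK : Continuous (fun p : ℝ × ℝ => K p.1 p.2)) (a b c d : ℝ) :
    IntegrableOn (Function.uncurry fun θ r => K r θ) (uIoc a b ×ˢ uIoc c d) := by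
  have c2 : Continuous (Function.uncurry fun θ r => K r θ) := hK.comp continuous_swap
  have h1 : IntegrableOn (Function.uncurry fun θ r => K r θ) (uIcc a b ×ˢ uIcc c d) :=
    c2.continuousOn.integrableOn_compact (isCompact_uIcc.prod isCompact_uIcc)
  exact h1.mono_set (Set.prod_mono uIoc_subset_uIcc uIoc_subset_uIcc)

/-- Green-Stokes on disks, in polar coordinates. -/
lemma stokes {P Q : E2 → ℝ} (hP : ContDiff ℝ 1 P) (hQ : ContDiff ℝ 1 Q) (x0 : E2) (ρ : ℝ) :
    ∫ θ in (-Real.pi)..Real.pi, ρ * (-Real.sin θ * P (pt x0 ρ θ) + Real.cos θ * Q (pt x0 ρ θ)) =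
      dsk x0 (fun x => pd 0 Q x - pd 1 P x) ρ := by
  have cpd : ∀ {f : E2 → ℝ}, ContDiff ℝ 1 f → ∀ i, Continuous (pd i f) := by
    intro f hf i; unfold pd; exact (hf.continuous_fderiv (by simp)).clm_apply continuous_const
  have dP := hP.differentiable (by simp)
  have dQ := hQ.differentiable (by simp)
  set K : ℝ → ℝ → ℝ := fun r θ => r * (-Real.sin θ * P (pt x0 r θ) + Real.cos θ * Q (pt x0 r θ)) with hK
  set K' : ℝ → ℝ → ℝ := fun r θ => (-Real.sin θ * P (pt x0 r θ) + Real.cos θ * Q (pt x0 r θ)) +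
    r * (-Real.sin θ * (Real.cos θ * pd 0 P (pt x0 r θ) + Real.sin θ * pd 1 P (pt x0 r θ))
      + Real.cos θ * (Real.cos θ * pd 0 Q (pt x0 r θ) + Real.sin θ * pd 1 Q (pt x0 r θ))) with hK'
  have cP := hP.continuous
  have cQ := hQ.continuous
  have cP0 := cpd hP 0
  have cP1 := cpd hP 1
  have cQ0 := cpd hQ 0
  have cQ1 := cpd hQ 1
  have cK' : Continuous (fun p : ℝ × ℝ => K' p.1 p.2) := by simp only [hK']; fun_prop
  have step1 : ∀ θ, K ρ θ = ∫ r in (0:ℝ)..ρ, K' r θ := by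
    intro θ
    rw [intervalIntegral.integral_eq_sub_of_hasDerivAt (f := fun r => K r θ)]
    · simp [hK]
    · intro r _
      have h1 := (((hasDerivAt_polar_rho P dP x0 r θ).const_mul (-Real.sin θ)).add
        ((hasDerivAt_polar_rho Q dQ x0 r θ).const_mul (Real.cos θ)))
      have h2 := (hasDerivAt_id r).mul h1
      refine h2.congr_deriv ?_
      simp [hK']
    · exact (cK'.comp (by fun_prop : Continuous fun r : ℝ => (r, θ))).intervalIntegrable _ _
  have step2 : ∫ θ in (-Real.pi)..Real.pi, K ρ θ = ∫ r in (0:ℝ)..ρ, ∫ θ in (-Real.pi)..Real.pi, K' r θ := by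
    simp_rw [step1]
    rw [intervalIntegral_intervalIntegral_swap]
    exact swap_aux cK' _ _ _ _
  show ∫ θ in (-Real.pi)..Real.pi, K ρ θ = _
  rw [step2]
  unfold dsk cir
  congr 1; ext r
  have step3 : ∫ θ in (-Real.pi)..Real.pi, (K' r θ - r * (pd 0 Q (pt x0 r θ) - pd 1 P (pt x0 r θ))) = 0 := by
    rw [intervalIntegral.integral_eq_sub_of_hasDerivAt (f := fun θ => Real.cos θ * P (pt x0 r θ) + Real.sin θ * Q (pt x0 r θ))]
    · have : pt x0 r Real.pi = pt x0 r (-Real.pi) := by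
        have := pt_periodic x0 r (-Real.pi)
        rw [← this]; congr 1; ring
      simp [this]
    · intro θ _
      have h1 := (((Real.hasDerivAt_cos θ).mul (hasDerivAt_polar_theta P dP x0 r θ)).add
        ((Real.hasDerivAt_sin θ).mul (hasDerivAt_polar_theta Q dQ x0 r θ)))
      refine h1.congr_deriv ?_
      simp only [hK']
      have := Real.sin_sq_add_cos_sq θ
      have e : Real.sin θ ^ 2 = 1 - Real.cos θ ^ 2 := by linarith
      ring_nf
      rw [e]; ring
    · exact ((by simp only [hK']; fun_prop : Continuous (fun p : ℝ × ℝ => (K' p.1 p.2 - p.1 * (pd 0 Q (pt x0 p.1 p.2) - pd 1 P (pt x0 p.1 p.2))))).comp (by fun_prop : Continuous fun θ : ℝ => (r, θ))).intervalIntegrable _ _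
  rw [intervalIntegral.integral_sub, sub_eq_zero, intervalIntegral.integral_const_mul] at step3
  · exact step3
  · exact (cK'.comp (by fun_prop : Continuous fun θ : ℝ => (r, θ))).intervalIntegrable _ _
  · exact ((by fun_prop : Continuous (fun p : ℝ × ℝ => (p.1 * (pd 0 Q (pt x0 p.1 p.2) - pd 1 P (pt x0 p.1 p.2))))).comp (by fun_prop : Continuous fun θ : ℝ => (r, θ))).intervalIntegrable _ _



lemma cont_pd {f : E2 → ℝ} (hf : ContDiff ℝ (⊤ : ℕ∞) f) (i : Fin 2) : Continuous (pd i f) :=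
  (contDiff_pd hf i).continuous

lemma cd_diff {f : E2 → ℝ} (hf : ContDiff ℝ (⊤ : ℕ∞) f) : Differentiable ℝ f :=
  hf.differentiable (by simp)

lemma pd_mul {f g : E2 → ℝ} {x : E2} (hf : DifferentiableAt ℝ f x) (hg : DifferentiableAt ℝ g x) (i : Fin 2) :
    pd i (fun y => f y * g y) x = f x * pd i g x + g x * pd i f x := by
  unfold pd
  have h := fderiv_mul hf hg
  have e : (fun y => f y * g y) = f * g := rfl
  rw [e, h]; simp

lemma pd_add {f g : E2 → ℝ} {x : E2} (hf : DifferentiableAt ℝ f x) (hg : DifferentiableAt ℝ g x) (i : Fin 2) :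
    pd i (fun y => f y + g y) x = pd i f x + pd i g x := by
  unfold pd
  have e : (fun y => f y + g y) = f + g := rfl
  rw [e, fderiv_add hf hg]; simp

lemma pd_sub {f g : E2 → ℝ} {x : E2} (hf : DifferentiableAt ℝ f x) (hg : DifferentiableAt ℝ g x) (i : Fin 2) :
    pd i (fun y => f y - g y) x = pd i f x - pd i g x := by
  unfold pd
  have e : (fun y => f y - g y) = f - g := rfl
  rw [e, fderiv_sub hf hg]; simp

lemma pd_symm {f : E2 → ℝ} (hf : ContDiff ℝ (⊤ : ℕ∞) f) (x : E2) :
    pd 0 (pd 1 f) x = pd 1 (pd 0 f) x := by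
  have h : IsSymmSndFDerivAt ℝ f x :=
    (hf.contDiffAt (x := x)).isSymmSndFDerivAt (by simp; exact WithTop.coe_le_coe.2 (le_top : (2 : ℕ∞) ≤ ⊤))
  have hd : DifferentiableAt ℝ (fderiv ℝ f) x :=
    (hf.fderiv_right (m := (⊤ : ℕ∞)) (by simp)).differentiable (by simp) x
  have key : ∀ i j : Fin 2, pd i (pd j f) x =
      fderiv ℝ (fderiv ℝ f) x (EuclideanSpace.single i 1) (EuclideanSpace.single j 1) := by
    intro i j
    have e : pd j f = fun y => fderiv ℝ f y (EuclideanSpace.single j 1) := rfl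
    rw [pd, e, fderiv_clm_apply hd (by fun_prop)]
    simp
  rw [key, key, h.eq]

/-- derivative of circle averages -/
lemma hasDerivAt_cir {q : E2 → ℝ} (hq : ContDiff ℝ (⊤ : ℕ∞) q) (x0 : E2) (ρ : ℝ) :
    HasDerivAt (cir x0 q) (∫ θ in (-Real.pi)..Real.pi,
      (Real.cos θ * pd 0 q (pt x0 ρ θ) + Real.sin θ * pd 1 q (pt x0 ρ θ))) ρ := by
  have c0 := cont_pd hq 0
  have c1 := cont_pd hq 1
  have cq := hq.continuous
  set K : ℝ → ℝ → ℝ := fun r θ => Real.cos θ * pd 0 q (pt x0 r θ) + Real.sin θ * pd 1 q (pt x0 r θ) with hK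
  have cK : Continuous (fun p : ℝ × ℝ => K p.1 p.2) := by simp only [hK]; fun_prop
  have e : cir x0 q = fun r => (∫ s in (0:ℝ)..r, ∫ θ in (-Real.pi)..Real.pi, K s θ) + cir x0 q 0 := by
    ext r
    rw [← intervalIntegral_intervalIntegral_swap (swap_aux cK _ _ _ _)]
    have : ∀ θ, (∫ s in (0:ℝ)..r, K s θ) = q (pt x0 r θ) - q (pt x0 0 θ) := by
      intro θ
      rw [intervalIntegral.integral_eq_sub_of_hasDerivAt (f := fun r => q (pt x0 r θ))]
      · intro s _
        exact hasDerivAt_polar_rho q (cd_diff hq) x0 s θ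
      · exact (cK.comp (by fun_prop : Continuous fun r : ℝ => (r, θ))).intervalIntegrable _ _
    simp_rw [this]
    rw [intervalIntegral.integral_sub ((cont_theta cq x0 r).intervalIntegrable _ _)
      ((cont_theta cq x0 0).intervalIntegrable _ _)]
    simp [cir]
  rw [e]
  have hc : Continuous (fun s => ∫ θ in (-Real.pi)..Real.pi, K s θ) :=
    intervalIntegral.continuous_parametric_intervalIntegral_of_continuous' cK _ _
  exact (intervalIntegral.integral_hasDerivAt_right (hc.intervalIntegrable _ _)
    (hc.stronglyMeasurableAtFilter _ _) hc.continuousAt).add_const _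

/-- squared gradient -/
noncomputable def gsq (q : E2 → ℝ) (x : E2) : ℝ := pd 0 q x ^ 2 + pd 1 q x ^ 2

lemma gsq_nonneg (q : E2 → ℝ) (x : E2) : 0 ≤ gsq q x := by unfold gsq; positivity

@[fun_prop]
lemma cont_gsq {q : E2 → ℝ} (hq : ContDiff ℝ (⊤ : ℕ∞) q) : Continuous (gsq q) := by
  unfold gsq
  exact ((cont_pd hq 0).pow 2).add ((cont_pd hq 1).pow 2)

lemma trig_cs (θ a b : ℝ) : (Real.cos θ * a + Real.sin θ * b) ^ 2 ≤ a ^ 2 + b ^ 2 := by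
  nlinarith [sq_nonneg (Real.cos θ * b - Real.sin θ * a), Real.sin_sq_add_cos_sq θ,
    mul_nonneg (sq_nonneg a) (sq_nonneg b)]

lemma trig_cs' (θ a b : ℝ) : (-Real.sin θ * a + Real.cos θ * b) ^ 2 ≤ a ^ 2 + b ^ 2 := by
  nlinarith [sq_nonneg (Real.cos θ * a + Real.sin θ * b), Real.sin_sq_add_cos_sq θ]

/-- angular derivative -/
noncomputable def angd (q : E2 → ℝ) (x0 : E2) (ρ θ : ℝ) : ℝ :=
  ρ * (-Real.sin θ * pd 0 q (pt x0 ρ θ) + Real.cos θ * pd 1 q (pt x0 ρ θ))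

lemma cont_angd {q : E2 → ℝ} (hq : ContDiff ℝ (⊤ : ℕ∞) q) (x0 : E2) (ρ : ℝ) : Continuous (angd q x0 ρ) := by
  have c0 := cont_pd hq 0
  have c1 := cont_pd hq 1
  unfold angd
  fun_prop

lemma angd_sq (q : E2 → ℝ) (x0 : E2) (ρ θ : ℝ) : angd q x0 ρ θ ^ 2 ≤ ρ ^ 2 * gsq q (pt x0 ρ θ) := by
  unfold angd gsq
  rw [mul_pow]
  exact mul_le_mul_of_nonneg_left (trig_cs' _ _ _) (sq_nonneg _)

lemma int_angd {q : E2 → ℝ} (hq : ContDiff ℝ (⊤ : ℕ∞) q) (x0 : E2) (ρ : ℝ) :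
    ∫ θ in (-Real.pi)..Real.pi, angd q x0 ρ θ = 0 := by
  rw [intervalIntegral.integral_eq_sub_of_hasDerivAt (f := fun θ => q (pt x0 ρ θ))]
  · have : pt x0 ρ Real.pi = pt x0 ρ (-Real.pi) := by
      rw [← pt_periodic x0 ρ (-Real.pi)]; congr 1; ring
    simp [this]
  · intro θ _; exact hasDerivAt_polar_theta q (cd_diff hq) x0 ρ θ
  · exact (cont_angd hq x0 ρ).intervalIntegrable _ _

lemma int_angd_sq {q : E2 → ℝ} (hq : ContDiff ℝ (⊤ : ℕ∞) q) (x0 : E2) (ρ : ℝ) :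
    ∫ θ in (-Real.pi)..Real.pi, angd q x0 ρ θ ^ 2 ≤ ρ ^ 2 * cir x0 (gsq q) ρ := by
  unfold cir
  rw [← intervalIntegral.integral_const_mul]
  apply intervalIntegral.integral_mono_on (by linarith [Real.pi_pos])
  · exact ((cont_angd hq x0 ρ).pow 2).intervalIntegrable _ _
  · exact ((cont_theta (cont_gsq hq) x0 ρ).const_mul _).intervalIntegrable _ _
  · intro θ _; exact angd_sq q x0 ρ θ

lemma wirt_circle {q : E2 → ℝ} (hq : ContDiff ℝ (⊤ : ℕ∞) q) (x0 : E2) (ρ : ℝ) :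
    ∃ c, ∫ θ in (-Real.pi)..Real.pi, (q (pt x0 ρ θ) - c) ^ 2 ≤ ∫ θ in (-Real.pi)..Real.pi, angd q x0 ρ θ ^ 2 := by
  apply wirtinger (fun θ => q (pt x0 ρ θ)) (angd q x0 ρ)
  · intro θ; exact hasDerivAt_polar_theta q (cd_diff hq) x0 ρ θ
  · exact cont_angd hq x0 ρ
  · intro θ; simp only [pt_periodic x0 ρ θ]
  · intro θ; simp only [angd, pt_periodic x0 ρ θ, Real.sin_add_two_pi, Real.cos_add_two_pi]

noncomputable def jac (q v : E2 → ℝ) (x : E2) : ℝ := pd 0 q x * pd 1 v x - pd 1 q x * pd 0 v x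

lemma cont_jac {q v : E2 → ℝ} (hq : ContDiff ℝ (⊤ : ℕ∞) q) (hv : ContDiff ℝ (⊤ : ℕ∞) v) : Continuous (jac q v) := by
  unfold jac
  exact ((cont_pd hq 0).mul (cont_pd hv 1)).sub ((cont_pd hq 1).mul (cont_pd hv 0))

lemma dsk_jac {q v : E2 → ℝ} (hq : ContDiff ℝ (⊤ : ℕ∞) q) (hv : ContDiff ℝ (⊤ : ℕ∞) v) (x0 : E2) (ρ : ℝ) :
    dsk x0 (jac q v) ρ = ∫ θ in (-Real.pi)..Real.pi, q (pt x0 ρ θ) * angd v x0 ρ θ := by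
  have h0 := contDiff_pd hv 0
  have h1 := contDiff_pd hv 1
  have := stokes (P := fun x => q x * pd 0 v x) (Q := fun x => q x * pd 1 v x)
    ((hq.mul h0).of_le (by simp)) ((hq.mul h1).of_le (by simp)) x0 ρ
  have e : (fun x => pd 0 (fun x => q x * pd 1 v x) x - pd 1 (fun x => q x * pd 0 v x) x) = jac q v := by
    ext x
    rw [pd_mul (cd_diff hq x) (cd_diff h1 x), pd_mul (cd_diff hq x) (cd_diff h0 x), pd_symm hv x]
    unfold jac; ring
  rw [e] at this
  rw [← this]
  congr 1; ext θ; unfold angd; ring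

lemma am_gm_int {f g : ℝ → ℝ} (hf : Continuous f) (hg : Continuous g) {s : ℝ} (hs : 0 < s) :
    ∫ θ in (-Real.pi)..Real.pi, f θ * g θ ≤
      1 / 2 * (s * (∫ θ in (-Real.pi)..Real.pi, f θ ^ 2) + (∫ θ in (-Real.pi)..Real.pi, g θ ^ 2) / s) := by
  have i1 : IntervalIntegrable (fun θ => s * f θ ^ 2) volume (-Real.pi) Real.pi :=
    (by fun_prop : Continuous fun θ => s * f θ ^ 2).intervalIntegrable _ _
  have i2 : IntervalIntegrable (fun θ => g θ ^ 2 / s) volume (-Real.pi) Real.pi :=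
    (by fun_prop : Continuous fun θ => g θ ^ 2 / s).intervalIntegrable _ _
  rw [← intervalIntegral.integral_const_mul, ← intervalIntegral.integral_div,
    ← intervalIntegral.integral_add i1 i2, ← intervalIntegral.integral_const_mul]
  apply intervalIntegral.integral_mono_on (by linarith [Real.pi_pos])
  · exact (hf.mul hg).intervalIntegrable _ _
  · exact (i1.add i2).const_mul _
  · intro θ _
    have : s * f θ ^ 2 + g θ ^ 2 / s - 2 * (f θ * g θ) = (s * f θ - g θ) ^ 2 / s := by field_simp; ring
    have h2 : 0 ≤ (s * f θ - g θ) ^ 2 / s := by positivity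
    linarith

lemma jac_bound_s {q v : E2 → ℝ} (hq : ContDiff ℝ (⊤ : ℕ∞) q) (hv : ContDiff ℝ (⊤ : ℕ∞) v) (x0 : E2) (ρ : ℝ)
    {s : ℝ} (hs : 0 < s) :
    dsk x0 (jac q v) ρ ≤ 1 / 2 * (s * cir x0 (fun x => q x ^ 2) ρ + ρ ^ 2 * cir x0 (gsq v) ρ / s) := by
  rw [dsk_jac hq hv]
  refine (am_gm_int (cont_theta hq.continuous x0 ρ) (cont_angd hv x0 ρ) hs).trans ?_
  have := int_angd_sq hv x0 ρ
  unfold cir at *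
  gcongr

lemma jac_bound {q v : E2 → ℝ} (hq : ContDiff ℝ (⊤ : ℕ∞) q) (hv : ContDiff ℝ (⊤ : ℕ∞) v) (x0 : E2) (ρ : ℝ) :
    dsk x0 (jac q v) ρ ≤ 1 / 2 * (ρ ^ 2 * cir x0 (gsq q) ρ + ρ ^ 2 * cir x0 (gsq v) ρ) := by
  rw [dsk_jac hq hv]
  obtain ⟨c, hc⟩ := wirt_circle hq x0 ρ
  have cq := cont_theta hq.continuous x0 ρ
  have cv := cont_angd hv x0 ρ
  have e : ∫ θ in (-Real.pi)..Real.pi, q (pt x0 ρ θ) * angd v x0 ρ θ =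
      ∫ θ in (-Real.pi)..Real.pi, (q (pt x0 ρ θ) - c) * angd v x0 ρ θ := by
    have e2 : ∀ θ, (q (pt x0 ρ θ) - c) * angd v x0 ρ θ = q (pt x0 ρ θ) * angd v x0 ρ θ - c * angd v x0 ρ θ := by
      intro θ; ring
    simp_rw [e2]
    have i1 : Continuous fun θ => q (pt x0 ρ θ) * angd v x0 ρ θ := cq.mul cv
    rw [intervalIntegral.integral_sub (i1.intervalIntegrable _ _) ((cv.const_mul c).intervalIntegrable _ _),
      intervalIntegral.integral_const_mul, int_angd hv]; ring
  rw [e]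
  have := am_gm_int (cq.sub (continuous_const (y := c))) cv one_pos
  have h1 := int_angd_sq hv x0 ρ
  have h2 := int_angd_sq hq x0 ρ
  simp only [div_one, one_mul] at this
  refine this.trans ?_
  gcongr
  exact hc.trans h2



/-- good radius -/
lemma good_radius {F : E2 → ℝ} (hF : Continuous F) (x0 : E2) {R Z : ℝ} (hR : 0 < R)
    (hF0 : ∀ x, 0 ≤ F x) (hZ : dsk x0 F (R / 2) < Z * R ^ 2) :
    ∃ ρ ∈ Icc (R / 4) (R / 2), cir x0 F ρ ≤ 32 * Z := by
  by_contra hcon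
  push Not at hcon
  have hc : Continuous (fun t => t * cir x0 F t) := continuous_id.mul (cont_cir hF x0)
  have h1 : dsk x0 F (R / 2) = dsk x0 F (R / 4) + ∫ t in (R/4)..(R/2), t * cir x0 F t := by
    unfold dsk
    rw [intervalIntegral.integral_add_adjacent_intervals (hc.intervalIntegrable _ _) (hc.intervalIntegrable _ _)]
  have h2 : 0 ≤ dsk x0 F (R / 4) := dsk_nonneg x0 (by positivity) (fun x _ => hF0 x)
  have hnn : 0 ≤ dsk x0 F (R / 2) := dsk_nonneg x0 (by positivity) (fun x _ => hF0 x)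
  have hZ0 : 0 < Z := by
    by_contra h
    push Not at h
    nlinarith [sq_nonneg R]
  have h3 : ∫ t in (R/4)..(R/2), (R / 4 * (32 * Z)) ≤ ∫ t in (R/4)..(R/2), t * cir x0 F t := by
    apply intervalIntegral.integral_mono_on (by linarith) (continuous_const.intervalIntegrable _ _) (hc.intervalIntegrable _ _)
    intro t ht
    have := hcon t ht
    have := ht.1
    nlinarith
  rw [intervalIntegral.integral_const] at h3
  simp only [smul_eq_mul] at h3
  nlinarith [sq_nonneg R]

lemma mean_growth {q : E2 → ℝ} (hq : ContDiff ℝ (⊤ : ℕ∞) q) {G : E2 → ℝ} (hG : Continuous G) (x0 : E2)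
    {R γ B X : ℝ} (hR : 0 < R) (hγ : 0 < γ) (hγ' : γ ≤ 1 / 3) (hB : 0 ≤ B)
    (hG0 : ∀ x, 0 ≤ G x) (hqG : ∀ x, gsq q x ≤ G x)
    (hode : ∀ ρ ∈ Ioc 0 R, γ * dsk x0 G ρ ≤ ρ * (ρ * cir x0 G ρ) + B * ρ ^ (2/3 : ℝ))
    (hX : 0 < X) (hXD : dsk x0 G R + 3 * B * R ^ (2/3 : ℝ) ≤ X) :
    q x0 ^ 2 ≤ cir x0 (fun x => q x ^ 2) R + 2 * (1 + 1 / γ) ^ 2 * X := by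
  set dm : ℝ → ℝ := fun ρ => ∫ θ in (-Real.pi)..Real.pi,
      (Real.cos θ * pd 0 q (pt x0 ρ θ) + Real.sin θ * pd 1 q (pt x0 ρ θ)) with hdm
  have c0 := cont_pd hq 0
  have c1 := cont_pd hq 1
  have pi := Real.pi_pos
  have pi3 := Real.pi_gt_three
  have key := ode_growth (dsk x0 G) (fun ρ => ρ * cir x0 G ρ) (fun ρ => cir x0 q ρ / (2 * Real.pi))
    (fun ρ => dm ρ / (2 * Real.pi)) R γ B X hR hγ hγ' hB
    (fun ρ _ => hasDerivAt_dsk hG x0 ρ) (fun ρ hρ => dsk_nonneg x0 hρ.1.le (fun x _ => hG0 x))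
    hode (fun ρ _ => (hasDerivAt_cir hq x0 ρ).div_const _) (by
      intro ρ hρ
      have cc : Continuous (fun θ => Real.cos θ * pd 0 q (pt x0 ρ θ) + Real.sin θ * pd 1 q (pt x0 ρ θ)) := by fun_prop
      have h1 := circ_cs _ cc
      have h2 : ∫ θ in (-Real.pi)..Real.pi, (Real.cos θ * pd 0 q (pt x0 ρ θ) + Real.sin θ * pd 1 q (pt x0 ρ θ)) ^ 2
          ≤ cir x0 G ρ := by
        apply intervalIntegral.integral_mono_on (by linarith) ((cc.pow 2).intervalIntegrable _ _)
          ((cont_theta hG x0 ρ).intervalIntegrable _ _)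
        intro θ _
        exact (trig_cs _ _ _).trans (hqG _)
      have h3 : (dm ρ / (2 * Real.pi)) ^ 2 ≤ cir x0 G ρ := by
        rw [div_pow, div_le_iff₀ (by positivity)]
        have : 0 ≤ cir x0 G ρ := cir_nonneg x0 hρ.1.le (fun x _ => hG0 x)
        calc dm ρ ^ 2 ≤ _ := h1
          _ ≤ 2 * Real.pi * cir x0 G ρ := by gcongr
          _ ≤ _ := by nlinarith [mul_nonneg this pi.le, mul_nonneg (mul_nonneg this pi.le) (by linarith : 0 ≤ Real.pi - 3)]
      exact mul_le_mul_of_nonneg_left h3 hρ.1.le) hX hXD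
  -- limit r → 0
  have lim : |cir x0 q R / (2 * Real.pi) - q x0| ≤ (1 + 1 / γ) * Real.sqrt X := by
    have hc : Continuous (fun r => |cir x0 q R / (2 * Real.pi) - cir x0 q r / (2 * Real.pi)|) := by
      have := cont_cir hq.continuous x0
      fun_prop
    have h0 : cir x0 q 0 / (2 * Real.pi) = q x0 := by
      simp only [cir, pt_zero, intervalIntegral.integral_const, smul_eq_mul]
      field_simp; ring
    rw [← h0]
    have ht : Filter.Tendsto (fun r => |cir x0 q R / (2 * Real.pi) - cir x0 q r / (2 * Real.pi)|)
      (nhdsWithin 0 (Ioi 0)) (nhds (|cir x0 q R / (2 * Real.pi) - cir x0 q 0 / (2 * Real.pi)|)) :=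
      (hc.tendsto 0).mono_left nhdsWithin_le_nhds
    refine le_of_tendsto ht ?_
    filter_upwards [Ioc_mem_nhdsGT hR] with r hr
    exact key r hr
  have h4 : (cir x0 q R / (2 * Real.pi)) ^ 2 ≤ cir x0 (fun x => q x ^ 2) R / 6 := by
    have := circ_cs _ (cont_theta hq.continuous x0 R)
    have h5 : 0 ≤ cir x0 (fun x => q x ^ 2) R := cir_nonneg x0 hR.le (fun x _ => sq_nonneg _)
    rw [div_pow, div_le_iff₀ (by positivity)]
    have e : (cir x0 q R) ^ 2 ≤ 2 * Real.pi * cir x0 (fun x => q x ^ 2) R := this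
    nlinarith [mul_nonneg h5 pi.le, mul_nonneg (mul_nonneg h5 pi.le) (by linarith : 0 ≤ Real.pi - 3)]
  have h6 : (cir x0 q R / (2 * Real.pi) - q x0) ^ 2 ≤ (1 + 1 / γ) ^ 2 * X := by
    rw [← sq_abs]
    calc |cir x0 q R / (2 * Real.pi) - q x0| ^ 2 ≤ ((1 + 1 / γ) * Real.sqrt X) ^ 2 := by gcongr
      _ = _ := by rw [mul_pow, Real.sq_sqrt hX.le]
  have h5 : 0 ≤ cir x0 (fun x => q x ^ 2) R := cir_nonneg x0 hR.le (fun x _ => sq_nonneg _)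
  nlinarith [sq_nonneg (2 * (cir x0 q R / (2 * Real.pi)) - q x0)]

lemma local_abs {q v H : E2 → ℝ} (hq : ContDiff ℝ (⊤ : ℕ∞) q) (hv : ContDiff ℝ (⊤ : ℕ∞) v) (hH : Continuous H)
    (x0 : E2) {R K K₁ B Y : ℝ} (hR : 0 < R) (hK : 6 ≤ K) (hK₁ : 0 ≤ K₁) (hB : 0 ≤ B)
    (hpt : ∀ x ∈ Metric.closedBall x0 R, gsq q x + gsq v x ≤ K * jac q v x + K₁ * H x)
    (hHB : ∀ ρ ∈ Ioc 0 R, dsk x0 H ρ ≤ B * ρ ^ (2/3 : ℝ))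
    (hY : 0 < Y) (hY1 : dsk x0 (fun x => q x ^ 2 + v x ^ 2) R < Y * R ^ 2) (hY2 : B * R ^ (2/3 : ℝ) ≤ Y) :
    q x0 ^ 2 + v x0 ^ 2 ≤ 4 * (16 + (1 + K / 2) ^ 2 * (16 * K ^ 2 + 11 * K₁)) * Y := by
  set G : E2 → ℝ := fun x => gsq q x + gsq v x with hGdef
  have hG : Continuous G := (cont_gsq hq).add (cont_gsq hv)
  have hG0 : ∀ x, 0 ≤ G x := fun x => add_nonneg (gsq_nonneg _ _) (gsq_nonneg _ _)
  have cq2 : Continuous (fun x => q x ^ 2) := hq.continuous.pow 2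
  have cv2 : Continuous (fun x => v x ^ 2) := hv.continuous.pow 2
  have cjac := cont_jac hq hv
  have hD : ∀ ρ ∈ Icc 0 R, dsk x0 G ρ ≤ K * dsk x0 (jac q v) ρ + K₁ * dsk x0 H ρ := by
    intro ρ hρ
    rw [← dsk_smul, ← dsk_smul, ← dsk_add (cjac.const_mul K) (hH.const_mul K₁)]
    apply dsk_mono hG (by fun_prop) x0 hρ.1
    intro x hx
    exact hpt x (Metric.closedBall_subset_closedBall hρ.2 hx)
  have hcirG : ∀ ρ, cir x0 G ρ = cir x0 (gsq q) ρ + cir x0 (gsq v) ρ := fun ρ => cir_add (cont_gsq hq) (cont_gsq hv) x0 ρ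
  have hmono : ∀ ρ ∈ Icc 0 R, ρ ^ (2/3 : ℝ) ≤ R ^ (2/3 : ℝ) := by
    intro ρ hρ
    exact Real.rpow_le_rpow hρ.1 hρ.2 (by norm_num)
  have hHB' : ∀ ρ ∈ Icc 0 R, dsk x0 H ρ ≤ Y := by
    intro ρ hρ
    rcases hρ.1.eq_or_lt with h | h
    · rw [← h, dsk_zero]; exact hY.le
    · refine (hHB ρ ⟨h, hρ.2⟩).trans (le_trans ?_ hY2)
      exact mul_le_mul_of_nonneg_left (hmono ρ hρ) hB
  -- Caccioppoli
  have hcac := caccioppoli_ode (dsk x0 G) (fun ρ => ρ * cir x0 G ρ) (cir x0 (fun x => q x ^ 2)) R (K / 2) (K₁ * Y) hR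
    (by linarith) (by positivity) (hasDerivAt_dsk hG x0) (continuous_id.mul (cont_cir hG x0)) (cont_cir cq2 x0)
    (dsk_zero _ _) (fun ρ hρ => cir_nonneg x0 hρ.1 (fun x _ => sq_nonneg _))
    (fun ρ hρ => mul_nonneg hρ.1 (cir_nonneg x0 hρ.1 (fun x _ => hG0 x)))
    (by
      intro ρ hρ s hs
      have h1 := hD ρ hρ
      have h2 := jac_bound_s hq hv x0 ρ hs
      have h3 := mul_le_mul_of_nonneg_left (hHB' ρ hρ) hK₁
      have h4 : cir x0 (gsq v) ρ ≤ cir x0 G ρ := by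
        rw [hcirG]
        have : 0 ≤ cir x0 (gsq q) ρ := cir_nonneg x0 hρ.1 (fun x _ => gsq_nonneg _ _)
        linarith
      have h5 : ρ ^ 2 * cir x0 (gsq v) ρ / s ≤ ρ * (ρ * cir x0 G ρ) / s := by
        rw [← mul_assoc, ← sq]; gcongr
      have h6 : K * dsk x0 (jac q v) ρ ≤ K * (1 / 2 * (s * cir x0 (fun x => q x ^ 2) ρ + ρ * (ρ * cir x0 G ρ) / s)) := by
        apply mul_le_mul_of_nonneg_left _ (by linarith)
        linarith
      calc dsk x0 G ρ ≤ _ := h1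
        _ ≤ _ := add_le_add h6 h3
        _ = _ := by ring)
  have hdq : dsk x0 (fun x => q x ^ 2) R ≤ Y * R ^ 2 := by
    rw [dsk_add cq2 cv2] at hY1
    have : 0 ≤ dsk x0 (fun x => v x ^ 2) R := dsk_nonneg x0 hR.le (fun x _ => sq_nonneg _)
    linarith
  have hDR : dsk x0 G (R / 2) ≤ (16 * K ^ 2 + 8 * K₁) * Y := by
    have e : (∫ ρ in (0:ℝ)..R, ρ * cir x0 (fun x => q x ^ 2) ρ) = dsk x0 (fun x => q x ^ 2) R := rfl
    rw [e] at hcac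
    have h1 : dsk x0 G (R / 2) * R ^ 2 ≤ ((16 * K ^ 2 + 8 * K₁) * Y) * R ^ 2 := by
      have := mul_le_mul_of_nonneg_left hdq (by positivity : 0 ≤ 64 * (K / 2) ^ 2)
      nlinarith
    exact le_of_mul_le_mul_right h1 (by positivity)
  -- good radius
  obtain ⟨ρ, hρ, hρc⟩ := good_radius (F := fun x => q x ^ 2 + v x ^ 2) (Z := Y) (cq2.add cv2) x0 hR
    (fun x => by positivity) ((dsk_mono_radius (cq2.add cv2) x0 (by positivity) (by linarith)
      (fun x _ => add_nonneg (sq_nonneg _) (sq_nonneg _))).trans_lt hY1)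
  have hρ0 : 0 < ρ := by have := hρ.1; linarith
  have hρR : ρ ≤ R := by have := hρ.2; linarith
  rw [cir_add cq2 cv2] at hρc
  have hDρ : dsk x0 G ρ ≤ (16 * K ^ 2 + 8 * K₁) * Y :=
    (dsk_mono_radius hG x0 hρ0.le hρ.2 (fun x _ => hG0 x)).trans hDR
  have hode : ∀ r ∈ Ioc 0 ρ, 2 / K * dsk x0 G r ≤ r * (r * cir x0 G r) + (K₁ * B) * r ^ (2/3 : ℝ) := by
    intro r hr
    have hr' : r ∈ Icc 0 R := ⟨hr.1.le, hr.2.trans hρR⟩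
    have h1 := hD r hr'
    have h2 := jac_bound hq hv x0 r
    have h3 := mul_le_mul_of_nonneg_left (hHB r ⟨hr.1, hr'.2⟩) hK₁
    have h4 : 0 ≤ K₁ * (B * r ^ (2/3:ℝ)) := by have := hr.1; positivity
    have h5 : dsk x0 G r ≤ K / 2 * (r * (r * cir x0 G r)) + K₁ * (B * r ^ (2/3:ℝ)) := by
      rw [hcirG]
      have := mul_le_mul_of_nonneg_left h2 (by linarith : 0 ≤ K)
      nlinarith
    rw [div_mul_eq_mul_div, div_le_iff₀ (by linarith)]
    nlinarith
  have hX : dsk x0 G ρ + 3 * (K₁ * B) * ρ ^ (2/3 : ℝ) ≤ (16 * K ^ 2 + 11 * K₁) * Y := by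
    have h1 : B * ρ ^ (2/3 : ℝ) ≤ Y := (mul_le_mul_of_nonneg_left (hmono ρ ⟨hρ0.le, hρR⟩) hB).trans hY2
    have := mul_le_mul_of_nonneg_left h1 hK₁
    nlinarith
  have hγ' : 2 / K ≤ 1 / 3 := by rw [div_le_div_iff₀ (by linarith) (by norm_num)]; linarith
  have hX0 : 0 < (16 * K ^ 2 + 11 * K₁) * Y := by
    have : 0 < K := by linarith
    positivity
  have r1 := mean_growth hq hG x0 (B := K₁ * B) hρ0 (by have : 0 < K := by linarith
                                                        positivity) hγ' (by positivity) hG0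
    (fun x => by simp only [hGdef]; linarith [gsq_nonneg v x]) hode hX0 hX
  have r2 := mean_growth hv hG x0 (B := K₁ * B) hρ0 (by have : 0 < K := by linarith
                                                        positivity) hγ' (by positivity) hG0
    (fun x => by simp only [hGdef]; linarith [gsq_nonneg q x]) hode hX0 hX
  have e : 1 / (2 / K) = K / 2 := by rw [one_div_div]
  rw [e] at r1 r2
  nlinarith



/-- squared conformal Killing defect of the field `(T0, T1)`. -/
noncomputable def ckd (T0 T1 : E2 → ℝ) (x : E2) : ℝ :=
  (pd 1 T0 x + pd 0 T1 x) ^ 2 + (pd 0 T0 x - pd 1 T1 x) ^ 2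

lemma cont_ckd {T0 T1 : E2 → ℝ} (h0 : ContDiff ℝ (⊤ : ℕ∞) T0) (h1 : ContDiff ℝ (⊤ : ℕ∞) T1) :
    Continuous (ckd T0 T1) := by
  have := cont_pd h0 0
  have := cont_pd h0 1
  have := cont_pd h1 0
  have := cont_pd h1 1
  unfold ckd; fun_prop

lemma ckd_nonneg (T0 T1 : E2 → ℝ) (x : E2) : 0 ≤ ckd T0 T1 x := by unfold ckd; positivity

lemma alg_point {a l L qx qy vx vy e1 e2 h : ℝ} (hl : 0 < l) (hla : l ≤ a) (haL : a ≤ L)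
    (h1 : vx = -a * qy + e1) (h2 : vy = a * qx + e2) (he : e1 ^ 2 + e2 ^ 2 = a ^ 2 * h) (hh : 0 ≤ h) :
    (qx ^ 2 + qy ^ 2) + (vx ^ 2 + vy ^ 2) ≤ (1 + 2 * L ^ 2) * (2 / l) * (qx * vy - qy * vx)
      + ((1 + 2 * L ^ 2) * (L / l) + 2 * L ^ 2) * h := by
  have ha : 0 < a := hl.trans_le hla
  set g := qx ^ 2 + qy ^ 2 with hg
  have hg0 : 0 ≤ g := by positivity
  have hJ : a / 2 * g ≤ (qx * vy - qy * vx) + a / 2 * h := by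
    have e : 2 * a * ((qx * vy - qy * vx) + a / 2 * h - a / 2 * g) = (a * qx + e2) ^ 2 + (a * qy - e1) ^ 2 := by
      rw [h1, h2, hg]; linear_combination (-1) * he
    have : 0 ≤ 2 * a * ((qx * vy - qy * vx) + a / 2 * h - a / 2 * g) := by rw [e]; positivity
    have := nonneg_of_mul_nonneg_right this (by positivity)
    linarith
  have hv : vx ^ 2 + vy ^ 2 ≤ 2 * L ^ 2 * (g + h) := by
    have : vx ^ 2 + vy ^ 2 ≤ 2 * a ^ 2 * (g + h) := by
      rw [h1, h2, hg]
      nlinarith [sq_nonneg (a * qy + e1), sq_nonneg (a * qx - e2)]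
    have h3 : a ^ 2 ≤ L ^ 2 := by gcongr
    nlinarith
  have hq : g ≤ (2 / l) * ((qx * vy - qy * vx) + L / 2 * h) := by
    rw [div_mul_eq_mul_div, le_div_iff₀ hl]
    nlinarith
  have hL : 0 ≤ 1 + 2 * L ^ 2 := by positivity
  have := mul_le_mul_of_nonneg_left hq hL
  calc g + (vx ^ 2 + vy ^ 2) ≤ (1 + 2 * L ^ 2) * g + 2 * L ^ 2 * h := by linarith
    _ ≤ (1 + 2 * L ^ 2) * ((2 / l) * ((qx * vy - qy * vx) + L / 2 * h)) + 2 * L ^ 2 * h := by linarith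
    _ = _ := by ring

noncomputable def KL (l L : ℝ) : ℝ := (1 + 2 * L ^ 2) * (2 / l)
noncomputable def KL1 (l L : ℝ) : ℝ := (1 + 2 * L ^ 2) * (L / l) + 2 * L ^ 2
noncomputable def CL (l L : ℝ) : ℝ :=
  4 / l ^ 2 * (4 * (16 + (1 + KL l L / 2) ^ 2 * (16 * KL l L ^ 2 + 11 * KL1 l L)) * (9 * (1 + L ^ 2)))

lemma CL_pos {l L : ℝ} (hl : 0 < l) (hL : 0 < L) : 0 < CL l L := by
  unfold CL KL KL1; positivity

lemma local_est {u a T0 T1 : E2 → ℝ} (hu : ContDiff ℝ (⊤ : ℕ∞) u) (ha : ContDiff ℝ (⊤ : ℕ∞) a)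
    (hT0 : ContDiff ℝ (⊤ : ℕ∞) T0) (hT1 : ContDiff ℝ (⊤ : ℕ∞) T1) (x0 : E2) {R l L B Y : ℝ} (hR : 0 < R)
    (hl : 0 < l) (hl1 : l ≤ 1) (hL : 1 ≤ L) (hB : 0 ≤ B)
    (hal : ∀ x ∈ Metric.closedBall x0 R, l ≤ a x) (haL : ∀ x ∈ Metric.closedBall x0 R, a x ≤ L)
    (hpde : ∀ x ∈ Metric.closedBall x0 R, a x * (pd 0 (pd 0 u) x + pd 1 (pd 1 u) x)
          + (pd 0 a x * pd 0 u x + pd 1 a x * pd 1 u x) = 0)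
    (hTa : ∀ x ∈ Metric.closedBall x0 R, T0 x * pd 0 a x + T1 x * pd 1 a x = 0)
    (hTu : ∀ x ∈ Metric.closedBall x0 R, T0 x ^ 2 + T1 x ^ 2 ≤ 9)
    (hTl : 1 / 4 ≤ T0 x0 ^ 2 + T1 x0 ^ 2)
    (hHB : ∀ ρ ∈ Ioc 0 R, dsk x0 (fun x => ckd T0 T1 x * gsq u x) ρ ≤ B * ρ ^ (2/3 : ℝ))
    (hY : 0 < Y) (hY1 : dsk x0 (gsq u) R < Y * R ^ 2) (hY2 : B * R ^ (2/3 : ℝ) ≤ Y) :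
    gsq u x0 ≤ CL l L * Y := by
  have u0 := contDiff_pd hu 0
  have u1 := contDiff_pd hu 1
  set q : E2 → ℝ := fun x => T0 x * pd 0 u x + T1 x * pd 1 u x with hqdef
  set w : E2 → ℝ := fun x => T1 x * pd 0 u x - T0 x * pd 1 u x with hwdef
  set v : E2 → ℝ := fun x => a x * w x with hvdef
  have hq : ContDiff ℝ (⊤ : ℕ∞) q := (hT0.mul u0).add (hT1.mul u1)
  have hw : ContDiff ℝ (⊤ : ℕ∞) w := (hT1.mul u0).sub (hT0.mul u1)
  have hv : ContDiff ℝ (⊤ : ℕ∞) v := ha.mul hw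
  have x0m : x0 ∈ Metric.closedBall x0 R := Metric.mem_closedBall_self hR.le
  have hH : Continuous (fun x => ckd T0 T1 x * gsq u x) := (cont_ckd hT0 hT1).mul (cont_gsq hu)
  have hpq : ∀ i x, pd i q x = T0 x * pd i (pd 0 u) x + pd 0 u x * pd i T0 x + (T1 x * pd i (pd 1 u) x + pd 1 u x * pd i T1 x) := by
    intro i x
    rw [hqdef, pd_add ((cd_diff (hT0.mul u0)) x) ((cd_diff (hT1.mul u1)) x), pd_mul (cd_diff hT0 x) (cd_diff u0 x),
      pd_mul (cd_diff hT1 x) (cd_diff u1 x)]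
  have hpv : ∀ i x, pd i v x = a x * (T1 x * pd i (pd 0 u) x + pd 0 u x * pd i T1 x - (T0 x * pd i (pd 1 u) x + pd 1 u x * pd i T0 x)) + w x * pd i a x := by
    intro i x
    rw [hvdef, pd_mul (cd_diff ha x) (cd_diff hw x), hwdef, pd_sub ((cd_diff (hT1.mul u0)) x) ((cd_diff (hT0.mul u1)) x), pd_mul (cd_diff hT1 x) (cd_diff u0 x),
      pd_mul (cd_diff hT0 x) (cd_diff u1 x)]
  have hK6 : 6 ≤ KL l L := by
    unfold KL
    rw [mul_div_assoc', le_div_iff₀ hl]; nlinarith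
  have hK1 : 0 ≤ KL1 l L := by unfold KL1; positivity
  have hpt : ∀ x ∈ Metric.closedBall x0 R, gsq q x + gsq v x ≤ KL l L * jac q v x + KL1 l L * (ckd T0 T1 x * gsq u x) := by
    intro x hx
    have e := hpde x hx
    have t := hTa x hx
    have sy := pd_symm hu x
    unfold gsq jac KL KL1
    refine alg_point (a := a x) (l := l) (L := L)
      (e1 := a x * ((pd 1 T0 x + pd 0 T1 x) * pd 0 u x - (pd 0 T0 x - pd 1 T1 x) * pd 1 u x))
      (e2 := -(a x * ((pd 0 T0 x - pd 1 T1 x) * pd 0 u x + (pd 1 T0 x + pd 0 T1 x) * pd 1 u x)))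
      hl (hal x hx) (haL x hx) ?_ ?_ ?_ ?_
    · rw [hpv, hpq]; simp only [hwdef, sy]
      linear_combination T1 x * e - pd 1 u x * t
    · rw [hpv, hpq]; simp only [hwdef, sy]
      linear_combination - T0 x * e + pd 0 u x * t
    · unfold ckd; ring
    · have := ckd_nonneg T0 T1 x
      positivity
  have hqv : ∀ x, q x ^ 2 + w x ^ 2 = (T0 x ^ 2 + T1 x ^ 2) * gsq u x := by
    intro x; simp only [hqdef, hwdef, gsq]; ring
  have cqv : Continuous fun x => q x ^ 2 + v x ^ 2 := (hq.continuous.pow 2).add (hv.continuous.pow 2)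
  have hup : dsk x0 (fun x => q x ^ 2 + v x ^ 2) R ≤ (9 * (1 + L ^ 2)) * dsk x0 (gsq u) R := by
    rw [← dsk_smul]
    apply dsk_mono cqv ((cont_gsq hu).const_mul _) x0 hR.le
    intro x hx
    have h1 := hqv x
    have h2 : v x ^ 2 ≤ L ^ 2 * w x ^ 2 := by
      simp only [hvdef, mul_pow]
      have := hal x hx
      have : a x ^ 2 ≤ L ^ 2 := by
        have := haL x hx
        gcongr
        linarith
      gcongr
    have h3 := mul_le_mul_of_nonneg_right (hTu x hx) (gsq_nonneg u x)
    have h4 : q x ^ 2 + w x ^ 2 ≤ 9 * gsq u x := by linarith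
    nlinarith [sq_nonneg L, sq_nonneg (q x), sq_nonneg (w x), mul_nonneg (sq_nonneg L) (sq_nonneg (q x))]
  have hc1 : 1 ≤ 9 * (1 + L ^ 2) := by nlinarith [sq_nonneg L]
  have main := local_abs hq hv hH x0 (Y := (9 * (1 + L ^ 2)) * Y) hR hK6 hK1 hB hpt hHB (by positivity)
    (by
      refine hup.trans_lt ?_
      have := mul_lt_mul_of_pos_left hY1 (by positivity : 0 < 9 * (1 + L ^ 2))
      linarith)
    (by nlinarith)
  have low : l ^ 2 / 4 * gsq u x0 ≤ q x0 ^ 2 + v x0 ^ 2 := by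
    have h1 := hqv x0
    have h2 : l ^ 2 * w x0 ^ 2 ≤ v x0 ^ 2 := by
      simp only [hvdef, mul_pow]
      have := hal x0 x0m
      gcongr
    have h3 : 1 / 4 * gsq u x0 ≤ q x0 ^ 2 + w x0 ^ 2 := by
      rw [h1]; exact mul_le_mul_of_nonneg_right hTl (gsq_nonneg u x0)
    have h4 : l ^ 2 ≤ 1 := by nlinarith
    nlinarith [sq_nonneg (q x0), mul_nonneg (sub_nonneg.2 h4) (sq_nonneg (q x0)), mul_le_mul_of_nonneg_left h3 (sq_nonneg l)]
  have h5 := low.trans main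
  have h6 : gsq u x0 = 4 / l ^ 2 * (l ^ 2 / 4 * gsq u x0) := by field_simp
  rw [h6]
  refine (mul_le_mul_of_nonneg_left h5 (by positivity)).trans (le_of_eq ?_)
  unfold CL; ring



lemma dist_vec_sq (a b : ℝ) (x : E2) : dist (vec a b) x ^ 2 = (a - x 0) ^ 2 + (b - x 1) ^ 2 := by
  rw [dist_eq_norm, norm_sq_E2]
  simp [vec_zero, vec_one]

lemma meas_ball2 (x0 : E2) (ρ : ℝ) : MeasurableSet {p : ℝ × ℝ | dist (vec p.1 p.2) x0 < ρ} := by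
  apply IsOpen.measurableSet
  exact isOpen_lt (continuous_vec.dist continuous_const) continuous_const

lemma dsk_eq {G : E2 → ℝ} (hG : Continuous G) (x0 : E2) {ρ : ℝ} (hρ : 0 ≤ ρ) :
    dsk x0 G ρ = ∫ p in {p : ℝ × ℝ | dist (vec p.1 p.2) x0 < ρ}, G (vec p.1 p.2) := by
  set S := {p : ℝ × ℝ | dist (vec p.1 p.2) x0 < ρ} with hS
  have pi := Real.pi_pos
  rw [← integral_indicator (meas_ball2 x0 ρ)]
  set f := S.indicator (fun p : ℝ × ℝ => G (vec p.1 p.2)) with hf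
  rw [← integral_add_right_eq_self f ((x0 0, x0 1) : ℝ × ℝ)]
  rw [← integral_comp_polarCoord_symm (fun p => f (p + (x0 0, x0 1)))]
  have e1 : ∀ p ∈ polarCoord.target, p.1 • f (polarCoord.symm p + (x0 0, x0 1)) =
      (Iio ρ ×ˢ (univ : Set ℝ)).indicator (fun p : ℝ × ℝ => p.1 * G (pt x0 p.1 p.2)) p := by
    rintro ⟨r, θ⟩ hp
    simp only [polarCoord_target, mem_prod, mem_Ioi, mem_Ioo] at hp
    have hv : vec (r * Real.cos θ + x0 0) (r * Real.sin θ + x0 1) = pt x0 r θ := by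
      ext i; fin_cases i <;> simp [pt, vec] <;> ring
    have hmem : (polarCoord.symm (r, θ) + (x0 0, x0 1)) ∈ S ↔ r < ρ := by
      simp only [hS, polarCoord_symm_apply, mem_setOf_eq, Prod.mk_add_mk, hv, dist_pt, abs_of_pos hp.1]
    by_cases h : r < ρ
    · rw [hf, indicator_of_mem (hmem.2 h), indicator_of_mem (by simp [h])]
      simp only [polarCoord_symm_apply, Prod.mk_add_mk, hv, smul_eq_mul]
    · rw [hf, indicator_of_notMem (fun h' => h (hmem.1 h')), indicator_of_notMem (by simpa using h)]
      simp
  rw [setIntegral_congr_fun polarCoord.open_target.measurableSet e1]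
  rw [setIntegral_indicator (measurableSet_Iio.prod MeasurableSet.univ)]
  have e2 : polarCoord.target ∩ Iio ρ ×ˢ (univ : Set ℝ) = Ioo 0 ρ ×ˢ Ioo (-Real.pi) Real.pi := by
    rw [polarCoord_target, prod_inter_prod, inter_univ]; rfl
  have hc : Continuous (fun p : ℝ × ℝ => p.1 * G (pt x0 p.1 p.2)) := by fun_prop
  have hint : IntegrableOn (fun p : ℝ × ℝ => p.1 * G (pt x0 p.1 p.2)) (Ioo 0 ρ ×ˢ Ioo (-Real.pi) Real.pi) := by
    have : IntegrableOn (fun p : ℝ × ℝ => p.1 * G (pt x0 p.1 p.2)) (Icc 0 ρ ×ˢ Icc (-Real.pi) Real.pi) :=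
      hc.continuousOn.integrableOn_compact (isCompact_Icc.prod isCompact_Icc)
    exact this.mono_set (prod_mono Ioo_subset_Icc_self Ioo_subset_Icc_self)
  rw [e2, Measure.volume_eq_prod, setIntegral_prod _ hint]
  unfold dsk cir
  rw [intervalIntegral.integral_of_le hρ, integral_Ioc_eq_integral_Ioo]
  congr 1; ext r
  simp only
  rw [integral_const_mul, intervalIntegral.integral_of_le (by linarith), integral_Ioc_eq_integral_Ioo]

lemma bdd_ball2 (x0 : E2) (ρ : ℝ) : {p : ℝ × ℝ | dist (vec p.1 p.2) x0 < ρ} ⊆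
    Icc (x0 0 - ρ) (x0 0 + ρ) ×ˢ Icc (x0 1 - ρ) (x0 1 + ρ) := by
  rintro ⟨a, b⟩ h
  simp only [mem_setOf_eq] at h
  have hd := dist_vec_sq a b x0
  have h0 : 0 ≤ dist (vec a b) x0 := dist_nonneg
  have hρ : 0 ≤ ρ := h0.trans h.le
  have h2 : dist (vec a b) x0 ^ 2 ≤ ρ ^ 2 := by gcongr
  have ha : |a - x0 0| ≤ ρ := abs_le_of_sq_le_sq (by nlinarith [sq_nonneg (b - x0 1)]) hρ
  have hb : |b - x0 1| ≤ ρ := abs_le_of_sq_le_sq (by nlinarith [sq_nonneg (a - x0 0)]) hρ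
  rw [abs_le] at ha hb
  simp only [mem_prod, mem_Icc]
  refine ⟨⟨?_, ?_⟩, ?_, ?_⟩ <;> linarith [ha.1, ha.2, hb.1, hb.2]

lemma int_ball2 {G : E2 → ℝ} (hG : Continuous G) (x0 : E2) (ρ : ℝ) :
    IntegrableOn (fun p : ℝ × ℝ => G (vec p.1 p.2)) {p : ℝ × ℝ | dist (vec p.1 p.2) x0 < ρ} := by
  have hc : Continuous (fun p : ℝ × ℝ => G (vec p.1 p.2)) := hG.comp continuous_vec
  have : IntegrableOn (fun p : ℝ × ℝ => G (vec p.1 p.2)) (Icc (x0 0 - ρ) (x0 0 + ρ) ×ˢ Icc (x0 1 - ρ) (x0 1 + ρ)) :=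
    hc.continuousOn.integrableOn_compact (isCompact_Icc.prod isCompact_Icc)
  exact this.mono_set (bdd_ball2 x0 ρ)

/-- comparison of disk integrals -/
lemma dsk_comp {G : E2 → ℝ} (hG : Continuous G) (hG0 : ∀ x, 0 ≤ G x) {x0 x1 : E2} {ρ r : ℝ} (hρ : 0 ≤ ρ)
    (h : dist x0 x1 + ρ ≤ r) : dsk x0 G ρ ≤ dsk x1 G r := by
  have hr : 0 ≤ r := (add_nonneg dist_nonneg hρ).trans h
  rw [dsk_eq hG x0 hρ, dsk_eq hG x1 hr]
  apply setIntegral_mono_set (int_ball2 hG x1 r)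
  · exact Filter.Eventually.of_forall fun p => hG0 _
  · apply HasSubset.Subset.eventuallyLE
    intro p hp
    simp only [mem_setOf_eq] at hp ⊢
    linarith [dist_triangle (vec p.1 p.2) x0 x1]



lemma dsk_congr {F G : E2 → ℝ} (hF : Continuous F) (hG : Continuous G) (x0 : E2) {ρ : ℝ} (h0 : 0 ≤ ρ)
    (h : ∀ x ∈ Metric.closedBall x0 ρ, F x = G x) : dsk x0 F ρ = dsk x0 G ρ :=
  le_antisymm (dsk_mono hF hG x0 h0 fun x hx => (h x hx).le) (dsk_mono hG hF x0 h0 fun x hx => (h x hx).ge)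

lemma pd_sub_const (u : E2 → ℝ) (c : ℝ) (i : Fin 2) (x : E2) : pd i (fun y => u y - c) x = pd i u x := by
  unfold pd; rw [fderiv_sub_const]

lemma cir_const (x0 : E2) (c ρ : ℝ) : cir x0 (fun _ => c) ρ = 2 * Real.pi * c := by
  simp only [cir, intervalIntegral.integral_const, smul_eq_mul]; ring

lemma dsk_const (x0 : E2) (c ρ : ℝ) : dsk x0 (fun _ => c) ρ = Real.pi * c * ρ ^ 2 := by
  unfold dsk
  simp only [cir_const]
  rw [intervalIntegral.integral_mul_const, integral_id]; ring

/-- radial derivative -/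
noncomputable def rad (u : E2 → ℝ) (x0 : E2) (ρ θ : ℝ) : ℝ :=
  Real.cos θ * pd 0 u (pt x0 ρ θ) + Real.sin θ * pd 1 u (pt x0 ρ θ)

lemma cont_rad {q : E2 → ℝ} (hq : ContDiff ℝ (⊤ : ℕ∞) q) (x0 : E2) (ρ : ℝ) : Continuous (rad q x0 ρ) := by
  have c0 := cont_pd hq 0
  have c1 := cont_pd hq 1
  unfold rad
  fun_prop

lemma rad_angd (q : E2 → ℝ) (x0 : E2) (ρ θ : ℝ) :
    ρ ^ 2 * rad q x0 ρ θ ^ 2 + angd q x0 ρ θ ^ 2 = ρ ^ 2 * gsq q (pt x0 ρ θ) := by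
  unfold rad angd gsq
  linear_combination (ρ ^ 2 * (pd 0 q (pt x0 ρ θ) ^ 2 + pd 1 q (pt x0 ρ θ) ^ 2)) * Real.sin_sq_add_cos_sq θ

lemma rad_sq (q : E2 → ℝ) (x0 : E2) (ρ θ : ℝ) : rad q x0 ρ θ ^ 2 ≤ gsq q (pt x0 ρ θ) := trig_cs _ _ _

lemma energy_id {u a : E2 → ℝ} (hu : ContDiff ℝ (⊤ : ℕ∞) u) (ha : ContDiff ℝ (⊤ : ℕ∞) a) (x0 : E2) {R : ℝ}
    (hpde : ∀ x ∈ Metric.closedBall x0 R, a x * (pd 0 (pd 0 u) x + pd 1 (pd 1 u) x)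
          + (pd 0 a x * pd 0 u x + pd 1 a x * pd 1 u x) = 0) (c : ℝ) {ρ : ℝ} (h0 : 0 ≤ ρ) (hρ : ρ ≤ R) :
    dsk x0 (fun x => a x * gsq u x) ρ =
      ∫ θ in (-Real.pi)..Real.pi, (u (pt x0 ρ θ) - c) * (ρ * (a (pt x0 ρ θ) * rad u x0 ρ θ)) := by
  have u0 := contDiff_pd hu 0
  have u1 := contDiff_pd hu 1
  have huc : ContDiff ℝ (⊤ : ℕ∞) (fun x => u x - c) := hu.sub contDiff_const
  have f0 : ContDiff ℝ (⊤ : ℕ∞) (fun x => a x * pd 0 u x) := ha.mul u0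
  have f1 : ContDiff ℝ (⊤ : ℕ∞) (fun x => -1 * (a x * pd 1 u x)) := contDiff_const.mul (ha.mul u1)
  have hQ : ContDiff ℝ (⊤ : ℕ∞) (fun x => (u x - c) * (a x * pd 0 u x)) := huc.mul f0
  have hP : ContDiff ℝ (⊤ : ℕ∞) (fun x => (u x - c) * (-1 * (a x * pd 1 u x))) := huc.mul f1
  have hs := stokes (hP.of_le (by simp)) (hQ.of_le (by simp)) x0 ρ
  have cg := cont_gsq hu
  have e : dsk x0 (fun x => a x * gsq u x) ρ = dsk x0 (fun x => pd 0 (fun x => (u x - c) * (a x * pd 0 u x)) x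
      - pd 1 (fun x => (u x - c) * (-1 * (a x * pd 1 u x))) x) ρ := by
    apply dsk_congr (ha.continuous.mul cg) ((cont_pd hQ 0).sub (cont_pd hP 1)) x0 h0
    intro x hx
    have hp := hpde x (Metric.closedBall_subset_closedBall hρ hx)
    show a x * gsq u x = pd 0 (fun x => (u x - c) * (a x * pd 0 u x)) x
      - pd 1 (fun x => (u x - c) * (-1 * (a x * pd 1 u x))) x
    rw [pd_mul (cd_diff huc x) (cd_diff f0 x), pd_mul (cd_diff huc x) (cd_diff f1 x), pd_sub_const, pd_sub_const,
      pd_mul (cd_diff ha x) (cd_diff u0 x), pd_mul (differentiableAt_const (-1 : ℝ)) (cd_diff (ha.mul u1) x),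
      pd_mul (cd_diff ha x) (cd_diff u1 x)]
    have : pd 1 (fun _ : E2 => (-1 : ℝ)) x = 0 := by simp [pd]
    rw [this]
    unfold gsq
    linear_combination (-(u x - c)) * hp
  rw [e, ← hs]
  congr 1; ext θ; unfold rad; ring

/-- Caccioppoli inequality for `u`. -/
lemma caccioppoli_u {u a : E2 → ℝ} (hu : ContDiff ℝ (⊤ : ℕ∞) u) (ha : ContDiff ℝ (⊤ : ℕ∞) a) (x0 : E2) {R l L m : ℝ}
    (hR : 0 < R) (hl : 0 < l) (hL : 1 ≤ L)
    (hal : ∀ x ∈ Metric.closedBall x0 R, l ≤ a x) (haL : ∀ x ∈ Metric.closedBall x0 R, a x ≤ L)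
    (hpde : ∀ x ∈ Metric.closedBall x0 R, a x * (pd 0 (pd 0 u) x + pd 1 (pd 1 u) x)
          + (pd 0 a x * pd 0 u x + pd 1 a x * pd 1 u x) = 0)
    (hm : ∀ x ∈ Metric.closedBall x0 R, |u x| ≤ m) :
    dsk x0 (gsq u) (R / 2) ≤ 64 * L ^ 4 / l ^ 2 * m ^ 2 := by
  have cg := cont_gsq hu
  have cu2 : Continuous (fun x => u x ^ 2) := hu.continuous.pow 2
  have hcac := caccioppoli_ode (dsk x0 (gsq u)) (fun ρ => ρ * cir x0 (gsq u) ρ) (cir x0 (fun x => u x ^ 2)) R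
    (L ^ 2 / (2 * l)) 0 hR (by positivity) le_rfl (hasDerivAt_dsk cg x0) (continuous_id.mul (cont_cir cg x0))
    (cont_cir cu2 x0) (dsk_zero _ _) (fun ρ hρ => cir_nonneg x0 hρ.1 (fun x _ => sq_nonneg _))
    (fun ρ hρ => mul_nonneg hρ.1 (cir_nonneg x0 hρ.1 (fun x _ => gsq_nonneg _ _)))
    (by
      intro ρ hρ s hs
      have h1 : l * dsk x0 (gsq u) ρ ≤ dsk x0 (fun x => a x * gsq u x) ρ := by
        rw [← dsk_smul]
        apply dsk_mono (cg.const_mul l) (ha.continuous.mul cg) x0 hρ.1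
        intro x hx
        exact mul_le_mul_of_nonneg_right (hal x (Metric.closedBall_subset_closedBall hρ.2 hx)) (gsq_nonneg _ _)
      rw [energy_id hu ha x0 hpde 0 hρ.1 hρ.2] at h1
      have ca := cont_theta ha.continuous x0 ρ
      have cr := cont_rad hu x0 ρ
      have ch : Continuous (fun θ => ρ * (a (pt x0 ρ θ) * rad u x0 ρ θ)) := by fun_prop
      have h2 := am_gm_int (f := fun θ => u (pt x0 ρ θ) - 0) ((cont_theta hu.continuous x0 ρ).sub continuous_const) ch hs
      have h3 : ∫ θ in (-Real.pi)..Real.pi, (ρ * (a (pt x0 ρ θ) * rad u x0 ρ θ)) ^ 2 ≤ L ^ 2 * ρ ^ 2 * cir x0 (gsq u) ρ := by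
        unfold cir
        rw [← intervalIntegral.integral_const_mul]
        apply intervalIntegral.integral_mono_on (by linarith [Real.pi_pos]) ((ch.pow 2).intervalIntegrable _ _)
          (((cont_theta cg x0 ρ).const_mul _).intervalIntegrable _ _)
        intro θ _
        have hx := pt_mem x0 θ hρ.1 hρ.2
        have g := rad_sq u x0 ρ θ
        have a1 := hal _ hx
        have a2 := haL _ hx
        have a3 : a (pt x0 ρ θ) ^ 2 ≤ L ^ 2 := by gcongr; linarith
        calc (ρ * (a (pt x0 ρ θ) * rad u x0 ρ θ)) ^ 2 = a (pt x0 ρ θ) ^ 2 * ρ ^ 2 * rad u x0 ρ θ ^ 2 := by ring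
          _ ≤ _ := by gcongr
      have h4 : (∫ θ in (-Real.pi)..Real.pi, (u (pt x0 ρ θ) - 0) ^ 2) = cir x0 (fun x => u x ^ 2) ρ := by
        simp [cir]
      rw [h4] at h2
      have hJ : 0 ≤ cir x0 (fun x => u x ^ 2) ρ := cir_nonneg x0 hρ.1 (fun x _ => sq_nonneg _)
      have h5 : (∫ θ in (-Real.pi)..Real.pi, (ρ * (a (pt x0 ρ θ) * rad u x0 ρ θ)) ^ 2) / s ≤ L ^ 2 * (ρ * (ρ * cir x0 (gsq u) ρ) / s) := by
        rw [mul_div_assoc']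
        gcongr
        linarith
      have h6 : l * dsk x0 (gsq u) ρ ≤ 1 / 2 * (L ^ 2 * (s * cir x0 (fun x => u x ^ 2) ρ + ρ * (ρ * cir x0 (gsq u) ρ) / s)) := by
        have : s * cir x0 (fun x => u x ^ 2) ρ ≤ L ^ 2 * (s * cir x0 (fun x => u x ^ 2) ρ) := by
          have : 0 ≤ s * cir x0 (fun x => u x ^ 2) ρ := by positivity
          have : 1 ≤ L ^ 2 := by nlinarith
          nlinarith
        linarith
      rw [add_zero, div_mul_eq_mul_div, le_div_iff₀ (by positivity)]
      linarith)
  have e : (∫ ρ in (0:ℝ)..R, ρ * cir x0 (fun x => u x ^ 2) ρ) = dsk x0 (fun x => u x ^ 2) R := rfl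
  rw [e] at hcac
  have h1 : dsk x0 (fun x => u x ^ 2) R ≤ Real.pi * m ^ 2 * R ^ 2 := by
    rw [← dsk_const x0]
    apply dsk_mono cu2 continuous_const x0 hR.le
    intro x hx
    rw [← sq_abs]
    have := hm x hx
    gcongr
  have hpi := Real.pi_lt_d2
  have h2 : dsk x0 (gsq u) (R / 2) * R ^ 2 ≤ (64 * L ^ 4 / l ^ 2 * m ^ 2) * R ^ 2 := by
    have h3 : dsk x0 (fun x => u x ^ 2) R ≤ 4 * m ^ 2 * R ^ 2 := by
      refine h1.trans ?_
      gcongr; linarith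
    have := mul_le_mul_of_nonneg_left h3 (by positivity : 0 ≤ 64 * (L ^ 2 / (2 * l)) ^ 2)
    calc _ ≤ _ := hcac
      _ ≤ 64 * (L ^ 2 / (2 * l)) ^ 2 * (4 * m ^ 2 * R ^ 2) := by linarith
      _ = _ := by field_simp; ring
  exact le_of_mul_le_mul_right h2 (by positivity)

/-- sharp decay of the energy for coefficients radial about `c`. -/
lemma radial_decay {u a : E2 → ℝ} (hu : ContDiff ℝ (⊤ : ℕ∞) u) (ha : ContDiff ℝ (⊤ : ℕ∞) a) (c : E2) {R : ℝ}
    (hpos : ∀ x ∈ Metric.closedBall c R, 0 < a x)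
    (hpde : ∀ x ∈ Metric.closedBall c R, a x * (pd 0 (pd 0 u) x + pd 1 (pd 1 u) x)
          + (pd 0 a x * pd 0 u x + pd 1 a x * pd 1 u x) = 0)
    (hX : ∀ x ∈ Metric.closedBall c R, -(x 1 - c 1) * pd 0 a x + (x 0 - c 0) * pd 1 a x = 0)
    {r : ℝ} (hr : 0 < r) (hrR : r ≤ R) :
    dsk c (fun x => a x * gsq u x) r * R ^ 2 ≤ dsk c (fun x => a x * gsq u x) R * r ^ 2 := by
  have cg := cont_gsq hu
  have cG : Continuous (fun x => a x * gsq u x) := ha.continuous.mul cg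
  set A := dsk c (fun x => a x * gsq u x) with hA
  have hode : ∀ ρ ∈ Icc r R, 2 * A ρ ≤ ρ * (ρ * cir c (fun x => a x * gsq u x) ρ) := by
    intro ρ hρ
    have hρ0 : 0 < ρ := hr.trans_le hρ.1
    set α := a (pt c ρ 0) with hα
    have hα0 : 0 < α := hpos _ (pt_mem c 0 hρ0.le hρ.2)
    have hconst : ∀ θ, a (pt c ρ θ) = α := by
      intro θ
      apply is_const_of_deriv_eq_zero (f := fun θ => a (pt c ρ θ))
      · intro t; exact (hasDerivAt_polar_theta a (cd_diff ha) c ρ t).differentiableAt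
      · intro t
        rw [(hasDerivAt_polar_theta a (cd_diff ha) c ρ t).deriv]
        have := hX _ (pt_mem c t hρ0.le hρ.2)
        have e0 : (pt c ρ t) 0 - c 0 = ρ * Real.cos t := by simp [pt, vec_zero]
        have e1 : (pt c ρ t) 1 - c 1 = ρ * Real.sin t := by simp [pt, vec_one]
        rw [e0, e1] at this
        linarith
    obtain ⟨k, hk⟩ := wirt_circle hu c ρ
    have e1 := energy_id hu ha c hpde k hρ0.le hρ.2
    have cr := cont_rad hu c ρ
    have cu := cont_theta hu.continuous c ρ
    have e2 : A ρ = α * ∫ θ in (-Real.pi)..Real.pi, (u (pt c ρ θ) - k) * (ρ * rad u c ρ θ) := by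
      rw [hA, e1, ← intervalIntegral.integral_const_mul]
      congr 1; ext θ; rw [hconst θ]; ring
    have e3 := am_gm_int (f := fun θ => u (pt c ρ θ) - k) (g := fun θ => ρ * rad u c ρ θ) (by fun_prop) (by fun_prop) one_pos
    have e4 : cir c (fun x => a x * gsq u x) ρ = α * cir c (gsq u) ρ := by
      unfold cir; rw [← intervalIntegral.integral_const_mul]
      congr 1; ext θ; simp only [hconst θ]
    have ci : Continuous (fun θ => (ρ * rad u c ρ θ) ^ 2) := by fun_prop
    have ci2 : Continuous (fun θ => angd u c ρ θ ^ 2) := (cont_angd hu c ρ).pow 2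
    have e5 : (∫ θ in (-Real.pi)..Real.pi, (ρ * rad u c ρ θ) ^ 2) + (∫ θ in (-Real.pi)..Real.pi, angd u c ρ θ ^ 2)
        = ρ ^ 2 * cir c (gsq u) ρ := by
      unfold cir
      rw [← intervalIntegral.integral_const_mul, ← intervalIntegral.integral_add (ci.intervalIntegrable _ _)
        (ci2.intervalIntegrable _ _)]
      congr 1; ext θ; rw [← rad_angd]; simp only [mul_pow]
    have e6 : (∫ θ in (-Real.pi)..Real.pi, (u (pt c ρ θ) - k) * (ρ * rad u c ρ θ)) ≤ 1 / 2 * (ρ ^ 2 * cir c (gsq u) ρ) := by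
      rw [← e5]
      simp only [one_mul, div_one] at e3
      linarith
    have := mul_le_mul_of_nonneg_left e6 hα0.le
    rw [e2, e4]
    linarith
  have hdA : ∀ ρ, HasDerivAt A (ρ * cir c (fun x => a x * gsq u x) ρ) ρ := fun ρ => hasDerivAt_dsk cG c ρ
  have hder : ∀ ρ ∈ Icc r R, HasDerivAt (fun t => A t / t ^ 2)
      ((ρ * cir c (fun x => a x * gsq u x) ρ * ρ ^ 2 - A ρ * (2 * ρ)) / (ρ ^ 2) ^ 2) ρ := by
    intro ρ hρ
    have hρ0 : 0 < ρ := hr.trans_le hρ.1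
    have := (hdA ρ).div (hasDerivAt_pow 2 ρ) (by positivity)
    refine this.congr_deriv ?_
    norm_num
  have hmono : MonotoneOn (fun t => A t / t ^ 2) (Icc r R) := by
    apply monotoneOn_of_deriv_nonneg (convex_Icc r R)
    · intro ρ hρ; exact (hder ρ hρ).continuousAt.continuousWithinAt
    · intro ρ hρ; exact (hder ρ (interior_subset hρ)).differentiableAt.differentiableWithinAt
    · intro ρ hρ
      have hρ' := interior_subset hρ
      rw [(hder ρ hρ').deriv]
      have hρ0 : 0 < ρ := hr.trans_le hρ'.1
      have := hode ρ hρ'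
      apply div_nonneg _ (by positivity)
      nlinarith
  have := hmono (left_mem_Icc.2 hrR) (right_mem_Icc.2 hrR) hrR
  simp only at this
  have hR0 : 0 < R := hr.trans_le hrR
  rwa [div_le_div_iff₀ (by positivity) (by positivity)] at this



lemma hasFDerivAt_coord (i : Fin 2) (x : E2) : HasFDerivAt (fun y : E2 => y i) (EuclideanSpace.proj (𝕜 := ℝ) i : E2 →L[ℝ] ℝ) x :=
  (EuclideanSpace.proj (𝕜 := ℝ) i : E2 →L[ℝ] ℝ).hasFDerivAt

lemma contDiff_coord (i : Fin 2) : ContDiff ℝ (⊤ : ℕ∞) (fun y : E2 => y i) :=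
  (EuclideanSpace.proj (𝕜 := ℝ) i : E2 →L[ℝ] ℝ).contDiff

lemma pd_coord (i j : Fin 2) (x : E2) : pd i (fun y : E2 => y j) x = if i = j then 1 else 0 := by
  unfold pd
  rw [(hasFDerivAt_coord j x).fderiv]
  fin_cases i <;> fin_cases j <;> simp

lemma pd_const (i : Fin 2) (c : ℝ) (x : E2) : pd i (fun _ : E2 => c) x = 0 := by simp [pd]

lemma dist_sq_E2 (x y : E2) : dist x y ^ 2 = (x 0 - y 0) ^ 2 + (x 1 - y 1) ^ 2 := by
  rw [dist_eq_norm, norm_sq_E2]; simp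

noncomputable def YC (l L : ℝ) : ℝ := 256 * 65 * L ^ 5 / l ^ 3

/-- rotation field, generic radius -/
lemma rot_est {u a : E2 → ℝ} (hu : ContDiff ℝ (⊤ : ℕ∞) u) (ha : ContDiff ℝ (⊤ : ℕ∞) a) (c y0 : E2) {r Y l L : ℝ}
    (hr : 0 < r) (hl : 0 < l) (hl1 : l ≤ 1) (hL : 1 ≤ L)
    (hal : ∀ x ∈ Metric.closedBall y0 r, l ≤ a x) (haL : ∀ x ∈ Metric.closedBall y0 r, a x ≤ L)
    (hpde : ∀ x ∈ Metric.closedBall y0 r, a x * (pd 0 (pd 0 u) x + pd 1 (pd 1 u) x)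
          + (pd 0 a x * pd 0 u x + pd 1 a x * pd 1 u x) = 0)
    (hX : ∀ x ∈ Metric.closedBall y0 r, -(x 1 - c 1) * pd 0 a x + (x 0 - c 0) * pd 1 a x = 0)
    (hrc : r ≤ dist y0 c / 2) (hY : 0 < Y) (hY1 : dsk y0 (gsq u) r < Y * r ^ 2) :
    gsq u y0 ≤ CL l L * Y := by
  set r0 := dist y0 c with hr0
  have hr0p : 0 < r0 := by linarith
  set T0 : E2 → ℝ := fun x => (-1 / r0) * (x 1 - c 1) with hT0d
  set T1 : E2 → ℝ := fun x => (1 / r0) * (x 0 - c 0) with hT1d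
  have s0 : ContDiff ℝ (⊤ : ℕ∞) (fun x : E2 => x 0 - c 0) := (contDiff_coord 0).sub contDiff_const
  have s1 : ContDiff ℝ (⊤ : ℕ∞) (fun x : E2 => x 1 - c 1) := (contDiff_coord 1).sub contDiff_const
  have hT0 : ContDiff ℝ (⊤ : ℕ∞) T0 := contDiff_const.mul s1
  have hT1 : ContDiff ℝ (⊤ : ℕ∞) T1 := contDiff_const.mul s0
  have p0 : ∀ i x, pd i T0 x = (-1 / r0) * (if i = 1 then 1 else 0) := by
    intro i x
    rw [hT0d, pd_mul (differentiableAt_const (-1 / r0)) (cd_diff s1 x), pd_sub_const, pd_coord, pd_const]; ring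
  have p1 : ∀ i x, pd i T1 x = (1 / r0) * (if i = 0 then 1 else 0) := by
    intro i x
    rw [hT1d, pd_mul (differentiableAt_const (1 / r0)) (cd_diff s0 x), pd_sub_const, pd_coord, pd_const]; ring
  have hck : ∀ x, ckd T0 T1 x = 0 := by
    intro x; simp [ckd, p0, p1]; ring
  have hT : ∀ x, T0 x ^ 2 + T1 x ^ 2 = dist x c ^ 2 / r0 ^ 2 := by
    intro x; rw [dist_sq_E2]; simp only [hT0d, hT1d]; field_simp; ring
  refine local_est (B := 0) hu ha hT0 hT1 y0 hr hl hl1 hL le_rfl hal haL hpde ?_ ?_ ?_ ?_ hY hY1 (by simpa using hY.le)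
  · intro x hx
    have := hX x hx
    simp only [hT0d, hT1d]
    linear_combination (1 / r0) * this
  · intro x hx
    rw [hT, div_le_iff₀ (by positivity)]
    have h1 : dist x c ≤ 3 / 2 * r0 := by
      have := dist_triangle x y0 c
      have := Metric.mem_closedBall.1 hx
      linarith
    have h2 : dist x c ^ 2 ≤ (3 / 2 * r0) ^ 2 := by gcongr
    nlinarith [sq_nonneg r0]
  · rw [hT, ← hr0, div_self (by positivity)]; norm_num
  · intro ρ hρ
    have : (fun x => ckd T0 T1 x * gsq u x) = fun _ => 0 := by ext x; rw [hck]; ring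
    rw [this, dsk_const]; simp

lemma caseI_aux {u a : E2 → ℝ} (hu : ContDiff ℝ (⊤ : ℕ∞) u) (ha : ContDiff ℝ (⊤ : ℕ∞) a) (c y0 : E2) {R m l L : ℝ}
    (hR : 0 < R) (hl : 0 < l) (hl1 : l ≤ 1) (hL : 1 ≤ L) (hm : 0 < m)
    (hal : ∀ x ∈ Metric.closedBall y0 R, l ≤ a x) (haL : ∀ x ∈ Metric.closedBall y0 R, a x ≤ L)
    (hpde : ∀ x ∈ Metric.closedBall y0 R, a x * (pd 0 (pd 0 u) x + pd 1 (pd 1 u) x)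
          + (pd 0 a x * pd 0 u x + pd 1 a x * pd 1 u x) = 0)
    (hX : ∀ x ∈ Metric.closedBall y0 R, -(x 1 - c 1) * pd 0 a x + (x 0 - c 0) * pd 1 a x = 0)
    (hum : ∀ x ∈ Metric.closedBall y0 R, |u x| ≤ m) (hne : y0 ≠ c) :
    gsq u y0 ≤ CL l L * (YC l L * m ^ 2 / R ^ 2) := by
  have hr0 : 0 < dist y0 c := dist_pos.2 hne
  have hcac := caccioppoli_u hu ha y0 hR hl hL hal haL hpde hum
  have cg := cont_gsq hu
  have hY : 0 < YC l L * m ^ 2 / R ^ 2 := by unfold YC; positivity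
  have sub : ∀ r, r ≤ R → Metric.closedBall y0 r ⊆ Metric.closedBall y0 R := fun r h =>
    Metric.closedBall_subset_closedBall h
  have hLl : 64 * L ^ 4 / l ^ 2 * (L / l) ≤ 65 * L ^ 5 / l ^ 3 * 1 - L ^ 5 / l ^ 3 := by
    apply le_of_eq; field_simp; ring
  have h5 : 0 < L ^ 5 / l ^ 3 := by positivity
  have h45 : 64 * L ^ 4 / l ^ 2 ≤ 64 * L ^ 4 / l ^ 2 * (L / l) := by
    have : 1 ≤ L / l := by rw [le_div_iff₀ hl]; linarith
    exact le_mul_of_one_le_right (by positivity) this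
  by_cases h : R / 8 ≤ dist y0 c
  · have hr : R / 16 ≤ R := by linarith
    refine rot_est hu ha c y0 (r := R / 16) (by positivity) hl hl1 hL (fun x hx => hal x (sub _ hr hx))
      (fun x hx => haL x (sub _ hr hx)) (fun x hx => hpde x (sub _ hr hx)) (fun x hx => hX x (sub _ hr hx))
      (by linarith) hY ?_
    have h1 := dsk_mono_radius cg y0 (by positivity) (by linarith : R / 16 ≤ R / 2) (fun x _ => gsq_nonneg u x)
    have e : YC l L * m ^ 2 / R ^ 2 * (R / 16) ^ 2 = 65 * L ^ 5 / l ^ 3 * m ^ 2 := by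
      unfold YC; field_simp; ring
    rw [e]
    refine (h1.trans hcac).trans_lt ?_
    apply mul_lt_mul_of_pos_right _ (by positivity)
    linarith
  · push Not at h
    set r0 := dist y0 c with hr0d
    have hr : r0 / 2 ≤ R := by linarith
    refine rot_est hu ha c y0 (r := r0 / 2) (by positivity) hl hl1 hL (fun x hx => hal x (sub _ hr hx))
      (fun x hx => haL x (sub _ hr hx)) (fun x hx => hpde x (sub _ hr hx)) (fun x hx => hX x (sub _ hr hx))
      le_rfl hY ?_
    have subc : Metric.closedBall c (R / 4) ⊆ Metric.closedBall y0 R := by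
      apply Metric.closedBall_subset_closedBall'
      rw [dist_comm]; linarith
    have cG : Continuous (fun x => a x * gsq u x) := ha.continuous.mul cg
    have d1 : dsk y0 (gsq u) (r0 / 2) ≤ dsk c (gsq u) (2 * r0) :=
      dsk_comp cg (gsq_nonneg u) (by positivity) (by linarith)
    have d2 : l * dsk c (gsq u) (2 * r0) ≤ dsk c (fun x => a x * gsq u x) (2 * r0) := by
      rw [← dsk_smul]
      apply dsk_mono (cg.const_mul l) cG c (by positivity)
      intro x hx
      exact mul_le_mul_of_nonneg_right (hal x (subc (Metric.closedBall_subset_closedBall (by linarith) hx))) (gsq_nonneg _ _)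
    have d3 := radial_decay hu ha c (R := R / 4) (fun x hx => hl.trans_le (hal x (subc hx))) (fun x hx => hpde x (subc hx))
      (fun x hx => hX x (subc hx)) (r := 2 * r0) (by positivity) (by linarith)
    have d4 : dsk c (fun x => a x * gsq u x) (R / 4) ≤ L * dsk c (gsq u) (R / 4) := by
      rw [← dsk_smul]
      apply dsk_mono cG (cg.const_mul L) c (by positivity)
      intro x hx
      exact mul_le_mul_of_nonneg_right (haL x (subc hx)) (gsq_nonneg _ _)
    have d5 : dsk c (gsq u) (R / 4) ≤ dsk y0 (gsq u) (R / 2) :=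
      dsk_comp cg (gsq_nonneg u) (by positivity) (by rw [dist_comm]; linarith)
    have d6 : dsk c (fun x => a x * gsq u x) (R / 4) ≤ L * (64 * L ^ 4 / l ^ 2 * m ^ 2) :=
      d4.trans (mul_le_mul_of_nonneg_left (d5.trans hcac) (by linarith))
    have d7 : l * dsk y0 (gsq u) (r0 / 2) * (R / 4) ^ 2 ≤ L * (64 * L ^ 4 / l ^ 2 * m ^ 2) * (2 * r0) ^ 2 := by
      have := mul_le_mul_of_nonneg_left d1 hl.le
      calc l * dsk y0 (gsq u) (r0 / 2) * (R / 4) ^ 2 ≤ dsk c (fun x => a x * gsq u x) (2 * r0) * (R / 4) ^ 2 := by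
            gcongr; linarith
        _ ≤ _ := d3
        _ ≤ _ := by gcongr
    have d8 : dsk y0 (gsq u) (r0 / 2) ≤ 64 * 64 * L ^ 5 / l ^ 3 * m ^ 2 * r0 ^ 2 / R ^ 2 := by
      rw [le_div_iff₀ (by positivity)]
      have : 64 * 64 * L ^ 5 / l ^ 3 * m ^ 2 * r0 ^ 2 = (16 / l) * (L * (64 * L ^ 4 / l ^ 2 * m ^ 2) * (2 * r0) ^ 2) := by
        field_simp; ring
      rw [this]
      refine le_trans (le_of_eq ?_) (mul_le_mul_of_nonneg_left d7 (by positivity))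
      field_simp; ring
    refine d8.trans_lt ?_
    have e : YC l L * m ^ 2 / R ^ 2 * (r0 / 2) ^ 2 = 64 * 65 * L ^ 5 / l ^ 3 * m ^ 2 * r0 ^ 2 / R ^ 2 := by
      unfold YC; field_simp; ring
    rw [e]
    gcongr
    norm_num

lemma caseI {u a : E2 → ℝ} (hu : ContDiff ℝ (⊤ : ℕ∞) u) (ha : ContDiff ℝ (⊤ : ℕ∞) a) (c y0 : E2) {R m l L : ℝ}
    (hR : 0 < R) (hl : 0 < l) (hl1 : l ≤ 1) (hL : 1 ≤ L) (hm : 0 < m)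
    (hal : ∀ x ∈ Metric.closedBall y0 R, l ≤ a x) (haL : ∀ x ∈ Metric.closedBall y0 R, a x ≤ L)
    (hpde : ∀ x ∈ Metric.closedBall y0 R, a x * (pd 0 (pd 0 u) x + pd 1 (pd 1 u) x)
          + (pd 0 a x * pd 0 u x + pd 1 a x * pd 1 u x) = 0)
    (hX : ∀ x ∈ Metric.closedBall y0 R, -(x 1 - c 1) * pd 0 a x + (x 0 - c 0) * pd 1 a x = 0)
    (hum : ∀ x ∈ Metric.closedBall y0 R, |u x| ≤ m) :
    gsq u y0 ≤ CL l L * (4 * YC l L * m ^ 2 / R ^ 2) := by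
  have hCL := CL_pos hl (by linarith : 0 < L)
  have hYC : 0 < YC l L := by unfold YC; positivity
  by_cases hne : y0 = c
  · have ht : Filter.Tendsto (fun t : ℝ => gsq u (pt y0 t 0)) (nhdsWithin 0 (Ioi 0)) (nhds (gsq u y0)) := by
      have h1 : Continuous (fun t : ℝ => gsq u (pt y0 t 0)) := by
        have := cont_gsq hu
        fun_prop
      have := (h1.tendsto 0).mono_left (nhdsWithin_le_nhds (s := Ioi 0))
      rwa [pt_zero] at this
    refine le_of_tendsto ht ?_
    filter_upwards [Ioc_mem_nhdsGT (by positivity : 0 < R / 2)] with t ht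
    have hd : dist (pt y0 t 0) y0 = t := by rw [dist_pt, abs_of_pos ht.1]
    have sub : Metric.closedBall (pt y0 t 0) (R / 2) ⊆ Metric.closedBall y0 R := by
      apply Metric.closedBall_subset_closedBall'
      rw [hd]; linarith [ht.2]
    have := caseI_aux hu ha c (pt y0 t 0) (R := R / 2) (by positivity) hl hl1 hL hm (fun x hx => hal x (sub hx))
      (fun x hx => haL x (sub hx)) (fun x hx => hpde x (sub hx)) (fun x hx => hX x (sub hx)) (fun x hx => hum x (sub hx))
      (by rw [← hne]; exact dist_pos.1 (by rw [hd]; exact ht.1))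
    refine this.trans (le_of_eq ?_)
    field_simp; ring
  · refine (caseI_aux hu ha c y0 hR hl hl1 hL hm hal haL hpde hX hum hne).trans ?_
    gcongr
    linarith



noncomputable def fs (t : ℝ) : ℝ := |t| ^ (-(2/3) : ℝ)

lemma fs_nonneg (t : ℝ) : 0 ≤ fs t := Real.rpow_nonneg (abs_nonneg t) _

lemma fs_int0 (r : ℝ) (hr : 0 ≤ r) : IntervalIntegrable fs volume 0 r ∧ ∫ t in (0:ℝ)..r, fs t = 3 * r ^ (1/3 : ℝ) := by
  have e : EqOn (fun t : ℝ => t ^ (-(2/3) : ℝ)) fs (uIoc 0 r) := by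
    intro t ht
    rw [uIoc_of_le hr] at ht
    simp only [fs, abs_of_pos ht.1]
  have hi : IntervalIntegrable (fun t : ℝ => t ^ (-(2/3) : ℝ)) volume 0 r :=
    intervalIntegral.intervalIntegrable_rpow' (by norm_num)
  constructor
  · exact hi.congr e
  · have e2 : ∫ t in (0:ℝ)..r, fs t = ∫ t in (0:ℝ)..r, t ^ (-(2/3) : ℝ) := by
      rw [intervalIntegral.integral_of_le hr, intervalIntegral.integral_of_le hr]
      apply setIntegral_congr_fun measurableSet_Ioc
      intro t ht
      exact (e (by rwa [uIoc_of_le hr])).symm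
    rw [e2, integral_rpow (Or.inl (by norm_num))]
    norm_num [Real.zero_rpow]
    ring

lemma fs_neg (t : ℝ) : fs (-t) = fs t := by simp [fs]

lemma fs_intneg (r : ℝ) (hr : 0 ≤ r) : IntervalIntegrable fs volume (-r) 0 ∧ ∫ t in (-r)..0, fs t = 3 * r ^ (1/3 : ℝ) := by
  obtain ⟨h1, h2⟩ := fs_int0 r hr
  constructor
  · have := (IntervalIntegrable.iff_comp_neg (f := fs)).1 h1
    simp only [fs_neg, neg_zero] at this
    exact this.symm
  · rw [← h2]
    have := intervalIntegral.integral_comp_neg (a := 0) (b := r) fs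
    simp only [fs_neg, neg_zero] at this
    exact this.symm

lemma fs_intervalIntegrable (a b : ℝ) : IntervalIntegrable fs volume a b := by
  have key : ∀ c : ℝ, IntervalIntegrable fs volume 0 c := by
    intro c
    rcases le_total 0 c with h | h
    · exact (fs_int0 c h).1
    · have := (fs_intneg (-c) (by linarith)).1
      rw [neg_neg] at this
      exact this.symm
  exact (key a).symm.trans (key b)

lemma fs_bound (c r : ℝ) (hr : 0 < r) : ∫ t in (c - r)..(c + r), fs t ≤ 8 * r ^ (1/3 : ℝ) := by
  have hi : IntegrableOn fs (Ioc (-r) r) := by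
    have := fs_intervalIntegrable (-r) r
    rwa [intervalIntegrable_iff_integrableOn_Ioc_of_le (by linarith)] at this
  have hg : Integrable ((Ioc (-r) r).indicator fs) := (integrable_indicator_iff measurableSet_Ioc).2 hi
  have hpt : ∀ t, fs t ≤ r ^ (-(2/3) : ℝ) + (Ioc (-r) r).indicator fs t := by
    intro t
    by_cases h : t ∈ Ioc (-r) r
    · rw [indicator_of_mem h]
      have : 0 ≤ r ^ (-(2/3) : ℝ) := by positivity
      linarith
    · rw [indicator_of_notMem h, add_zero]
      unfold fs
      apply Real.rpow_le_rpow_of_nonpos hr _ (by norm_num)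
      simp only [mem_Ioc, not_and_or, not_lt, not_le] at h
      rcases h with h | h
      · rw [abs_of_neg (by linarith)]; linarith
      · rw [abs_of_pos (by linarith)]; linarith
  have h1 : ∫ t in (c - r)..(c + r), fs t ≤ ∫ t in (c - r)..(c + r), (r ^ (-(2/3) : ℝ) + (Ioc (-r) r).indicator fs t) := by
    apply intervalIntegral.integral_mono_on (by linarith) (fs_intervalIntegrable _ _)
    · exact (intervalIntegrable_const).add hg.intervalIntegrable
    · intro t _; exact hpt t
  rw [intervalIntegral.integral_add intervalIntegrable_const hg.intervalIntegrable, intervalIntegral.integral_const] at h1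
  have h2 : ∫ t in (c - r)..(c + r), (Ioc (-r) r).indicator fs t ≤ 6 * r ^ (1/3 : ℝ) := by
    rw [intervalIntegral.integral_of_le (by linarith)]
    have h3 : ∫ t in Ioc (c - r) (c + r), (Ioc (-r) r).indicator fs t ≤ ∫ t, (Ioc (-r) r).indicator fs t :=
      setIntegral_le_integral hg (Filter.Eventually.of_forall fun t => indicator_nonneg (fun x _ => fs_nonneg x) t)
    refine h3.trans (le_of_eq ?_)
    rw [integral_indicator measurableSet_Ioc, ← intervalIntegral.integral_of_le (by linarith),
      ← intervalIntegral.integral_add_adjacent_intervals (fs_intervalIntegrable (-r) 0) (fs_intervalIntegrable 0 r),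
      (fs_int0 r hr.le).2, (fs_intneg r hr.le).2]
    ring
  have h4 : r * r ^ (-(2/3) : ℝ) = r ^ (1/3 : ℝ) := by
    nth_rw 1 [← Real.rpow_one r]
    rw [← Real.rpow_add hr]; norm_num
  simp only [smul_eq_mul] at h1
  have : (c + r - (c - r)) * r ^ (-(2/3) : ℝ) = 2 * r ^ (1/3 : ℝ) := by rw [← h4]; ring
  linarith

lemma fs_shift (b c r : ℝ) (hr : 0 < r) : IntegrableOn (fun t => fs (t + b)) (Icc (c - r) (c + r)) ∧
    ∫ t in Icc (c - r) (c + r), fs (t + b) ≤ 8 * r ^ (1/3 : ℝ) := by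
  constructor
  · rw [integrableOn_Icc_iff_integrableOn_Ioc, ← intervalIntegrable_iff_integrableOn_Ioc_of_le (by linarith)]
    have := (fs_intervalIntegrable (c - r + b) (c + r + b)).comp_add_right b
    simpa using this
  · rw [integral_Icc_eq_integral_Ioc, ← intervalIntegral.integral_of_le (by linarith),
      intervalIntegral.integral_comp_add_right fs b]
    have := fs_bound (c + b) r hr
    convert this using 2 <;> ring

/-- integral bound for the singular weight. -/
lemma dsk_sing {H : E2 → ℝ} (hH : Continuous H) (x0 : E2) {b K ρ : ℝ} (hK : 0 ≤ K) (hρ : 0 < ρ)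
    (h : ∀ x ∈ Metric.closedBall x0 ρ, x 0 ≠ 0 → x 1 + b ≠ 0 → H x ≤ K * (fs (x 0) * fs (x 1 + b))) :
    dsk x0 H ρ ≤ 64 * K * ρ ^ (2/3 : ℝ) := by
  rw [dsk_eq hH x0 hρ.le]
  set S := {p : ℝ × ℝ | dist (vec p.1 p.2) x0 < ρ} with hS
  set g : ℝ × ℝ → ℝ := fun p => K * (fs p.1 * fs (p.2 + b)) with hg
  set Sq := Icc (x0 0 - ρ) (x0 0 + ρ) ×ˢ Icc (x0 1 - ρ) (x0 1 + ρ) with hSq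
  obtain ⟨i1, j1⟩ := fs_shift 0 (x0 0) ρ hρ
  obtain ⟨i2, j2⟩ := fs_shift b (x0 1) ρ hρ
  simp only [add_zero] at i1 j1
  have hgi0 : IntegrableOn (fun p : ℝ × ℝ => fs p.1 * fs (p.2 + b)) Sq := by
    rw [IntegrableOn, hSq, Measure.volume_eq_prod, ← Measure.prod_restrict]
    exact Integrable.mul_prod (f := fs) (g := fun t => fs (t + b)) i1 i2
  have hgi : IntegrableOn g Sq := hgi0.const_mul K
  have hg0 : ∀ p, 0 ≤ g p := fun p => mul_nonneg hK (mul_nonneg (fs_nonneg _) (fs_nonneg _))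
  have hsub : S ⊆ Sq := bdd_ball2 x0 ρ
  have n1 : ∀ᵐ p : ℝ × ℝ, p.1 ≠ 0 := by
    have : volume (({0} : Set ℝ) ×ˢ (univ : Set ℝ)) = 0 := by
      rw [Measure.volume_eq_prod, Measure.prod_prod]; simp
    filter_upwards [measure_eq_zero_iff_ae_notMem.1 this] with p hp h0
    exact hp (by simp [h0])
  have n2 : ∀ᵐ p : ℝ × ℝ, p.2 + b ≠ 0 := by
    have : volume ((univ : Set ℝ) ×ˢ ({-b} : Set ℝ)) = 0 := by
      rw [Measure.volume_eq_prod, Measure.prod_prod]; simp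
    filter_upwards [measure_eq_zero_iff_ae_notMem.1 this] with p hp h0
    exact hp (by simp; linarith)
  have h1 : ∫ p in S, H (vec p.1 p.2) ≤ ∫ p in S, g p := by
    apply setIntegral_mono_on_ae (int_ball2 hH x0 ρ) (hgi.mono_set hsub) (meas_ball2 x0 ρ)
    filter_upwards [n1, n2] with p h1 h2 hp
    have := h (vec p.1 p.2) (Metric.mem_closedBall.2 (le_of_lt hp)) (by rwa [vec_zero]) (by rwa [vec_one])
    simpa only [vec_zero, vec_one] using this
  have h2 : ∫ p in S, g p ≤ ∫ p in Sq, g p :=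
    setIntegral_mono_set hgi (Filter.Eventually.of_forall fun p => hg0 p) (LE.le.eventuallyLE hsub)
  have h3 : ∫ p in Sq, g p = K * ((∫ t in Icc (x0 0 - ρ) (x0 0 + ρ), fs t) * ∫ t in Icc (x0 1 - ρ) (x0 1 + ρ), fs (t + b)) := by
    rw [hg, integral_const_mul, hSq, Measure.volume_eq_prod, ← setIntegral_prod_mul]
  refine (h1.trans h2).trans ?_
  rw [h3]
  have e : ρ ^ (2/3 : ℝ) = ρ ^ (1/3 : ℝ) * ρ ^ (1/3 : ℝ) := by
    rw [← Real.rpow_add hρ]; norm_num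
  rw [e]
  have k1 : 0 ≤ ∫ t in Icc (x0 1 - ρ) (x0 1 + ρ), fs (t + b) := integral_nonneg fun t => fs_nonneg _
  have hρ' : 0 ≤ ρ ^ (1/3 : ℝ) := by positivity
  have := mul_le_mul j1 j2 k1 (by positivity)
  have := mul_le_mul_of_nonneg_left this hK
  linarith



lemma fs_prod {Q s t : ℝ} (hs : s ≠ 0) (ht : t ≠ 0) (h1 : s ^ 2 ≤ Q) (h2 : |t| ≤ Q) : 1 / Q ≤ fs s * fs t := by
  have hQ : 0 < Q := lt_of_lt_of_le (by positivity) h1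
  have as : 0 < |s| := abs_pos.2 hs
  have at' : 0 < |t| := abs_pos.2 ht
  unfold fs
  have k1 : Q ^ (-(1/3) : ℝ) ≤ |s| ^ (-(2/3) : ℝ) := by
    have e : |s| ^ (-(2/3) : ℝ) = (|s| ^ (2:ℝ)) ^ (-(1/3) : ℝ) := by
      rw [← Real.rpow_mul as.le]; norm_num
    rw [e]
    apply Real.rpow_le_rpow_of_nonpos (by positivity) _ (by norm_num)
    rw [Real.rpow_two, sq_abs]; exact h1
  have k2 : Q ^ (-(2/3) : ℝ) ≤ |t| ^ (-(2/3) : ℝ) := Real.rpow_le_rpow_of_nonpos at' h2 (by norm_num)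
  have k3 : 1 / Q = Q ^ (-(1/3) : ℝ) * Q ^ (-(2/3) : ℝ) := by
    rw [← Real.rpow_add hQ]; norm_num [Real.rpow_neg_one]
  rw [k3]
  exact mul_le_mul k1 k2 (by positivity) (by positivity)

lemma pd_comp {g : ℝ → ℝ} {f : E2 → ℝ} {x : E2} (hg : DifferentiableAt ℝ g (f x)) (hf : DifferentiableAt ℝ f x) (i : Fin 2) :
    pd i (fun y => g (f y)) x = deriv g (f x) * pd i f x := by
  unfold pd
  have := hg.hasDerivAt.comp_hasFDerivAt x hf.hasFDerivAt
  rw [show (fun y => g (f y)) = g ∘ f from rfl, this.fderiv]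
  simp

lemma st_deriv : ∃ M, 0 ≤ M ∧ (∀ t, deriv Real.smoothTransition t ^ 2 ≤ M) ∧
    (∀ t, (t < 0 ∨ 1 < t) → deriv Real.smoothTransition t = 0) := by
  have hz : ∀ t, (t < 0 ∨ 1 < t) → deriv Real.smoothTransition t = 0 := by
    intro t ht
    rcases ht with ht | ht
    · have : Real.smoothTransition =ᶠ[nhds t] fun _ => 0 := by
        filter_upwards [Iio_mem_nhds ht] with s hs
        exact Real.smoothTransition.zero_of_nonpos (le_of_lt hs)
      rw [this.deriv_eq]; simp
    · have : Real.smoothTransition =ᶠ[nhds t] fun _ => 1 := by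
        filter_upwards [Ioi_mem_nhds ht] with s hs
        exact Real.smoothTransition.one_of_one_le (le_of_lt hs)
      rw [this.deriv_eq]; simp
  have hc : Continuous (deriv Real.smoothTransition) :=
    (Real.smoothTransition.contDiff (n := 1)).continuous_deriv le_rfl
  obtain ⟨M, hM⟩ := (isCompact_Icc (a := (0:ℝ)) (b := 1)).exists_bound_of_continuousOn
    (f := fun t => deriv Real.smoothTransition t ^ 2) (by fun_prop)
  have hM' : ∀ t ∈ Icc (0:ℝ) 1, deriv Real.smoothTransition t ^ 2 ≤ M := fun t ht =>
    (le_abs_self _).trans (hM t ht)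
  have h0 : 0 ≤ M := (sq_nonneg _).trans (hM' 0 (by simp))
  refine ⟨M, h0, ?_, hz⟩
  intro t
  by_cases ht : t ∈ Icc (0:ℝ) 1
  · exact hM' t ht
  · rw [hz t]
    · simpa using h0
    · simp only [mem_Icc, not_and_or, not_le] at ht; exact ht

set_option maxHeartbeats 1000000 in
lemma gap_field : ∃ M, 0 ≤ M ∧ ∀ b : ℝ, 1 < b → b ≤ 2 → ∃ T0 T1 w : E2 → ℝ,
    ContDiff ℝ (⊤ : ℕ∞) T0 ∧ ContDiff ℝ (⊤ : ℕ∞) T1 ∧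
    (∀ x, T0 x = (1 - w x) * (-x 1) + w x * (x 1 + 2 * b)) ∧
    (∀ x, T1 x = (1 - w x) * x 0 - w x * x 0) ∧
    (∀ x : E2, x 0 ^ 2 + (x 1 + b) ^ 2 + b ^ 2 - 1 ≤ 4 * b * (x 1 + b) → w x = 0) ∧
    (∀ x : E2, x 0 ^ 2 + (x 1 + b) ^ 2 + b ^ 2 - 1 ≤ -(4 * b * (x 1 + b)) → w x = 1) ∧
    (∀ x, 0 ≤ w x ∧ w x ≤ 1) ∧
    (∀ x : E2, x 0 ≠ 0 → x 1 + b ≠ 0 → ckd T0 T1 x ≤ M * (fs (x 0) * fs (x 1 + b))) := by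
  obtain ⟨M, hM0, hM, hMz⟩ := st_deriv
  refine ⟨128 * M, by positivity, ?_⟩
  intro b hb1 hb2
  have c0 := contDiff_coord 0
  have c1 : ContDiff ℝ (⊤ : ℕ∞) (fun x : E2 => x 1 + b) := (contDiff_coord 1).add contDiff_const
  set Q : E2 → ℝ := fun x => x 0 * x 0 + (x 1 + b) * (x 1 + b) + (b ^ 2 - 1) with hQ
  have hQp : ∀ x, 0 < Q x := fun x => by simp only [hQ]; nlinarith [mul_self_nonneg (x 0), mul_self_nonneg (x 1 + b)]
  have cQ : ContDiff ℝ (⊤ : ℕ∞) Q := ((c0.mul c0).add (c1.mul c1)).add contDiff_const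
  set τ : E2 → ℝ := fun x => b * (x 1 + b) * (Q x)⁻¹ with hτ
  have cτ : ContDiff ℝ (⊤ : ℕ∞) τ := (contDiff_const.mul c1).mul (cQ.inv fun x => (hQp x).ne')
  set σ : E2 → ℝ := fun x => 1 / 2 - 2 * τ x with hσ
  have cσ : ContDiff ℝ (⊤ : ℕ∞) σ := contDiff_const.sub (contDiff_const.mul cτ)
  set w : E2 → ℝ := fun x => Real.smoothTransition (σ x) with hw
  have cw : ContDiff ℝ (⊤ : ℕ∞) w := Real.smoothTransition.contDiff.comp cσ
  set T0 : E2 → ℝ := fun x => b - (x 1 + b) + (2 * w x) * (x 1 + b) with hT0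
  set T1 : E2 → ℝ := fun x => (1 - 2 * w x) * x 0 with hT1
  have c2w : ContDiff ℝ (⊤ : ℕ∞) (fun x => 2 * w x) := contDiff_const.mul cw
  have c12w : ContDiff ℝ (⊤ : ℕ∞) (fun x => 1 - 2 * w x) := contDiff_const.sub c2w
  have pc1 : ∀ i x, pd i (fun x : E2 => x 1 + b) x = if i = 1 then 1 else 0 := by
    intro i x; rw [pd_add (cd_diff (contDiff_coord 1) x) (differentiableAt_const b), pd_coord, pd_const, add_zero]
  have pQ : ∀ i x, pd i Q x = (if i = 0 then 2 * x 0 else 0) + (if i = 1 then 2 * (x 1 + b) else 0) := by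
    intro i x
    rw [hQ, pd_add (cd_diff ((c0.mul c0).add (c1.mul c1)) x) (differentiableAt_const _),
      pd_add (cd_diff (c0.mul c0) x) (cd_diff (c1.mul c1) x),
      pd_mul (cd_diff c0 x) (cd_diff c0 x), pd_mul (cd_diff c1 x) (cd_diff c1 x), pd_coord, pc1, pd_const]
    fin_cases i <;> simp <;> ring
  have pinv : ∀ i x, pd i (fun y => (Q y)⁻¹) x = -(Q x ^ 2)⁻¹ * pd i Q x := by
    intro i x
    rw [pd_comp (g := fun t => t⁻¹) (differentiableAt_inv (hQp x).ne') (cd_diff cQ x), deriv_inv]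
  have pτ : ∀ i x, pd i τ x = b * (x 1 + b) * (-(Q x ^ 2)⁻¹ * pd i Q x) + (Q x)⁻¹ * (b * if i = 1 then 1 else 0) := by
    intro i x
    have cQi : ContDiff ℝ (⊤ : ℕ∞) (fun y => (Q y)⁻¹) := cQ.inv fun x => (hQp x).ne'
    rw [hτ, pd_mul (cd_diff (contDiff_const.mul c1) x) (cd_diff cQi x), pinv,
      pd_mul (differentiableAt_const b) (cd_diff c1 x), pc1, pd_const]; ring
  have pw : ∀ i x, pd i w x = deriv Real.smoothTransition (σ x) * (-2 * pd i τ x) := by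
    intro i x
    rw [hw, pd_comp ((Real.smoothTransition.contDiff (n := 1)).differentiable (by simp) _) (cd_diff cσ x), hσ,
      pd_sub (differentiableAt_const _) (cd_diff (contDiff_const.mul cτ) x), pd_mul (differentiableAt_const _) (cd_diff cτ x),
      pd_const, pd_const]; ring
  have p2w : ∀ i x, pd i (fun x => 2 * w x) x = 2 * pd i w x := by
    intro i x; rw [pd_mul (differentiableAt_const _) (cd_diff cw x), pd_const]; ring
  have cT0 : ContDiff ℝ (⊤ : ℕ∞) T0 := (contDiff_const.sub c1).add (c2w.mul c1)
  have cT1 : ContDiff ℝ (⊤ : ℕ∞) T1 := c12w.mul c0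
  have pT0 : ∀ i x, pd i T0 x = -(if i = 1 then 1 else 0) + (2 * w x * (if i = 1 then 1 else 0) + (x 1 + b) * (2 * pd i w x)) := by
    intro i x
    rw [hT0, pd_add (cd_diff (contDiff_const.sub c1) x) (cd_diff (c2w.mul c1) x),
      pd_sub (differentiableAt_const _) (cd_diff c1 x), pd_mul (cd_diff c2w x) (cd_diff c1 x), pc1, p2w, pd_const]; ring
  have pT1 : ∀ i x, pd i T1 x = (1 - 2 * w x) * (if i = 0 then 1 else 0) - x 0 * (2 * pd i w x) := by
    intro i x
    rw [hT1, pd_mul (cd_diff c12w x) (cd_diff c0 x), pd_sub (differentiableAt_const _) (cd_diff c2w x), p2w, pd_coord, pd_const]; ring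
  have hck : ∀ x, ckd T0 T1 x = 4 * (pd 0 w x ^ 2 + pd 1 w x ^ 2) * (x 0 ^ 2 + (x 1 + b) ^ 2) := by
    intro x; simp only [ckd, pT0, pT1]; simp; ring
  refine ⟨T0, T1, w, cT0, cT1, ?_, ?_, ?_, ?_, ?_, ?_⟩
  · intro x; simp only [hT0]; ring
  · intro x; simp only [hT1]; ring
  · intro x hx
    apply Real.smoothTransition.zero_of_nonpos
    have : (1:ℝ) / 4 ≤ τ x := by
      simp only [hτ]; rw [← div_eq_mul_inv, le_div_iff₀ (hQp x)]; simp only [hQ]; nlinarith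
    simp only [hσ]; linarith
  · intro x hx
    apply Real.smoothTransition.one_of_one_le
    have : τ x ≤ -1 / 4 := by
      simp only [hτ]; rw [← div_eq_mul_inv, div_le_iff₀ (hQp x)]; simp only [hQ]; nlinarith
    simp only [hσ]; linarith
  · intro x; exact ⟨Real.smoothTransition.nonneg _, Real.smoothTransition.le_one _⟩
  · intro x h0 h1
    rw [hck]
    have hq := hQp x
    have hfs : 0 ≤ fs (x 0) * fs (x 1 + b) := mul_nonneg (fs_nonneg _) (fs_nonneg _)
    by_cases hd : σ x < 0 ∨ 1 < σ x
    · simp only [pw, hMz _ hd]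
      have : 0 ≤ 128 * M * (fs (x 0) * fs (x 1 + b)) := by positivity
      simpa using this
    · push Not at hd
      have hQ4 : 4 * (b * |x 1 + b|) ≤ Q x := by
        have : |τ x| ≤ 1 / 4 := by
          rw [abs_le]; simp only [hσ] at hd; constructor <;> linarith [hd.1, hd.2]
        simp only [hτ] at this
        rw [abs_mul, abs_mul, abs_inv, abs_of_pos hq, abs_of_pos (by linarith : 0 < b), ← div_eq_mul_inv, div_le_iff₀ hq] at this
        linarith
      have hQ1 : |x 1 + b| ≤ Q x := by nlinarith [abs_nonneg (x 1 + b)]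
      have hQz : x 0 ^ 2 + (x 1 + b) ^ 2 ≤ Q x := by simp only [hQ]; nlinarith
      have hQ2 : x 0 ^ 2 ≤ Q x := by nlinarith [sq_nonneg (x 1 + b)]
      have hfp := fs_prod h0 h1 hQ2 hQ1
      have t0 : pd 0 τ x ^ 2 ≤ (b / Q x) ^ 2 := by
        have : pd 0 τ x = (b / Q x) * (-(2 * x 0 * (x 1 + b)) / Q x) := by
          rw [pτ, pQ]; simp; field_simp
        rw [this, mul_pow]
        have h2 : (-(2 * x 0 * (x 1 + b)) / Q x) ^ 2 ≤ 1 := by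
          rw [sq_le_one_iff_abs_le_one, abs_le, le_div_iff₀ hq, div_le_iff₀ hq]
          constructor <;> nlinarith [sq_nonneg (x 0 + (x 1 + b)), sq_nonneg (x 0 - (x 1 + b))]
        nlinarith [sq_nonneg (b / Q x)]
      have t1 : pd 1 τ x ^ 2 ≤ (b / Q x) ^ 2 := by
        have : pd 1 τ x = (b / Q x) * ((Q x - 2 * (x 1 + b) ^ 2) / Q x) := by
          rw [pτ, pQ]; simp; field_simp; ring
        rw [this, mul_pow]
        have h2 : ((Q x - 2 * (x 1 + b) ^ 2) / Q x) ^ 2 ≤ 1 := by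
          rw [sq_le_one_iff_abs_le_one, abs_le, le_div_iff₀ hq, div_le_iff₀ hq]
          constructor <;> nlinarith [sq_nonneg (x 0), sq_nonneg (x 1 + b)]
        nlinarith [sq_nonneg (b / Q x)]
      rw [pw, pw]
      set S := deriv Real.smoothTransition (σ x) ^ 2 with hS
      have hSM : S ≤ M := hM _
      have hS0 : 0 ≤ S := sq_nonneg _
      have e1 : 4 * ((deriv Real.smoothTransition (σ x) * (-2 * pd 0 τ x)) ^ 2 + (deriv Real.smoothTransition (σ x) * (-2 * pd 1 τ x)) ^ 2) =
        16 * S * (pd 0 τ x ^ 2 + pd 1 τ x ^ 2) := by rw [hS]; ring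
      rw [e1]
      have e2 : 16 * S * (pd 0 τ x ^ 2 + pd 1 τ x ^ 2) ≤ 16 * M * (2 * (b / Q x) ^ 2) :=
        mul_le_mul (by linarith) (by linarith) (by positivity) (by positivity)
      have e3 : 16 * S * (pd 0 τ x ^ 2 + pd 1 τ x ^ 2) * (x 0 ^ 2 + (x 1 + b) ^ 2) ≤ 16 * M * (2 * (b / Q x) ^ 2) * Q x :=
        mul_le_mul e2 hQz (by positivity) (by positivity)
      have e4 : 16 * M * (2 * (b / Q x) ^ 2) * Q x = 32 * M * b ^ 2 * (1 / Q x) := by field_simp; ring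
      have e5 : 32 * M * b ^ 2 * (1 / Q x) ≤ 128 * M * (1 / Q x) := by
        apply mul_le_mul_of_nonneg_right _ (by positivity)
        have h4 : b ^ 2 ≤ 4 := by nlinarith only [hb1, hb2]
        have := mul_le_mul_of_nonneg_left h4 (by positivity : 0 ≤ 32 * M)
        linarith only [this]
      have e6 : 128 * M * (1 / Q x) ≤ 128 * M * (fs (x 0) * fs (x 1 + b)) := mul_le_mul_of_nonneg_left hfp (by positivity)
      linarith

set_option maxHeartbeats 1000000 in
/-- Gap estimate. -/
lemma gap_est : ∃ K, 0 ≤ K ∧ ∀ {u a : E2 → ℝ}, ContDiff ℝ (⊤ : ℕ∞) u → ContDiff ℝ (⊤ : ℕ∞) a → ∀ (y0 : E2) {R m l L b ε Mu : ℝ},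
    0 < R → 0 < l → l ≤ 1 → 1 ≤ L → 0 < m → 1 < b → b ≤ 2 → 0 < ε → ε < (b - 1) / 2 → 0 ≤ Mu →
    (∀ x ∈ Metric.closedBall y0 R, l ≤ a x) → (∀ x ∈ Metric.closedBall y0 R, a x ≤ L) →
    (∀ x ∈ Metric.closedBall y0 R, a x * (pd 0 (pd 0 u) x + pd 1 (pd 1 u) x)
          + (pd 0 a x * pd 0 u x + pd 1 a x * pd 1 u x) = 0) →
    (∀ x ∈ Metric.closedBall y0 R, |u x| ≤ m) →
    (∀ x ∈ Metric.closedBall y0 R, gsq u x ≤ Mu) →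
    (∀ x ∈ Metric.closedBall y0 R, x 0 ^ 2 + (x 1 + b) ^ 2 ≤ 1 / 4) →
    (∀ x ∈ Metric.closedBall y0 R, ε < |dist x (vec 0 (-2 * b)) - 1| → -x 1 * pd 0 a x + x 0 * pd 1 a x = 0) →
    (∀ x ∈ Metric.closedBall y0 R, ε < |‖x‖ - 1| → -(x 1 + 2 * b) * pd 0 a x + x 0 * pd 1 a x = 0) →
    gsq u y0 ≤ CL l L * (260 * L ^ 4 / l ^ 2 * m ^ 2 / R ^ 2 + K * Mu * R ^ (2/3 : ℝ)) := by
  obtain ⟨M, hM0, H⟩ := gap_field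
  refine ⟨64 * M, by positivity, ?_⟩
  intro u a hu ha y0 R m l L b ε Mu hR hl hl1 hL hm hb1 hb2 hε hεb hMu hal haL hpde hum hgu hz hF1 hF2
  obtain ⟨T0, T1, w, cT0, cT1, eT0, eT1, w0, w1, w01, hck⟩ := H b hb1 hb2
  have hsub : Metric.closedBall y0 (R / 2) ⊆ Metric.closedBall y0 R := Metric.closedBall_subset_closedBall (by linarith)
  have hcac := caccioppoli_u hu ha y0 hR hl hL hal haL hpde hum
  have hL0 : 0 < L := by linarith
  set Y := 260 * L ^ 4 / l ^ 2 * m ^ 2 / R ^ 2 + 64 * M * Mu * R ^ (2/3 : ℝ) with hY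
  have hY1 : 0 < 260 * L ^ 4 / l ^ 2 * m ^ 2 / R ^ 2 := by positivity
  have hY2 : 0 ≤ 64 * M * Mu * R ^ (2/3 : ℝ) := by positivity
  have hpow : (R / 2) ^ (2/3 : ℝ) ≤ R ^ (2/3 : ℝ) := Real.rpow_le_rpow (by linarith) (by linarith) (by norm_num)
  have n1 : ∀ x : E2, ‖x‖ ^ 2 = x 0 ^ 2 + x 1 ^ 2 := norm_sq_E2
  have n2 : ∀ x : E2, dist x (vec 0 (-2 * b)) ^ 2 = x 0 ^ 2 + (x 1 + 2 * b) ^ 2 := by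
    intro x; rw [dist_sq_E2, vec_zero, vec_one]; ring
  have n3 : ∀ x : E2, 2 * b ≤ ‖x‖ + dist x (vec 0 (-2 * b)) := by
    intro x
    have h1 := dist_triangle_left (0 : E2) (vec 0 (-2 * b)) x
    have h2 : dist (0 : E2) (vec 0 (-2 * b)) ^ 2 = (2 * b) ^ 2 := by rw [n2]; simp
    have h3 : dist (0 : E2) (vec 0 (-2 * b)) = 2 * b := (pow_left_inj₀ dist_nonneg (by linarith) two_ne_zero).1 h2
    rw [h3, dist_zero_right] at h1; exact h1
  refine local_est (B := 64 * (M * Mu)) hu ha cT0 cT1 y0 (by linarith : 0 < R / 2) hl hl1 hL (by positivity)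
    (fun x hx => hal x (hsub hx)) (fun x hx => haL x (hsub hx)) (fun x hx => hpde x (hsub hx)) ?_ ?_ ?_ ?_
    (by linarith : 0 < Y) ?_ ?_
  · intro x hx
    have hxz := hz x (hsub hx)
    by_cases h1 : ε < |‖x‖ - 1|
    · have f2 := hF2 x (hsub hx) h1
      by_cases h2 : ε < |dist x (vec 0 (-2 * b)) - 1|
      · have f1 := hF1 x (hsub hx) h2
        rw [eT0, eT1]
        linear_combination (1 - w x) * f1 - w x * f2
      · have : w x = 1 := by
          apply w1
          rw [not_lt, abs_le] at h2
          have h3 := n3 x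
          have h4 : 2 * b - (1 + ε) ≤ ‖x‖ := by linarith
          have e1 := n1 x
          have e2 := n2 x
          have g1 : (1 + 3 * ε) ^ 2 ≤ ‖x‖ ^ 2 := pow_le_pow_left₀ (by linarith) (by linarith) 2
          have g2 : dist x (vec 0 (-2 * b)) ^ 2 ≤ (1 + ε) ^ 2 := pow_le_pow_left₀ dist_nonneg (by linarith) 2
          linarith [sq_nonneg ε]
        rw [eT0, eT1, this]
        linear_combination -f2
    · have h2 : ε < |dist x (vec 0 (-2 * b)) - 1| := by
        rw [not_lt, abs_le] at h1
        rw [lt_abs]; left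
        linarith [n3 x]
      have f1 := hF1 x (hsub hx) h2
      have : w x = 0 := by
        apply w0
        rw [not_lt, abs_le] at h1
        have h3 := n3 x
        have h4 : 2 * b - (1 + ε) ≤ dist x (vec 0 (-2 * b)) := by linarith
        have e1 := n1 x
        have e2 := n2 x
        have g1 : (1 + 3 * ε) ^ 2 ≤ dist x (vec 0 (-2 * b)) ^ 2 := pow_le_pow_left₀ (by linarith) (by linarith) 2
        have g2 : ‖x‖ ^ 2 ≤ (1 + ε) ^ 2 := pow_le_pow_left₀ (norm_nonneg _) (by linarith) 2
        linarith [sq_nonneg ε]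
      rw [eT0, eT1, this]
      linear_combination f1
  · intro x hx
    have hxz := hz x (hsub hx)
    obtain ⟨hw0, hw1⟩ := w01 x
    have hz1 : |x 1 + b| ≤ 1 / 2 := by rw [← abs_of_pos (by norm_num : (0:ℝ) < 1/2), ← sq_le_sq]; nlinarith [sq_nonneg (x 0)]
    rw [abs_le] at hz1
    have t0 : T0 x = b + (2 * w x - 1) * (x 1 + b) := by rw [eT0]; ring
    have t1 : T1 x = (1 - 2 * w x) * x 0 := by rw [eT1]; ring
    have hs : (2 * w x - 1) ^ 2 ≤ 1 := by nlinarith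
    have u1 : T0 x ≤ 5 / 2 := by rw [t0]; nlinarith
    have u2 : 0 ≤ T0 x := by rw [t0]; nlinarith
    have u3 : T1 x ^ 2 ≤ 1 / 4 := by
      rw [t1, mul_pow]; nlinarith [sq_nonneg (x 0), sq_nonneg (x 1 + b)]
    nlinarith
  · have hxz := hz y0 (Metric.mem_closedBall_self hR.le)
    obtain ⟨hw0, hw1⟩ := w01 y0
    have hz1 : |y0 1 + b| ≤ 1 / 2 := by rw [← abs_of_pos (by norm_num : (0:ℝ) < 1/2), ← sq_le_sq]; nlinarith [sq_nonneg (y0 0)]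
    rw [abs_le] at hz1
    have t0 : T0 y0 = b + (2 * w y0 - 1) * (y0 1 + b) := by rw [eT0]; ring
    have u2 : 1 / 2 ≤ T0 y0 := by rw [t0]; nlinarith
    nlinarith [sq_nonneg (T1 y0)]
  · intro ρ hρ
    have hH : Continuous (fun x => ckd T0 T1 x * gsq u x) := (cont_ckd cT0 cT1).mul (cont_gsq hu)
    apply dsk_sing hH y0 (b := b) (by positivity) hρ.1
    intro x hx h0 h1
    have hx' : x ∈ Metric.closedBall y0 R := hsub (Metric.closedBall_subset_closedBall hρ.2 hx)
    have := mul_le_mul (hck x h0 h1) (hgu x hx') (gsq_nonneg _ _)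
      (mul_nonneg hM0 (mul_nonneg (fs_nonneg _) (fs_nonneg _)))
    linarith
  · refine hcac.trans_lt ?_
    have : 260 * L ^ 4 / l ^ 2 * m ^ 2 / R ^ 2 * (R / 2) ^ 2 = 65 * L ^ 4 / l ^ 2 * m ^ 2 := by field_simp; ring
    have h2 : 64 * L ^ 4 / l ^ 2 * m ^ 2 < 65 * L ^ 4 / l ^ 2 * m ^ 2 := by gcongr; norm_num
    have h3 : 0 ≤ 64 * M * Mu * R ^ (2/3 : ℝ) * (R / 2) ^ 2 := by positivity
    rw [hY, add_mul, this]; linarith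
  · have : 64 * (M * Mu) * (R / 2) ^ (2/3 : ℝ) ≤ 64 * (M * Mu) * R ^ (2/3 : ℝ) := by gcongr
    rw [hY]; linarith



noncomputable def AC (l L : ℝ) : ℝ := 4 * YC l L + 260 * L ^ 4 / l ^ 2

lemma unif_est : ∃ K, 0 ≤ K ∧ ∀ {u a : E2 → ℝ}, ContDiff ℝ (⊤ : ℕ∞) u → ContDiff ℝ (⊤ : ℕ∞) a → ∀ (y0 : E2) {R m l L b ε Mu : ℝ},
    0 < R → R ≤ 1 / 100 → 0 < l → l ≤ 1 → 1 ≤ L → 0 < m → 1 < b → 0 < ε → ε < (b - 1) / 2 → 0 ≤ Mu →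
    (∀ x ∈ Metric.closedBall y0 R, l ≤ a x) → (∀ x ∈ Metric.closedBall y0 R, a x ≤ L) →
    (∀ x ∈ Metric.closedBall y0 R, a x * (pd 0 (pd 0 u) x + pd 1 (pd 1 u) x)
          + (pd 0 a x * pd 0 u x + pd 1 a x * pd 1 u x) = 0) →
    (∀ x ∈ Metric.closedBall y0 R, |u x| ≤ m) →
    (∀ x ∈ Metric.closedBall y0 R, gsq u x ≤ Mu) →
    (∀ x ∈ Metric.closedBall y0 R, ε < |dist x (vec 0 (-2 * b)) - 1| → -x 1 * pd 0 a x + x 0 * pd 1 a x = 0) →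
    (∀ x ∈ Metric.closedBall y0 R, ε < |‖x‖ - 1| → -(x 1 + 2 * b) * pd 0 a x + x 0 * pd 1 a x = 0) →
    gsq u y0 ≤ CL l L * (AC l L * m ^ 2 / R ^ 2 + K * Mu * R ^ (2/3 : ℝ)) := by
  obtain ⟨K, hK, H⟩ := gap_est
  refine ⟨K, hK, ?_⟩
  intro u a hu ha y0 R m l L b ε Mu hR hR1 hl hl1 hL hm hb1 hε hεb hMu hal haL hpde hum hgu hF1 hF2
  have hCL := CL_pos hl (by linarith : 0 < L)
  have hYC : 0 < YC l L := by unfold YC; positivity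
  have hYC2 : 0 < 260 * L ^ 4 / l ^ 2 := by positivity
  have hmR : 0 < m ^ 2 / R ^ 2 := by positivity
  have hKM : 0 ≤ K * Mu * R ^ (2/3 : ℝ) := by positivity
  have eA : AC l L * m ^ 2 / R ^ 2 = 4 * YC l L * m ^ 2 / R ^ 2 + 260 * L ^ 4 / l ^ 2 * m ^ 2 / R ^ 2 := by
    unfold AC; ring
  have q1 : 0 ≤ 4 * YC l L * m ^ 2 / R ^ 2 := by positivity
  have q2 : 0 ≤ 260 * L ^ 4 / l ^ 2 * m ^ 2 / R ^ 2 := by positivity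
  have n1 : ∀ x : E2, ‖x‖ ^ 2 = x 0 ^ 2 + x 1 ^ 2 := norm_sq_E2
  have n2 : ∀ x : E2, dist x (vec 0 (-2 * b)) ^ 2 = x 0 ^ 2 + (x 1 + 2 * b) ^ 2 := by
    intro x; rw [dist_sq_E2, vec_zero, vec_one]; ring
  have n3 : ∀ x : E2, 2 * b ≤ ‖x‖ + dist x (vec 0 (-2 * b)) := by
    intro x
    have h1 := dist_triangle_left (0 : E2) (vec 0 (-2 * b)) x
    have h2 : dist (0 : E2) (vec 0 (-2 * b)) ^ 2 = (2 * b) ^ 2 := by rw [n2]; simp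
    have h3 : dist (0 : E2) (vec 0 (-2 * b)) = 2 * b := (pow_left_inj₀ dist_nonneg (by linarith) two_ne_zero).1 h2
    rw [h3, dist_zero_right] at h1; exact h1
  by_cases h1 : ∀ x ∈ Metric.closedBall y0 R, ε < |dist x (vec 0 (-2 * b)) - 1|
  · have := caseI hu ha 0 y0 hR hl hl1 hL hm hal haL hpde (fun x hx => by simpa using hF1 x hx (h1 x hx)) hum
    refine this.trans (mul_le_mul_of_nonneg_left ?_ hCL.le)
    rw [eA]; linarith
  by_cases h2 : ∀ x ∈ Metric.closedBall y0 R, ε < |‖x‖ - 1|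
  · have := caseI hu ha (vec 0 (-2 * b)) y0 hR hl hl1 hL hm hal haL hpde (fun x hx => by
      rw [vec_zero, vec_one]; linear_combination hF2 x hx (h2 x hx)) hum
    refine this.trans (mul_le_mul_of_nonneg_left ?_ hCL.le)
    rw [eA]; linarith
  push Not at h1 h2
  obtain ⟨p2, hp2, k2⟩ := h1
  obtain ⟨p1, hp1, k1⟩ := h2
  rw [abs_le] at k1 k2
  have hd : ∀ x ∈ Metric.closedBall y0 R, ∀ y ∈ Metric.closedBall y0 R, dist x y ≤ 2 * R := by
    intro x hx y hy
    have := dist_triangle_right x y y0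
    rw [Metric.mem_closedBall] at hx hy; linarith
  have N : ∀ x ∈ Metric.closedBall y0 R, ‖x‖ ≤ 1 + ε + 2 * R := by
    intro x hx
    have t := dist_triangle x p1 0
    rw [dist_zero_right, dist_zero_right] at t
    linarith [hd x hx p1 hp1]
  have D : ∀ x ∈ Metric.closedBall y0 R, dist x (vec 0 (-2 * b)) ≤ 1 + ε + 2 * R := by
    intro x hx
    have t := dist_triangle x p2 (vec 0 (-2 * b))
    linarith [hd x hx p2 hp2]
  have hbR : b - 1 < 2 * R := by linarith [n3 p2, N p2 hp2]
  have := H hu ha y0 hR hl hl1 hL hm hb1 (by linarith) hε hεb hMu hal haL hpde hum hgu ?_ hF1 hF2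
  · refine this.trans (mul_le_mul_of_nonneg_left ?_ hCL.le)
    rw [eA]; linarith
  · intro x hx
    have g1 : ‖x‖ ^ 2 ≤ (1 + 3 * R) ^ 2 := pow_le_pow_left₀ (norm_nonneg _) (by linarith [N x hx]) 2
    have g2 : dist x (vec 0 (-2 * b)) ^ 2 ≤ (1 + 3 * R) ^ 2 := pow_le_pow_left₀ dist_nonneg (by linarith [D x hx]) 2
    rw [n1] at g1; rw [n2] at g2
    nlinarith only [g1, g2, hb1, hR, hR1]

/-- Globalization of smooth functions near a closed ball. -/
lemma globalize {f : E2 → ℝ} {Ω : Set E2} (hΩ : IsOpen Ω) (hf : ContDiffOn ℝ (⊤ : ℕ∞) f Ω) {y0 : E2} {R : ℝ} (hR : 0 < R)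
    (hsub : Metric.closedBall y0 R ⊆ Ω) : ∃ g : E2 → ℝ, ContDiff ℝ (⊤ : ℕ∞) g ∧
      ∀ x ∈ Metric.closedBall y0 R, g =ᶠ[nhds x] f := by
  have hc : IsCompact (Metric.closedBall y0 R) := isCompact_closedBall y0 R
  obtain ⟨r, hr, hsub'⟩ := hc.exists_cthickening_subset_open hΩ hsub
  have hb : Metric.closedBall y0 (R + r) ⊆ Ω := by
    refine subset_trans ?_ hsub'
    rw [cthickening_closedBall hr.le hR.le, add_comm]
  let χ : ContDiffBump y0 := ⟨R + r / 3, R + 2 * r / 3, by linarith, by linarith⟩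
  refine ⟨fun x => χ x * f x, ?_, ?_⟩
  · rw [contDiff_iff_contDiffAt]
    intro x
    by_cases hx : x ∈ Metric.closedBall y0 (R + 2 * r / 3)
    · have hxΩ : x ∈ Ω := hb (Metric.closedBall_subset_closedBall (by linarith) hx)
      exact χ.contDiff.contDiffAt.mul (hf.contDiffAt (hΩ.mem_nhds hxΩ))
    · have : (fun x => χ x * f x) =ᶠ[nhds x] fun _ => 0 := by
        filter_upwards [Metric.isClosed_closedBall.isOpen_compl.mem_nhds hx] with y hy
        have : R + 2 * r / 3 < dist y y0 := by simpa using hy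
        rw [χ.zero_of_le_dist this.le, zero_mul]
      exact contDiffAt_const.congr_of_eventuallyEq this
  · intro x hx
    have : Metric.ball y0 (R + r / 3) ∈ nhds x := Metric.isOpen_ball.mem_nhds (by
      rw [Metric.mem_closedBall] at hx; rw [Metric.mem_ball]; linarith)
    filter_upwards [this] with y hy
    have h1 : χ y = 1 := χ.one_of_mem_closedBall (Metric.ball_subset_closedBall hy)
    rw [h1, one_mul]

lemma pd_congr {f g : E2 → ℝ} {x : E2} (h : f =ᶠ[nhds x] g) (i : Fin 2) : pd i f x = pd i g x := by
  unfold pd; rw [h.fderiv_eq]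

lemma pd_congr' {f g : E2 → ℝ} {x : E2} (h : f =ᶠ[nhds x] g) (i : Fin 2) : pd i f =ᶠ[nhds x] pd i g := by
  filter_upwards [h.eventuallyEq_nhds] with y hy
  exact pd_congr hy i

/-- local version of the unified estimate. -/
lemma unif_loc : ∃ K, 0 ≤ K ∧ ∀ {Ω : Set E2} {u a : E2 → ℝ}, IsOpen Ω → ContDiffOn ℝ (⊤ : ℕ∞) u Ω → ContDiffOn ℝ (⊤ : ℕ∞) a Ω →
    ∀ (y0 : E2) {R m l L b ε Mu : ℝ},
    0 < R → R ≤ 1 / 100 → 0 < l → l ≤ 1 → 1 ≤ L → 0 < m → 1 < b → 0 < ε → ε < (b - 1) / 2 → 0 ≤ Mu →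
    Metric.closedBall y0 R ⊆ Ω →
    (∀ x ∈ Ω, l ≤ a x) → (∀ x ∈ Ω, a x ≤ L) →
    (∀ x ∈ Ω, a x * (pd 0 (pd 0 u) x + pd 1 (pd 1 u) x)
          + (pd 0 a x * pd 0 u x + pd 1 a x * pd 1 u x) = 0) →
    (∀ x ∈ Ω, |u x| ≤ m) →
    (∀ x ∈ Metric.closedBall y0 R, gsq u x ≤ Mu) →
    (∀ x ∈ Ω, ε < |dist x (vec 0 (-2 * b)) - 1| → -x 1 * pd 0 a x + x 0 * pd 1 a x = 0) →
    (∀ x ∈ Ω, ε < |‖x‖ - 1| → -(x 1 + 2 * b) * pd 0 a x + x 0 * pd 1 a x = 0) →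
    gsq u y0 ≤ CL l L * (AC l L * m ^ 2 / R ^ 2 + K * Mu * R ^ (2/3 : ℝ)) := by
  obtain ⟨K, hK, H⟩ := unif_est
  refine ⟨K, hK, ?_⟩
  intro Ω u a hΩ hu ha y0 R m l L b ε Mu hR hR1 hl hl1 hL hm hb1 hε hεb hMu hsub hal haL hpde hum hgu hF1 hF2
  obtain ⟨U, hU, eU⟩ := globalize hΩ hu hR hsub
  obtain ⟨A, hA, eA⟩ := globalize hΩ ha hR hsub
  have g : ∀ x ∈ Metric.closedBall y0 R, gsq u x = gsq U x := by
    intro x hx; unfold gsq; rw [pd_congr (eU x hx), pd_congr (eU x hx)]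
  rw [g y0 (Metric.mem_closedBall_self hR.le)]
  refine H hU hA y0 hR hR1 hl hl1 hL hm hb1 hε hεb hMu ?_ ?_ ?_ ?_ ?_ ?_ ?_
  · intro x hx; rw [(eA x hx).eq_of_nhds]; exact hal x (hsub hx)
  · intro x hx; rw [(eA x hx).eq_of_nhds]; exact haL x (hsub hx)
  · intro x hx
    rw [(eA x hx).eq_of_nhds, pd_congr (eA x hx), pd_congr (eA x hx), pd_congr (eU x hx), pd_congr (eU x hx),
      pd_congr (pd_congr' (eU x hx) 0), pd_congr (pd_congr' (eU x hx) 1)]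
    exact hpde x (hsub hx)
  · intro x hx; rw [(eU x hx).eq_of_nhds]; exact hum x (hsub hx)
  · intro x hx; rw [← g x hx]; exact hgu x hx
  · intro x hx; rw [pd_congr (eA x hx), pd_congr (eA x hx)]; exact hF1 x (hsub hx)
  · intro x hx; rw [pd_congr (eA x hx), pd_congr (eA x hx)]; exact hF2 x (hsub hx)



lemma contOn_gsq {Ω : Set E2} {u : E2 → ℝ} (hΩ : IsOpen Ω) (hu : ContDiffOn ℝ (⊤ : ℕ∞) u Ω) : ContinuousOn (gsq u) Ω := by
  have h := hu.continuousOn_fderiv_of_isOpen hΩ (by simp)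
  unfold gsq pd
  exact ((h.clm_apply continuousOn_const).pow 2).add ((h.clm_apply continuousOn_const).pow 2)

lemma absorb {Ω : Set E2} {u : E2 → ℝ} (hΩ : IsOpen Ω) (hu : ContDiffOn ℝ (⊤ : ℕ∞) u Ω) {c1 c2 η s : ℝ} {x : E2}
    (hc1 : 0 ≤ c1) (hc2 : 0 ≤ c2) (hη : 0 < η) (hη1 : η ≤ 1 / 50) (hc : c2 * η ^ (2/3 : ℝ) ≤ 1 / 8)
    (hs : 0 < s) (hs1 : s ≤ 1 / 2) (hsub : Metric.closedBall x s ⊆ Ω)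
    (H : ∀ (y0 : E2) (R Mu : ℝ), 0 < R → R ≤ 1 / 100 → 0 ≤ Mu → Metric.closedBall y0 R ⊆ Ω →
      (∀ y ∈ Metric.closedBall y0 R, gsq u y ≤ Mu) → gsq u y0 ≤ c1 / R ^ 2 + c2 * Mu * R ^ (2/3 : ℝ)) :
    gsq u x ≤ 2 * c1 / (η ^ 2 * s ^ 2) := by
  have hxm : x ∈ Metric.closedBall x s := Metric.mem_closedBall_self hs.le
  have hcont : ContinuousOn (fun y => (s - dist y x) ^ 2 * gsq u y) (Metric.closedBall x s) := by
    apply ContinuousOn.mul (by fun_prop) ((contOn_gsq hΩ hu).mono hsub)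
  obtain ⟨y0, hy0, hmax⟩ := (isCompact_closedBall x s).exists_isMaxOn ⟨x, hxm⟩ hcont
  have hmax' : ∀ y ∈ Metric.closedBall x s, (s - dist y x) ^ 2 * gsq u y ≤ (s - dist y0 x) ^ 2 * gsq u y0 :=
    fun y hy => hmax hy
  set P := (s - dist y0 x) ^ 2 * gsq u y0 with hP
  set d := s - dist y0 x with hd
  have hd0 : 0 ≤ d := by rw [Metric.mem_closedBall] at hy0; linarith
  have hP0 : 0 ≤ P := mul_nonneg (sq_nonneg _) (gsq_nonneg _ _)
  have hx : s ^ 2 * gsq u x ≤ P := by have := hmax' x hxm; simpa using this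
  have key : P ≤ 2 * c1 / η ^ 2 := by
    rcases hd0.eq_or_lt with h0 | hdp
    · rw [hP, ← h0]; simp; positivity
    have hds : d ≤ s := by linarith [dist_nonneg (x := y0) (y := x)]
    have hR : 0 < η * d := by positivity
    have hRd : η * d ≤ d / 2 := by nlinarith
    have hRη : η * d ≤ η := by nlinarith
    have hRe : η * d ≤ 1 / 100 := by nlinarith
    have hb : ∀ y ∈ Metric.closedBall y0 (η * d), d / 2 ≤ s - dist y x := by
      intro y hy
      rw [Metric.mem_closedBall] at hy
      linarith [dist_triangle y y0 x]
    have hbs : Metric.closedBall y0 (η * d) ⊆ Metric.closedBall x s := by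
      intro y hy; rw [Metric.mem_closedBall]; linarith [hb y hy]
    have := H y0 (η * d) (4 * P / d ^ 2) hR hRe (by positivity) (hbs.trans hsub) (by
      intro y hy
      rw [le_div_iff₀ (by positivity)]
      have h1 := hmax' y (hbs hy)
      have h2 : (d / 2) ^ 2 ≤ (s - dist y x) ^ 2 := pow_le_pow_left₀ (by linarith) (hb y hy) 2
      have h3 := mul_le_mul_of_nonneg_right h2 (gsq_nonneg u y)
      nlinarith)
    have hpow : (η * d) ^ (2/3 : ℝ) ≤ η ^ (2/3 : ℝ) := Real.rpow_le_rpow hR.le hRη (by norm_num)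
    have h4 : d ^ 2 * gsq u y0 ≤ d ^ 2 * (c1 / (η * d) ^ 2 + c2 * (4 * P / d ^ 2) * (η * d) ^ (2/3 : ℝ)) :=
      mul_le_mul_of_nonneg_left this (by positivity)
    have e : d ^ 2 * (c1 / (η * d) ^ 2 + c2 * (4 * P / d ^ 2) * (η * d) ^ (2/3 : ℝ)) =
      c1 / η ^ 2 + 4 * P * (c2 * (η * d) ^ (2/3 : ℝ)) := by field_simp
    rw [e, ← hP] at h4
    have h5 : c2 * (η * d) ^ (2/3 : ℝ) ≤ 1 / 8 := (mul_le_mul_of_nonneg_left hpow hc2).trans hc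
    have h6 : 4 * P * (c2 * (η * d) ^ (2/3 : ℝ)) ≤ 4 * P * (1 / 8) := mul_le_mul_of_nonneg_left h5 (by positivity)
    have h7 : 2 * c1 / η ^ 2 = 2 * (c1 / η ^ 2) := by ring
    linarith
  rw [← div_div, le_div_iff₀ (by positivity)]
  linarith

lemma fderiv_nsq_gsq (u : E2 → ℝ) (x : E2) : ‖fderiv ℝ u x‖ ^ 2 ≤ gsq u x := by
  have : ‖fderiv ℝ u x‖ ≤ √(gsq u x) := by
    apply ContinuousLinearMap.opNorm_le_bound _ (Real.sqrt_nonneg _)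
    intro v
    rw [← vec_eta v, fderiv_vec, vec_eta, Real.norm_eq_abs]
    apply abs_le_of_sq_le_sq _ (by positivity)
    rw [mul_pow, Real.sq_sqrt (gsq_nonneg _ _), norm_sq_E2]
    unfold gsq
    nlinarith [sq_nonneg (v 0 * pd 1 u x - v 1 * pd 0 u x)]
  calc ‖fderiv ℝ u x‖ ^ 2 ≤ √(gsq u x) ^ 2 := pow_le_pow_left₀ (norm_nonneg _) this 2
    _ = _ := Real.sq_sqrt (gsq_nonneg _ _)

lemma ball_inner {Ω : Set E2} {μ : ℝ} {x : E2} (hμ : 0 < μ) (hx : x ∈ innerReg Ω μ) :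
    Metric.closedBall x (μ / 2) ⊆ Ω := by
  have hpre : IsPreconnected (Metric.closedBall x (μ / 2)) := (convex_closedBall x (μ / 2)).isPreconnected
  by_contra hcon
  obtain ⟨y, hy, hyn⟩ := not_subset.1 hcon
  have hnf : ∀ z ∈ Metric.closedBall x (μ / 2), z ∉ frontier Ω := by
    intro z hz hzf
    have h1 := Metric.infDist_le_dist_of_mem (x := x) hzf
    rw [Metric.mem_closedBall, dist_comm] at hz
    linarith [hx.2]
  have hcase : ∀ z ∈ Metric.closedBall x (μ / 2), z ∈ closure Ω → z ∈ interior Ω := by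
    intro z hz hzc
    by_contra hzi
    exact hnf z hz ⟨hzc, hzi⟩
  have hxm : x ∈ Metric.closedBall x (μ / 2) := Metric.mem_closedBall_self (by linarith)
  obtain ⟨z, _, hz1, hz2⟩ := hpre (interior Ω) (closure Ω)ᶜ isOpen_interior isClosed_closure.isOpen_compl
    (by
      intro z hz
      by_cases h : z ∈ closure Ω
      · exact Or.inl (hcase z hz h)
      · exact Or.inr h)
    ⟨x, hxm, hcase x hxm (subset_closure hx.1)⟩
    ⟨y, hy, fun h => hyn (interior_subset (hcase y hy h))⟩
  exact hz2 (subset_closure (interior_subset hz1))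

/-- differentiation along rotations. -/
lemma rot_zero {Ω : Set E2} {a : E2 → ℝ} (hΩ : IsOpen Ω) (ha : ContDiffOn ℝ (⊤ : ℕ∞) a Ω) (c x : E2) (hx : x ∈ Ω)
    (h : ∀ᶠ y in nhds x, dist y c = dist x c → a y = a x) :
    -(x 1 - c 1) * pd 0 a x + (x 0 - c 0) * pd 1 a x = 0 := by
  have hd : DifferentiableAt ℝ a x := (ha.contDiffAt (hΩ.mem_nhds hx)).differentiableAt (by simp)
  let p : ℝ → E2 := fun t => c + vec ((x 0 - c 0) * Real.cos t - (x 1 - c 1) * Real.sin t)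
    ((x 0 - c 0) * Real.sin t + (x 1 - c 1) * Real.cos t)
  have hp0 : p 0 = x := by
    simp only [p, Real.cos_zero, Real.sin_zero]
    rw [show (x 0 - c 0) * 1 - (x 1 - c 1) * 0 = (x - c) 0 by simp,
      show (x 0 - c 0) * 0 + (x 1 - c 1) * 1 = (x - c) 1 by simp, vec_eta]
    simp
  have hpd : HasDerivAt p (vec (-(x 1 - c 1)) (x 0 - c 0)) 0 := by
    have h1 : HasDerivAt (fun t => (x 0 - c 0) * Real.cos t - (x 1 - c 1) * Real.sin t) (-(x 1 - c 1)) 0 := by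
      have := ((Real.hasDerivAt_cos 0).const_mul (x 0 - c 0)).sub ((Real.hasDerivAt_sin 0).const_mul (x 1 - c 1))
      refine this.congr_deriv ?_; simp
    have h2 : HasDerivAt (fun t => (x 0 - c 0) * Real.sin t + (x 1 - c 1) * Real.cos t) (x 0 - c 0) 0 := by
      have := ((Real.hasDerivAt_sin 0).const_mul (x 0 - c 0)).add ((Real.hasDerivAt_cos 0).const_mul (x 1 - c 1))
      refine this.congr_deriv ?_; simp
    exact ((h1.smul_const _).add (h2.smul_const _)).const_add c
  have hcont : Filter.Tendsto p (nhds 0) (nhds x) := by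
    have := hpd.continuousAt.tendsto
    rwa [hp0] at this
  have hdist : ∀ t, dist (p t) c = dist x c := by
    intro t
    have : dist (p t) c ^ 2 = dist x c ^ 2 := by
      rw [dist_sq_E2, dist_sq_E2]
      simp only [p, PiLp.add_apply, vec_zero, vec_one]
      have := Real.sin_sq_add_cos_sq t
      linear_combination ((x 0 - c 0) ^ 2 + (x 1 - c 1) ^ 2) * this
    exact (pow_left_inj₀ dist_nonneg dist_nonneg two_ne_zero).1 this
  have he : (fun t => a (p t)) =ᶠ[nhds 0] fun _ => a x := by
    filter_upwards [hcont.eventually h] with t ht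
    exact ht (hdist t)
  have h1 : HasDerivAt (fun t => a (p t)) (fderiv ℝ a x (vec (-(x 1 - c 1)) (x 0 - c 0))) 0 := by
    have hd' : HasFDerivAt a (fderiv ℝ a x) (p 0) := by rw [hp0]; exact hd.hasFDerivAt
    exact hd'.comp_hasDerivAt 0 hpd
  have h2 : HasDerivAt (fun t => a (p t)) 0 0 := (hasDerivAt_const 0 (a x)).congr_of_eventuallyEq he
  have := h1.unique h2
  rwa [fderiv_vec] at this



lemma second_max {f : E2 → ℝ} (hf : ContDiff ℝ (⊤ : ℕ∞) f) {p : E2} (hp : IsLocalMax f p) (i : Fin 2) :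
    pd i f p = 0 ∧ pd i (pd i f) p ≤ 0 := by
  set e : E2 := EuclideanSpace.single i 1 with he
  have hl : ∀ t : ℝ, HasDerivAt (fun t : ℝ => p + t • e) e t := by
    intro t
    have := ((hasDerivAt_id t).smul_const e).const_add p
    simpa using this
  have hd : ∀ g : E2 → ℝ, Differentiable ℝ g → ∀ t : ℝ, HasDerivAt (fun t : ℝ => g (p + t • e)) (pd i g (p + t • e)) t := by
    intro g hg t
    exact (hg (p + t • e)).hasFDerivAt.comp_hasDerivAt t (hl t)
  have h1 : pd i f p = 0 := by unfold pd; rw [hp.fderiv_eq_zero]; simp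
  refine ⟨h1, ?_⟩
  by_contra hcon
  push Not at hcon
  set h : ℝ → ℝ := fun t => f (p + t • e) with hh
  have d1 : deriv h = fun t => pd i f (p + t • e) := funext fun t => (hd f (cd_diff hf) t).deriv
  have d2 : deriv (deriv h) 0 = pd i (pd i f) p := by
    rw [d1, (hd (pd i f) (cd_diff (contDiff_pd hf i)) 0).deriv]; simp
  have c0 : ContinuousAt h 0 := (hd f (cd_diff hf) 0).continuousAt
  have hmin : IsLocalMin h 0 := isLocalMin_of_deriv_deriv_pos (by rw [d2]; exact hcon) (by rw [d1]; simpa using h1) c0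
  have hmax : ∀ᶠ t in nhds (0:ℝ), h t ≤ h 0 := by
    have hc : Filter.Tendsto (fun t : ℝ => p + t • e) (nhds 0) (nhds p) := by
      have := (hl 0).continuousAt.tendsto
      simpa using this
    have := hc.eventually hp
    simpa [hh] using this
  have hconst : h =ᶠ[nhds 0] fun _ => h 0 := by
    filter_upwards [hmin, hmax] with t ht1 ht2
    exact le_antisymm ht2 ht1
  have : deriv (deriv h) 0 = 0 := by
    have h3 := hconst.deriv
    rw [h3.deriv_eq]; simp
  rw [d2] at this; linarith

lemma max_princ {Ω : Set E2} {u a : E2 → ℝ} (hΩ : IsOpen Ω) (hΩb : Bornology.IsBounded Ω)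
    (hu : ContDiffOn ℝ (⊤ : ℕ∞) u Ω) (huc : ContinuousOn u (closure Ω)) (ha : ContDiffOn ℝ (⊤ : ℕ∞) a Ω) {l m : ℝ} (hl : 0 < l)
    (hal : ∀ x ∈ Ω, l ≤ a x)
    (hpde : ∀ x ∈ Ω, a x * (pd 0 (pd 0 u) x + pd 1 (pd 1 u) x)
          + (pd 0 a x * pd 0 u x + pd 1 a x * pd 1 u x) = 0)
    (hbd : ∀ x ∈ frontier Ω, u x ≤ m) : ∀ x ∈ Ω, u x ≤ m := by
  intro x1 hx1
  by_contra hcon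
  push Not at hcon
  set t := (m + u x1) / 2 with ht
  have hcl : IsCompact (closure Ω) := hΩb.isCompact_closure
  set K := closure Ω ∩ u ⁻¹' Ici t with hK
  have hKc : IsCompact K := hcl.of_isClosed_subset (huc.preimage_isClosed_of_isClosed isClosed_closure isClosed_Ici) inter_subset_left
  have hKΩ : K ⊆ Ω := by
    rintro x ⟨hx, hxt⟩
    by_contra hxn
    have : x ∈ frontier Ω := by rw [hΩ.frontier_eq]; exact ⟨hx, hxn⟩
    have h1 := hbd x this
    have h2 : t ≤ u x := hxt
    linarith
  have hpa : ContinuousOn (pd 0 a) Ω := by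
    unfold pd
    exact (ha.continuousOn_fderiv_of_isOpen hΩ (by simp)).clm_apply continuousOn_const
  obtain ⟨B, hB⟩ := hKc.exists_bound_of_continuousOn (hpa.mono hKΩ)
  set γ := |B| / l + 1 with hγ
  have hγ0 : 0 < γ := by positivity
  have hγl : |B| < γ * l := by rw [hγ, add_mul, div_mul_cancel₀ _ hl.ne']; linarith
  set e0 : E2 → ℝ := fun x => Real.exp (γ * x 0) with he0
  have ce0 : ContDiff ℝ (⊤ : ℕ∞) e0 := Real.contDiff_exp.comp (contDiff_const.mul (contDiff_coord 0))
  obtain ⟨E, hE⟩ := hcl.exists_bound_of_continuousOn ce0.continuous.continuousOn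
  have hE' : ∀ x ∈ closure Ω, e0 x ≤ E := fun x hx => (le_abs_self _).trans (hE x hx)
  have hEp : 0 < E := lt_of_lt_of_le (Real.exp_pos _) (hE' x1 (subset_closure hx1))
  set s := (u x1 - t) / (2 * E) with hs
  have hut : 0 < u x1 - t := by rw [ht]; linarith
  have hs0 : 0 < s := by positivity
  have hsE : s * E = (u x1 - t) / 2 := by rw [hs]; field_simp
  obtain ⟨p, hp, hpm⟩ := hcl.exists_isMaxOn ⟨x1, subset_closure hx1⟩
    (huc.add ((continuous_const.mul ce0.continuous).continuousOn (s := closure Ω)) : ContinuousOn (fun x => u x + s * e0 x) (closure Ω))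
  have hpm1 : u x1 + s * e0 x1 ≤ u p + s * e0 p := hpm (subset_closure hx1)
  have e0pos : ∀ x, 0 < e0 x := fun x => Real.exp_pos _
  have hpK : p ∈ K := by
    refine ⟨hp, ?_⟩
    show t ≤ u p
    have h1 : s * e0 p ≤ s * E := mul_le_mul_of_nonneg_left (hE' p hp) hs0.le
    have h2 : 0 < s * e0 x1 := mul_pos hs0 (e0pos _)
    linarith
  have hpΩ := hKΩ hpK
  obtain ⟨r, hr, hrsub⟩ := Metric.nhds_basis_closedBall.mem_iff.1 (hΩ.mem_nhds hpΩ)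
  obtain ⟨U, hU, eU⟩ := globalize hΩ hu hr hrsub
  have eU := eU p (Metric.mem_closedBall_self hr.le)
  set e : E2 → ℝ := fun x => s * e0 x with he
  have ce : ContDiff ℝ (⊤ : ℕ∞) e := contDiff_const.mul ce0
  have hloc : IsLocalMax (fun x => U x + e x) p := by
    filter_upwards [eU, hΩ.mem_nhds hpΩ] with y hy hyΩ
    rw [hy, eU.eq_of_nhds]
    exact hpm (subset_closure hyΩ)
  have pe : ∀ i, pd i e = fun x => (if i = 0 then γ else 0) * e x := by
    intro i; funext x
    rw [he, pd_mul (differentiableAt_const s) (cd_diff ce0 x), pd_const, he0,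
      pd_comp (g := Real.exp) Real.differentiableAt_exp (cd_diff (contDiff_const.mul (contDiff_coord 0)) x),
      pd_mul (differentiableAt_const γ) (cd_diff (contDiff_coord 0) x), pd_const, pd_coord, Real.deriv_exp]
    fin_cases i <;> simp; ring
  have pw : ∀ i, pd i (fun x => U x + e x) = fun x => pd i U x + (if i = 0 then γ else 0) * e x := by
    intro i; funext x
    rw [pd_add (cd_diff hU x) (cd_diff ce x), pe]
  have pw2 : ∀ i x, pd i (pd i (fun x => U x + e x)) x = pd i (pd i U) x + (if i = 0 then γ ^ 2 else 0) * e x := by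
    intro i x
    rw [pw i, pd_add (cd_diff (contDiff_pd hU i) x) (cd_diff (contDiff_const.mul ce) x), pd_mul (differentiableAt_const _) (cd_diff ce x), pd_const, pe]
    fin_cases i <;> simp; ring
  have m0 := second_max (hU.add ce) hloc 0
  have m1 := second_max (hU.add ce) hloc 1
  rw [pw2, pw] at m0 m1
  simp only [if_true, one_ne_zero, if_false, zero_mul, add_zero, Fin.isValue] at m0 m1
  have hpd := hpde p hpΩ
  rw [pd_congr eU.symm, pd_congr eU.symm, pd_congr (pd_congr' eU.symm 0), pd_congr (pd_congr' eU.symm 1)] at hpd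
  have hep : 0 < e p := mul_pos hs0 (e0pos p)
  have hap := hal p hpΩ
  have hBp : -|B| ≤ pd 0 a p := by
    have := hB p hpK
    rw [Real.norm_eq_abs] at this
    linarith [neg_abs_le (pd 0 a p), le_abs_self B]
  rw [m1.1] at hpd
  have q0 : pd 0 U p = -(γ * e p) := by linarith [m0.1]
  rw [q0] at hpd
  have q1 : pd 0 (pd 0 U) p + pd 1 (pd 1 U) p ≤ -(γ ^ 2 * e p) := by linarith [m0.2, m1.2]
  have q2 : a p * (pd 0 (pd 0 U) p + pd 1 (pd 1 U) p) ≤ a p * (-(γ ^ 2 * e p)) := mul_le_mul_of_nonneg_left q1 (by linarith)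
  have q3 : 0 < γ * e p * (a p * γ + pd 0 a p) := by
    apply mul_pos (by positivity)
    have : γ * l ≤ γ * a p := mul_le_mul_of_nonneg_left hap hγ0.le
    linarith
  linarith

lemma aFun_congr {δ κp κm : ℝ} {x y : E2} (h1 : ‖y‖ < 1 ↔ ‖x‖ < 1) (h2 : dist y (ctr δ) < 1 ↔ dist x (ctr δ) < 1) :
    aFun δ κp κm y = aFun δ κp κm x := by
  have e1 : (y ∈ Bp) ↔ (x ∈ Bp) := by simp [Bp, h1]
  have e2 : (y ∈ Bm δ) ↔ (x ∈ Bm δ) := by simp [Bm, h2]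
  unfold aFun
  by_cases k1 : x ∈ Bp
  · rw [if_pos k1, if_pos (e1.2 k1)]
  · rw [if_neg k1, if_neg (fun h => k1 (e1.1 h))]
    by_cases k2 : x ∈ Bm δ
    · rw [if_pos k2, if_pos (e2.2 k2)]
    · rw [if_neg k2, if_neg (fun h => k2 (e2.1 h))]

lemma ev_lt {f : E2 → ℝ} (hf : Continuous f) {ε : ℝ} (hε : 0 < ε) {x : E2} (h : ε < |f x - 1|) :
    ∀ᶠ y in nhds x, ε < |f y - 1| ∧ (f y < 1 ↔ f x < 1) := by
  have h1 : ∀ᶠ y in nhds x, ε < |f y - 1| :=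
    (by fun_prop : Continuous fun y => |f y - 1|).continuousAt.eventually (lt_mem_nhds h)
  have h2 : ∀ᶠ y in nhds x, (f y < 1 ↔ f x < 1) := by
    rcases lt_trichotomy (f x) 1 with h3 | h3 | h3
    · filter_upwards [hf.continuousAt.eventually (gt_mem_nhds h3)] with y hy
      simp [hy, h3]
    · rw [h3] at h; simp at h; linarith
    · filter_upwards [hf.continuousAt.eventually (lt_mem_nhds h3)] with y hy
      have hy' : 1 < f y := hy
      constructor <;> intro h <;> linarith
  exact h1.and h2

lemma F1 {Ω : Set E2} {a : E2 → ℝ} {δ ε κp κm : ℝ} (hΩ : IsOpen Ω) (ha : ContDiffOn ℝ (⊤ : ℕ∞) a Ω) (hε : 0 < ε)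
    (h0 : ∀ x ∈ Ω, ε ≤ |‖x‖ - 1| → ε ≤ |dist x (ctr δ) - 1| → a x = aFun δ κp κm x) (g : ℝ → ℝ)
    (hg : ∀ x ∈ Ω, |‖x‖ - 1| < ε → a x = g ‖x‖) {x : E2} (hx : x ∈ Ω) (h : ε < |dist x (ctr δ) - 1|) :
    -x 1 * pd 0 a x + x 0 * pd 1 a x = 0 := by
  have := rot_zero hΩ ha 0 x hx ?_
  · simpa using this
  · filter_upwards [hΩ.mem_nhds hx, ev_lt (f := fun y => dist y (ctr δ)) (by fun_prop) hε h] with y hy ⟨hy1, hy2⟩ hn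
    rw [dist_zero_right, dist_zero_right] at hn
    by_cases hc : |‖x‖ - 1| < ε
    · rw [hg x hx hc, hg y hy (by rw [hn]; exact hc), hn]
    · rw [not_lt] at hc
      rw [h0 x hx hc h.le, h0 y hy (by rw [hn]; exact hc) hy1.le]
      exact aFun_congr (by rw [hn]) hy2

lemma F2 {Ω : Set E2} {a : E2 → ℝ} {δ ε κp κm : ℝ} (hΩ : IsOpen Ω) (ha : ContDiffOn ℝ (⊤ : ℕ∞) a Ω) (hε : 0 < ε)
    (h0 : ∀ x ∈ Ω, ε ≤ |‖x‖ - 1| → ε ≤ |dist x (ctr δ) - 1| → a x = aFun δ κp κm x) (g : ℝ → ℝ)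
    (hg : ∀ x ∈ Ω, |dist x (ctr δ) - 1| < ε → a x = g (dist x (ctr δ))) {x : E2} (hx : x ∈ Ω) (h : ε < |‖x‖ - 1|) :
    -(x 1 - ctr δ 1) * pd 0 a x + (x 0 - ctr δ 0) * pd 1 a x = 0 := by
  refine rot_zero hΩ ha (ctr δ) x hx ?_
  filter_upwards [hΩ.mem_nhds hx, ev_lt (f := fun y => ‖y‖) (by fun_prop) hε h] with y hy ⟨hy1, hy2⟩ hn
  by_cases hc : |dist x (ctr δ) - 1| < ε
  · rw [hg x hx hc, hg y hy (by rw [hn]; exact hc), hn]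
  · rw [not_lt] at hc
    rw [h0 x hx h.le hc, h0 y hy hy1.le (by rw [hn]; exact hc)]
    exact aFun_congr hy2 (by rw [hn])

lemma ctr_vec (δ : ℝ) : ctr δ = vec 0 (-2 * (1 + δ)) := by
  ext i; fin_cases i
  · simp [ctr, vec]
  · simp [ctr, vec]; ring

lemma pd_neg (u : E2 → ℝ) (i : Fin 2) : pd i (fun x => -u x) = fun x => -pd i u x := by
  funext x; unfold pd
  rw [fderiv_fun_neg]; simp


/-- Gradient bound for the smooth approximation: there is a constant `C` depending only
on `Ω, μ, δ₀, κ⁺, κ⁻` (independent of `δ ∈ (0,δ₀)` and `ε ∈ (0,δ/2)`) such that the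
smooth solution `u_ε` of `div(a_ε ∇u_ε)=0` with boundary value `φ` satisfies
`sup_{Ω^μ} |∇u_ε| ≤ C ‖φ‖_{L^∞(∂Ω)}`. -/
theorem stmt1 (Ω : Set (EuclideanSpace ℝ (Fin 2)))
    (hΩo : IsOpen Ω) (hΩb : Bornology.IsBounded Ω) (hΩs : SmoothBoundary Ω)
    (μ δ₀ κp κm : ℝ) (hμ : μ ∈ Ioo (0:ℝ) 1) (hδ₀ : 0 < δ₀)
    (hκp : 0 < κp) (hκm : 0 < κm) :
    ∃ C > 0, ∀ δ ∈ Ioo 0 δ₀, ∀ ε ∈ Ioo 0 (δ / 2),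
      closure Bp ∪ closure (Bm δ) ⊆ innerReg Ω (2 * μ) →
      ∀ φ : EuclideanSpace ℝ (Fin 2) → ℝ, ContDiff ℝ (⊤ : ℕ∞) φ →
      ∀ aε : EuclideanSpace ℝ (Fin 2) → ℝ,
        ContDiffOn ℝ (⊤ : ℕ∞) aε Ω →
        (∀ x ∈ Ω, min 1 (min κp κm) ≤ aε x ∧ aε x ≤ max 1 (max κp κm)) →
        -- `aε = a` outside the `ε`-neighborhoods of `∂B⁺` and `∂B⁻`
        (∀ x ∈ Ω, ε ≤ |‖x‖ - 1| → ε ≤ |dist x (ctr δ) - 1| → aε x = aFun δ κp κm x) →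
        -- near `∂B⁺`, `aε` is radial, nonincreasing if `κ⁺ > 1`, nondecreasing if `κ⁺ < 1`
        (∃ g : ℝ → ℝ, (1 < κp → Antitone g) ∧ (κp < 1 → Monotone g) ∧
          ∀ x ∈ Ω, |‖x‖ - 1| < ε → aε x = g ‖x‖) →
        -- similarly near `∂B⁻`
        (∃ g : ℝ → ℝ, (1 < κm → Antitone g) ∧ (κm < 1 → Monotone g) ∧
          ∀ x ∈ Ω, |dist x (ctr δ) - 1| < ε → aε x = g (dist x (ctr δ))) →
      ∀ uε : EuclideanSpace ℝ (Fin 2) → ℝ,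
        ContDiffOn ℝ (⊤ : ℕ∞) uε Ω →
        ContinuousOn uε (closure Ω) →
        EqOn uε φ (frontier Ω) →
        (∀ x ∈ Ω, aε x * (pd 0 (pd 0 uε) x + pd 1 (pd 1 uε) x)
          + (pd 0 aε x * pd 0 uε x + pd 1 aε x * pd 1 uε x) = 0) →
        ∀ x ∈ innerReg Ω μ, ‖fderiv ℝ uε x‖ ≤ C * bdryNorm Ω φ := by
  obtain ⟨K, hK, H⟩ := unif_loc
  set l := min 1 (min κp κm) with hl
  set L := max 1 (max κp κm) with hL
  have hl0 : 0 < l := lt_min one_pos (lt_min hκp hκm)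
  have hl1 : l ≤ 1 := min_le_left _ _
  have hL1 : 1 ≤ L := le_max_left _ _
  have hCL := CL_pos hl0 (by linarith : 0 < L)
  have hAC : 0 < AC l L := by unfold AC YC; positivity
  have hμ0 := hμ.1
  set c2 := CL l L * K with hc2
  have hc20 : 0 ≤ c2 := by positivity
  set q := 1 / (8 * (c2 + 1)) with hq
  have hq0 : 0 < q := by positivity
  set η := min (1 / 50) (q ^ (3/2 : ℝ)) with hη
  have hη0 : 0 < η := lt_min (by norm_num) (by positivity)
  have hηq : η ^ (2/3 : ℝ) ≤ q := by
    have h1 : η ^ (2/3 : ℝ) ≤ (q ^ (3/2 : ℝ)) ^ (2/3 : ℝ) := Real.rpow_le_rpow hη0.le (min_le_right _ _) (by norm_num)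
    rw [← Real.rpow_mul hq0.le] at h1
    norm_num at h1
    exact h1
  have hcη : c2 * η ^ (2/3 : ℝ) ≤ 1 / 8 := by
    have h1 : c2 * η ^ (2/3 : ℝ) ≤ c2 * q := mul_le_mul_of_nonneg_left hηq hc20
    have h2 : c2 * q ≤ 1 / 8 := by
      rw [hq, mul_one_div, div_le_iff₀ (by positivity)]; linarith
    linarith
  set D := 2 * (CL l L * AC l L) / (η ^ 2 * (μ / 2) ^ 2) with hD
  have hD0 : 0 < D := by positivity
  refine ⟨√D, Real.sqrt_pos.2 hD0, ?_⟩
  intro δ hδ ε hε hin φ hφ aε ha haB h0 hg1 hg2 uε hu huc hub hpde x hx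
  obtain ⟨g1, -, -, hg1⟩ := hg1
  obtain ⟨g2, -, -, hg2⟩ := hg2
  have hF1 : ∀ x ∈ Ω, ε < |dist x (vec 0 (-2 * (1 + δ))) - 1| → -x 1 * pd 0 aε x + x 0 * pd 1 aε x = 0 := by
    intro x hx h
    rw [← ctr_vec] at h
    exact F1 hΩo ha hε.1 h0 g1 hg1 hx h
  have hF2 : ∀ x ∈ Ω, ε < |‖x‖ - 1| → -(x 1 + 2 * (1 + δ)) * pd 0 aε x + x 0 * pd 1 aε x = 0 := by
    intro x hx h
    have := F2 hΩo ha hε.1 h0 g2 hg2 hx h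
    rw [ctr_vec, vec_zero, vec_one] at this
    linear_combination this
  have hal : ∀ x ∈ Ω, l ≤ aε x := fun x hx => (haB x hx).1
  have haL : ∀ x ∈ Ω, aε x ≤ L := fun x hx => (haB x hx).2
  set N := bdryNorm Ω φ with hN
  have hfc : IsCompact (frontier Ω) := hΩb.isCompact_closure.of_isClosed_subset isClosed_frontier frontier_subset_closure
  have hbdd : BddAbove ((fun y => |φ y|) '' frontier Ω) := hfc.bddAbove_image (hφ.continuous.abs.continuousOn)
  have hφN : ∀ y ∈ frontier Ω, |φ y| ≤ N := fun y hy => le_csSup hbdd ⟨y, hy, rfl⟩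
  have hN0 : 0 ≤ N := by
    apply Real.sSup_nonneg
    rintro _ ⟨y, -, rfl⟩
    exact abs_nonneg _
  have hmax1 := max_princ (m := N) hΩo hΩb hu huc ha hl0 hal hpde (by
    intro y hy; rw [hub hy]; exact (le_abs_self _).trans (hφN y hy))
  have hmax2 := max_princ (u := fun x => -uε x) (m := N) hΩo hΩb hu.neg huc.neg ha hl0 hal (by
    intro y hy
    simp only [pd_neg]
    linear_combination -hpde y hy) (by
    intro y hy; rw [hub hy]; exact (neg_le_abs _).trans (hφN y hy))
  have hsub := ball_inner hμ0 hx
  have key : ∀ t > 0, ‖fderiv ℝ uε x‖ ≤ √D * (N + t) := by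
    intro t ht
    have hm : 0 < N + t := by linarith
    have := absorb hΩo hu (c1 := CL l L * AC l L * (N + t) ^ 2) (c2 := c2) (η := η) (s := μ / 2) (x := x) (by positivity) hc20 hη0
      (min_le_left _ _) hcη (by linarith) (by linarith [hμ.2]) hsub (by
        intro y0 R Mu hR hR1 hMu hbs hgu
        have := H hΩo hu ha y0 (b := 1 + δ) hR hR1 hl0 hl1 hL1 hm (by linarith [hδ.1]) hε.1 (by linarith [hε.2]) hMu hbs hal haL hpde
          (by
            intro y hy
            rw [abs_le]
            constructor <;> linarith [hmax1 y hy, hmax2 y hy]) hgu hF1 hF2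
        refine this.trans (le_of_eq ?_)
        rw [hc2]; ring)
    have h2 : ‖fderiv ℝ uε x‖ ^ 2 ≤ (√D * (N + t)) ^ 2 := by
      refine (fderiv_nsq_gsq uε x).trans (this.trans (le_of_eq ?_))
      rw [mul_pow, Real.sq_sqrt hD0.le, hD]; ring
    exact (pow_le_pow_iff_left₀ (norm_nonneg _) (by positivity) two_ne_zero).1 h2
  apply le_of_forall_pos_le_add
  intro e he
  have hsD : 0 < √D := Real.sqrt_pos.2 hD0
  have := key (e / √D) (by positivity)
  rw [mul_add, mul_div_cancel₀ _ hsD.ne'] at this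
  exact this
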